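/- arXiv:math/9903189 — 7 statements merged into one kernel-verified Lean document; each statement's English description precedes it below -/
import Mathlib

section
/- Let V be a real Banach space, D and E two closed subsets of V, c ∈ ℝ, and f : V → ℝ a C¹ functional satisfying the local Palais–Smale condition (P.S.)_c. Assume D ∩ E = ∅, E ∩ K_c = ∅ (where K_c = {v ∈ V : f'(v) = 0 and f(v) = c}), f(x) ≤ c for all x ∈ E, and f(x) ≥ c for all x ∈ D. Then there exist ε > 0 and a continuous map η : ℝ × V → V such that: (i) for every t ∈ ℝ, η_t = η(t,·) : V → V is a homeomorphism and η_t⁻¹ = η_{−t}; (ii) f(η(t,x)) ≤ f(x) for all t ≥ 0 and all x ∈ V; (iii) η(t,x) = x for all t ∈ ℝ and all x ∈ D; (iv) f(η(1,x)) ≤ c − ε for all x ∈ E. -/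
open Set Filter

section ODEflow
open Metric Topology NNReal

variable {V : Type*} [NormedAddCommGroup V] [NormedSpace ℝ V]

def SolOn (W : V → V) (γ : ℝ → V) (a b : ℝ) : Prop :=
  ∀ t ∈ Ioo a b, HasDerivAt γ (W (γ t)) t

theorem local_flow [CompleteSpace V] {W : V → V} (hW : LocallyLipschitz W) {M : ℝ≥0} (hM : ∀ x, ‖W x‖ ≤ M)
    (x0 : V) : ∃ r > 0, ∃ ε > 0, ∃ α : V → ℝ → V,
      (∀ x ∈ closedBall x0 r, α x 0 = x ∧ SolOn W (α x) (-ε) ε) ∧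
      ∀ t ∈ Ioo (-ε) ε, ContinuousOn (fun x => α x t) (closedBall x0 r) := by
  obtain ⟨K, s, hs, hK⟩ := hW x0
  obtain ⟨a, ha, has⟩ := Metric.nhds_basis_closedBall.mem_iff.1 hs
  lift a to ℝ≥0 using ha.le
  have hε : 0 < (a : ℝ) / (2 * (M + 1)) := by positivity
  set ε : ℝ := (a : ℝ) / (2 * (M + 1)) with hεd
  let t0 : Icc (-ε) ε := ⟨0, by constructor <;> linarith⟩
  have hP : IsPicardLindelof (fun _ ↦ W) t0 x0 a (a / 2) M K := by
    apply IsPicardLindelof.of_time_independent (fun x _ => hM x) (hK.mono has)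
    simp only [t0, sub_zero, zero_sub, neg_neg, max_self]
    have : (M : ℝ) * ε ≤ a / 2 := by
      rw [hεd, mul_div_assoc', div_le_div_iff₀ (by positivity) (by positivity)]
      have : (0:ℝ) ≤ M := M.2
      nlinarith
    push_cast
    linarith
  obtain ⟨α, h1, L, h2⟩ := hP.exists_forall_mem_closedBall_eq_hasDerivWithinAt_lipschitzOnWith
  refine ⟨(a / 2 : ℝ≥0), by simpa using ha, ε, hε, α, fun x hx => ⟨(h1 x hx).1, fun t ht => ?_⟩, fun t ht => ?_⟩
  · exact ((h1 x hx).2 t (Ioo_subset_Icc_self ht)).hasDerivAt (Icc_mem_nhds ht.1 ht.2)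
  · exact (h2 t (Ioo_subset_Icc_self ht)).continuousOn

theorem sol_unique {W : V → V} (hW : LocallyLipschitz W) {γ δ : ℝ → V} {a b t0 : ℝ}
    (hγ : SolOn W γ a b) (hδ : SolOn W δ a b) (ht0 : t0 ∈ Ioo a b) (h : γ t0 = δ t0) :
    EqOn γ δ (Ioo a b) := by
  have key : ∀ t ∈ Ioo a b, γ t = δ t → γ =ᶠ[𝓝 t] δ := by
    intro t ht he
    obtain ⟨K, s, hs, hK⟩ := hW (γ t)
    have hn := Ioo_mem_nhds ht.1 ht.2
    refine ODE_solution_unique_of_eventually (v := fun _ => W) (s := fun _ => s) (K := K)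
      (Eventually.of_forall fun _ => hK) ?_ ?_ he
    · filter_upwards [hn, (hγ t ht).continuousAt hs] with u hu hu2 using ⟨hγ u hu, hu2⟩
    · filter_upwards [hn, (hδ t ht).continuousAt (he ▸ hs)] with u hu hu2 using ⟨hδ u hu, hu2⟩
  have : PreconnectedSpace (Ioo a b) := Subtype.preconnectedSpace isPreconnected_Ioo
  have hc : IsClopen {t : Ioo a b | γ t = δ t} := by
    constructor
    · apply isClosed_eq
      · exact continuousOn_iff_continuous_domRestrict.1 fun t ht => (hγ t ht).continuousAt.continuousWithinAt
      · exact continuousOn_iff_continuous_domRestrict.1 fun t ht => (hδ t ht).continuousAt.continuousWithinAt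
    · rw [isOpen_iff_mem_nhds]
      intro t ht
      exact continuous_subtype_val.continuousAt (key t t.2 ht)
  have hu := hc.eq_univ ⟨⟨t0, ht0⟩, h⟩
  intro t ht
  have : (⟨t, ht⟩ : Ioo a b) ∈ {t : Ioo a b | γ t = δ t} := hu ▸ mem_univ _
  exact this

theorem sol_glue {W : V → V} {γ δ : ℝ → V} {a b a' b' t1 : ℝ}
    (hγ : SolOn W γ a b) (hδ : SolOn W δ a' b') (h1 : t1 ∈ Ioo a b) (h2 : t1 ∈ Ioo a' b')
    (h : γ t1 = δ t1) : SolOn W (fun t => if t ≤ t1 then γ t else δ t) a b' := by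
  intro t ht
  rcases lt_trichotomy t t1 with hl | rfl | hl
  · have := hγ t ⟨ht.1, hl.trans h1.2⟩
    simp only [hl.le, if_true]
    apply this.congr_of_eventuallyEq
    filter_upwards [Iio_mem_nhds hl] with u hu
    simp [le_of_lt (mem_Iio.1 hu)]
  · simp only [le_refl, if_true]
    have A := (hγ t h1).hasDerivWithinAt (s := Iic t)
    have B := (hδ t h2).hasDerivWithinAt (s := Ici t)
    rw [← h] at B
    have A' : HasDerivWithinAt (fun u => if u ≤ t then γ u else δ u) (W (γ t)) (Iic t) t := by
      refine A.congr (fun u hu => ?_) ?_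
      · simp [mem_Iic.1 hu]
      · simp
    have B' : HasDerivWithinAt (fun u => if u ≤ t then γ u else δ u) (W (γ t)) (Ici t) t := by
      refine B.congr (fun u hu => ?_) ?_
      · rcases eq_or_lt_of_le (mem_Ici.1 hu) with rfl | hlt
        · simp [h]
        · simp [hlt]
      · simp [h]
    have := A'.union B'
    rwa [Iic_union_Ici, hasDerivWithinAt_univ] at this
  · have := hδ t ⟨h2.1.trans hl, ht.2⟩
    simp only [not_le.2 hl, if_false]
    apply this.congr_of_eventuallyEq
    filter_upwards [Ioi_mem_nhds hl] with u hu
    simp [mem_Ioi.1 hu]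

theorem sol_lip {W : V → V} {M : ℝ≥0} (hM : ∀ x, ‖W x‖ ≤ M) {γ : ℝ → V} {a b : ℝ}
    (hγ : SolOn W γ a b) : LipschitzOnWith M γ (Ioo a b) :=
  (convex_Ioo a b).lipschitzOnWith_of_nnnorm_hasDerivWithin_le
    (fun t ht => (hγ t ht).hasDerivWithinAt) (fun t _ => hM _)

theorem sol_extend [CompleteSpace V] {W : V → V} (hW : LocallyLipschitz W) {M : ℝ≥0}
    (hM : ∀ x, ‖W x‖ ≤ M) {γ : ℝ → V} {a b : ℝ} (hγ : SolOn W γ a b) (h0 : (0:ℝ) ∈ Ioo a b) :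
    ∃ b' > b, ∃ δ : ℝ → V, δ 0 = γ 0 ∧ SolOn W δ a b' := by
  have hab : a < b := h0.1.trans h0.2
  have hc : Cauchy (map γ (𝓝[Ioo a b] b)) := by
    have : Cauchy (𝓝[Ioo a b] b) := by
      have : (𝓝[Ioo a b] b).NeBot := by
        rw [nhdsWithin_Ioo_eq_nhdsLT hab]; infer_instance
      exact cauchy_nhds.mono nhdsWithin_le_nhds
    refine ⟨this.1.map _, ?_⟩
    have hu := (sol_lip hM hγ).uniformContinuousOn
    rw [UniformContinuousOn] at hu
    rw [prod_map_map_eq]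
    refine hu.mono_left (le_inf this.2 ?_)
    rw [le_principal_iff]
    exact prod_mem_prod self_mem_nhdsWithin self_mem_nhdsWithin
  obtain ⟨y, hy⟩ := CompleteSpace.complete hc
  obtain ⟨r, hr, ε, hε, α, hα, -⟩ := local_flow hW hM y
  have e1 : ∀ᶠ t in 𝓝[<] b, γ t ∈ closedBall y r := by
    rw [← nhdsWithin_Ioo_eq_nhdsLT hab]
    exact hy (closedBall_mem_nhds y hr)
  have e2 : ∀ᶠ t in 𝓝[<] b, t ∈ Ioo (max 0 (b - ε)) b :=
    Ioo_mem_nhdsLT (max_lt h0.2 (by linarith))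
  obtain ⟨t1, ht1, ht2⟩ := (e1.and e2).exists
  have hm1 := (le_max_left 0 (b - ε)).trans_lt ht2.1
  have hm2 := (le_max_right 0 (b - ε)).trans_lt ht2.1
  obtain ⟨i1, i2⟩ := hα _ ht1
  have hs : SolOn W (fun t => α (γ t1) (t - t1)) (t1 - ε) (t1 + ε) := by
    intro t ht
    have := i2 (t - t1) ⟨by linarith [ht.1], by linarith [ht.2]⟩
    exact HasDerivAt.comp_sub_const t t1 this
  refine ⟨t1 + ε, by linarith, _, ?_, sol_glue (t1 := t1) hγ hs ⟨h0.1.trans hm1, ht2.2⟩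
    ⟨by linarith, by linarith⟩ (by simp [i1])⟩
  simp [hm1.le]

theorem sol_reverse {W : V → V} {γ : ℝ → V} {a b : ℝ} (hγ : SolOn W γ a b) :
    SolOn (fun x => - W x) (fun t => γ (-t)) (-b) (-a) := by
  intro t ht
  have := hγ (-t) ⟨by linarith [ht.2], by linarith [ht.1]⟩
  have h2 := HasDerivAt.scomp t this (hasDerivAt_neg t)
  rw [neg_one_smul] at h2
  exact h2

theorem sol_paste {W : V → V} (hW : LocallyLipschitz W) (x : V) (S : Set ℝ)
    (hS : ∀ T ∈ S, 0 < T ∧ ∃ γ : ℝ → V, γ 0 = x ∧ SolOn W γ (-T) T) (hne : S.Nonempty) :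
    ∃ γ : ℝ → V, γ 0 = x ∧ ∀ T ∈ S, SolOn W γ (-T) T := by
  classical
  have hex : ∀ T, ∃ γ : ℝ → V, T ∈ S → γ 0 = x ∧ SolOn W γ (-T) T := by
    intro T
    by_cases h : T ∈ S
    · obtain ⟨γ, h2⟩ := (hS T h).2
      exact ⟨γ, fun _ => h2⟩
    · exact ⟨fun _ => 0, fun h' => absurd h' h⟩
  choose G hG using hex
  have hex2 : ∀ t, ∃ T, (∃ T' ∈ S, |t| < T') → T ∈ S ∧ |t| < T := by
    intro t
    by_cases h : ∃ T' ∈ S, |t| < T'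
    · obtain ⟨T, h2⟩ := h
      exact ⟨T, fun _ => h2⟩
    · exact ⟨0, fun h' => absurd h' h⟩
  choose τ hτ using hex2
  have key : ∀ T ∈ S, ∀ t ∈ Ioo (-T) T, G (τ t) t = G T t := by
    intro T hT t ht
    obtain ⟨k1, k2⟩ := hτ t ⟨T, hT, abs_lt.2 ht⟩
    obtain ⟨p1, p2⟩ := hG _ k1
    obtain ⟨q1, q2⟩ := hG _ hT
    have hm : 0 < min (τ t) T := lt_min (hS _ k1).1 (hS _ hT).1
    have l1 := min_le_left (τ t) T
    have l2 := min_le_right (τ t) T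
    refine sol_unique hW (a := - min (τ t) T) (b := min (τ t) T) (t0 := 0) ?_ ?_ ⟨by linarith, hm⟩
      (p1.trans q1.symm) (abs_lt.1 (lt_min k2 (abs_lt.2 ht)))
    · intro u hu
      exact p2 u ⟨by linarith [hu.1], by linarith [hu.2]⟩
    · intro u hu
      exact q2 u ⟨by linarith [hu.1], by linarith [hu.2]⟩
  refine ⟨fun t => G (τ t) t, ?_, fun T hT t ht => ?_⟩
  · obtain ⟨T, hT⟩ := hne
    have hp := (hS T hT).1
    have := key T hT 0 ⟨by linarith, hp⟩
    exact this.trans (hG T hT).1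
  · simp only [key T hT t ht]
    apply ((hG T hT).2 t ht).congr_of_eventuallyEq
    filter_upwards [Ioo_mem_nhds ht.1 ht.2] with u hu using key T hT u hu

theorem sol_global [CompleteSpace V] {W : V → V} (hW : LocallyLipschitz W) {M : ℝ≥0}
    (hM : ∀ x, ‖W x‖ ≤ M) (x : V) :
    ∃ γ : ℝ → V, γ 0 = x ∧ ∀ t, HasDerivAt γ (W (γ t)) t := by
  let S : Set ℝ := {T | 0 < T ∧ ∃ γ : ℝ → V, γ 0 = x ∧ SolOn W γ (-T) T}
  have hne : S.Nonempty := by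
    obtain ⟨r, hr, ε, hε, α, hα, -⟩ := local_flow hW hM x
    exact ⟨ε, hε, α x, hα x (mem_closedBall_self hr.le)⟩
  obtain ⟨γ, g0, hγ⟩ := sol_paste hW x S (fun T hT => hT) hne
  by_cases hb : BddAbove S
  · exfalso
    set b := sSup S
    have hbpos : 0 < b := by
      obtain ⟨T, hT⟩ := hne
      exact hT.1.trans_le (le_csSup hb hT)
    have hsol : SolOn W γ (-b) b := by
      intro t ht
      obtain ⟨T, hT, h2⟩ := exists_lt_of_lt_csSup hne (abs_lt.2 ht)
      exact hγ T hT t (abs_lt.1 h2)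
    obtain ⟨b1, hb1, δ, hd0, hd⟩ := sol_extend hW hM hsol ⟨by linarith, hbpos⟩
    have hr := sol_reverse hd
    have hW' : LocallyLipschitz (fun x => - W x) := hW.neg
    obtain ⟨b2, hb2, δ', hd0', hd'⟩ := sol_extend hW' (M := M) (fun x => by simpa using hM x) hr
      ⟨by linarith, by linarith⟩
    have hr' := sol_reverse hd'
    simp only [neg_neg] at hr' hb2
    have hm : b < min b1 b2 := lt_min hb1 hb2
    have : min b1 b2 ∈ S := by
      refine ⟨by linarith, _, ?_, fun t ht => hr' t ⟨?_, ?_⟩⟩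
      · simp [hd0', hd0, g0]
      · linarith [ht.1, min_le_right b1 b2]
      · linarith [ht.2, min_le_left b1 b2]
    linarith [le_csSup hb this]
  · refine ⟨γ, g0, fun t => ?_⟩
    rw [not_bddAbove_iff] at hb
    obtain ⟨T, hT, h2⟩ := hb |t|
    exact hγ T hT t (abs_lt.1 h2)

theorem sol_unique_univ {W : V → V} (hW : LocallyLipschitz W) {γ δ : ℝ → V}
    (hγ : ∀ t, HasDerivAt γ (W (γ t)) t) (hδ : ∀ t, HasDerivAt δ (W (δ t)) t) (h : γ 0 = δ 0)
    (t : ℝ) : γ t = δ t := by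
  refine sol_unique hW (a := -(|t| + 1)) (b := |t| + 1) (t0 := 0) (fun u _ => hγ u) (fun u _ => hδ u)
    ⟨?_, ?_⟩ h (abs_lt.1 ?_)
  · linarith [abs_nonneg t]
  · linarith [abs_nonneg t]
  · linarith

theorem global_flow [CompleteSpace V] {W : V → V} (hW : LocallyLipschitz W) {M : ℝ≥0}
    (hM : ∀ x, ‖W x‖ ≤ M) :
    ∃ η : ℝ × V → V, Continuous η ∧ (∀ x, η (0, x) = x) ∧
      (∀ s t x, η (s + t, x) = η (s, η (t, x))) ∧
      (∀ x t, HasDerivAt (fun t => η (t, x)) (W (η (t, x))) t) ∧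
      (∀ x, LipschitzWith M fun t => η (t, x)) := by
  choose σ h0 hσ using sol_global hW hM
  have hadd : ∀ s t x, σ x (s + t) = σ (σ x t) s := by
    intro s t x
    refine sol_unique_univ hW (γ := fun s => σ x (s + t)) (δ := σ (σ x t)) (fun u => ?_) (hσ _)
      (by simp [h0]) s
    exact HasDerivAt.comp_add_const u t (hσ x (u + t))
  have hlip : ∀ x, LipschitzWith M (σ x) := fun x =>
    lipschitzWith_of_nnnorm_deriv_le (fun t => (hσ x t).differentiableAt)
      (fun t => by rw [(hσ x t).deriv]; exact hM _)
  have hcont : ∀ t, Continuous fun x => σ x t := by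
    intro t
    rw [continuous_iff_continuousAt]
    intro x
    let A : Set ℝ := {t | ContinuousAt (fun x => σ x t) x}
    have key : ∀ t1, ∃ N ∈ 𝓝 t1, ∀ t ∈ N, ∀ t' ∈ N, t ∈ A → t' ∈ A := by
      intro t1
      obtain ⟨r, hr, ε, hε, α, hα, hc⟩ := local_flow hW hM (σ x t1)
      refine ⟨ball t1 (ε / 2) ∩ σ x ⁻¹' (ball (σ x t1) r), inter_mem (ball_mem_nhds _ (by linarith))
        ((hlip x).continuous.continuousAt (ball_mem_nhds _ hr)), ?_⟩
      intro t ht t' ht' hA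
      have hd : t' - t ∈ Ioo (-ε) ε := by
        have a1 := abs_lt.1 (Real.dist_eq t t1 ▸ mem_ball.1 ht.1)
        have a2 := abs_lt.1 (Real.dist_eq t' t1 ▸ mem_ball.1 ht'.1)
        constructor <;> linarith [a1.1, a1.2, a2.1, a2.2]
      have hcσ : ContinuousAt (fun z => σ z (t' - t)) (σ x t) := by
        have hnb : closedBall (σ x t1) r ∈ 𝓝 (σ x t) :=
          mem_of_superset (isOpen_ball.mem_nhds ht.2) ball_subset_closedBall
        refine ((hc _ hd).continuousAt hnb).congr ?_
        filter_upwards [hnb] with z hz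
        obtain ⟨p1, p2⟩ := hα z hz
        exact sol_unique hW p2 (fun u _ => hσ z u) (t0 := 0) ⟨by linarith, hε⟩ (p1.trans (h0 z).symm) hd
      have := ContinuousAt.comp (f := fun x => σ x t) (x := x) hcσ hA
      change ContinuousAt (fun x => σ x t') x
      refine this.congr (Eventually.of_forall fun z => ?_)
      simp [Function.comp_def, ← hadd]
    have hcl : IsClopen A := by
      constructor
      · rw [← isOpen_compl_iff, isOpen_iff_mem_nhds]
        intro t1 ht1
        obtain ⟨N, hN, h⟩ := key t1
        filter_upwards [hN] with t ht hA
        exact ht1 (h t ht t1 (mem_of_mem_nhds hN) hA)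
      · rw [isOpen_iff_mem_nhds]
        intro t1 ht1
        obtain ⟨N, hN, h⟩ := key t1
        filter_upwards [hN] with t ht
        exact h t1 (mem_of_mem_nhds hN) t ht ht1
    have hA0 : (0:ℝ) ∈ A := by
      have : (fun x => σ x 0) = id := funext h0
      change ContinuousAt (fun x => σ x 0) x
      rw [this]; exact continuousAt_id
    have : t ∈ A := hcl.eq_univ ⟨0, hA0⟩ ▸ mem_univ t
    exact this
  exact ⟨fun p => σ p.2 p.1, continuous_prod_of_continuous_lipschitzWith _ M hcont hlip, h0, hadd,
    fun x t => hσ x t, hlip⟩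

end ODEflow

section Selection
open Metric Topology NNReal

theorem locallyLipschitz_finset_sum {X F ι : Type*} [PseudoMetricSpace X] [NormedAddCommGroup F]
    (s : Finset ι) (φ : ι → X → F) (h : ∀ i, LocallyLipschitz (φ i)) :
    LocallyLipschitz (fun x => ∑ i ∈ s, φ i x) := by
  classical
  induction s using Finset.induction_on with
  | empty => simpa using LocallyLipschitz.const (0 : F)
  | insert a s ha ih =>
    simp only [Finset.sum_insert ha]
    exact (h a).add ih

theorem exists_locallyLipschitz_selection {X F : Type*} [MetricSpace X] [NormedAddCommGroup F]
    [NormedSpace ℝ F] (t : X → Set F) (hconv : ∀ x, Convex ℝ (t x))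
    (H : ∀ x, ∃ c, ∀ᶠ y in 𝓝 x, c ∈ t y) :
    ∃ g : X → F, LocallyLipschitz g ∧ ∀ x, g x ∈ t x := by
  classical
  choose c hc using H
  obtain ⟨w, wo, wu, wlf, wsub⟩ := precise_refinement (fun x => interior {y | c x ∈ t y})
    (fun x => isOpen_interior) (by
      rw [iUnion_eq_univ_iff]
      exact fun x => ⟨x, mem_interior_iff_mem_nhds.2 (hc x)⟩)
  let ρ : X → X → ℝ := fun i x => if (w i)ᶜ = ∅ then 1 else infDist x (w i)ᶜ
  have ρlip : ∀ i, LocallyLipschitz (ρ i) := by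
    intro i
    by_cases h : (w i)ᶜ = ∅
    · simpa only [ρ, h, if_true] using LocallyLipschitz.const (1:ℝ)
    · simpa only [ρ, h, if_false] using (lipschitz_infDist_pt _).locallyLipschitz
  have ρnn : ∀ i x, 0 ≤ ρ i x := by
    intro i x
    simp only [ρ]
    split_ifs
    · exact zero_le_one
    · exact infDist_nonneg
  have ρpos : ∀ i x, x ∈ w i → 0 < ρ i x := by
    intro i x hx
    simp only [ρ]
    split_ifs with h
    · exact zero_lt_one
    · exact ((wo i).isClosed_compl.notMem_iff_infDist_pos (nonempty_iff_ne_empty.2 h)).1 (by simpa using hx)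
  have ρzero : ∀ i x, x ∉ w i → ρ i x = 0 := by
    intro i x hx
    have h : (w i)ᶜ ≠ ∅ := nonempty_iff_ne_empty.1 ⟨x, hx⟩
    simp only [ρ, h, if_false]
    exact infDist_zero_of_mem hx
  let g : X → F := fun x => (∑ᶠ i, ρ i x)⁻¹ • ∑ᶠ i, ρ i x • c i
  have geq : ∀ (s : Finset X) (y : X), (∀ i, y ∈ w i → i ∈ s) →
      (∑ᶠ i, ρ i y = ∑ i ∈ s, ρ i y) ∧ (∑ᶠ i, ρ i y • c i = ∑ i ∈ s, ρ i y • c i) := by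
    intro s y hs
    constructor
    · apply finsum_eq_sum_of_support_subset
      intro i hi
      by_contra hn
      exact hi (ρzero i y fun h => hn (hs i h))
    · apply finsum_eq_sum_of_support_subset
      intro i hi
      by_contra hn
      exact hi (by simp [ρzero i y fun h => hn (hs i h)])
  have sumpos : ∀ (s : Finset X) (y : X), (∀ i, y ∈ w i → i ∈ s) → 0 < ∑ i ∈ s, ρ i y := by
    intro s y hs
    obtain ⟨i, hi⟩ := iUnion_eq_univ_iff.1 wu y
    exact Finset.sum_pos' (fun i _ => ρnn i y) ⟨i, hs i hi, ρpos i y hi⟩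
  refine ⟨g, fun x0 => ?_, fun x => ?_⟩
  · obtain ⟨N, hN, hfin⟩ := wlf x0
    let s := hfin.toFinset
    have hs : ∀ y ∈ N, ∀ i, y ∈ w i → i ∈ s := fun y hy i hi => by
      simpa [s] using ⟨y, hi, hy⟩
    have hP : LocallyLipschitz (fun y => (∑ i ∈ s, ρ i y, ∑ i ∈ s, ρ i y • c i)) := by
      refine (locallyLipschitz_finset_sum s ρ ρlip).prodMk
        (locallyLipschitz_finset_sum s (fun i y => ρ i y • c i) fun i => ?_)
      have : LocallyLipschitz (fun a : ℝ => a • c i) :=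
        (contDiff_id.smul contDiff_const : ContDiff ℝ 1 (fun a : ℝ => a • c i)).locallyLipschitz
      exact this.comp (ρlip i)
    have hne : ∑ i ∈ s, ρ i x0 ≠ 0 := (sumpos s x0 (hs x0 (mem_of_mem_nhds hN))).ne'
    have hQ : ContDiffAt ℝ 1 (fun p : ℝ × F => p.1⁻¹ • p.2) (∑ i ∈ s, ρ i x0, ∑ i ∈ s, ρ i x0 • c i) :=
      (contDiffAt_fst.inv hne).smul contDiffAt_snd
    obtain ⟨K1, T1, hT1, hL1⟩ := hQ.exists_lipschitzOnWith
    obtain ⟨K2, T2, hT2, hL2⟩ := hP x0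
    have hpre := hP.continuous.continuousAt (x := x0) hT1
    refine ⟨K1 * K2, N ∩ (T2 ∩ _), inter_mem hN (inter_mem hT2 hpre), ?_⟩
    have := (hL1.comp (hL2.mono inter_subset_left) (fun y hy => hy.2)).mono
      (inter_subset_right (s := N))
    intro y hy z hz
    have := this hy hz
    simp only [Function.comp_def] at this
    simp only [g, (geq s y (hs y hy.1)).1, (geq s y (hs y hy.1)).2, (geq s z (hs z hz.1)).1,
      (geq s z (hs z hz.1)).2]
    exact this
  · have hfin : {i | x ∈ w i}.Finite := wlf.point_finite x
    let s := hfin.toFinset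
    have hs : ∀ i, x ∈ w i → i ∈ s := fun i hi => by simpa [s] using hi
    simp only [g, (geq s x hs).1, (geq s x hs).2]
    exact (hconv x).centerMass_mem (t := s) (w := fun i => ρ i x) (z := c) (fun i _ => ρnn i x)
      (sumpos s x hs) (fun i hi => by
        have hi' : x ∈ w i := by simpa [s] using hi
        have := interior_subset (wsub i hi')
        exact this)

end Selection

section Main
open Metric Topology NNReal

theorem ps_uniform {V : Type*} [NormedAddCommGroup V] [NormedSpace ℝ V]
    (f : V → ℝ) (f' : V → (V →L[ℝ] ℝ)) (hf : Continuous f) (hcont : Continuous f')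
    (E : Set V) (hE : IsClosed E) (hne : E.Nonempty) (c : ℝ)
    (hPS : ∀ u : ℕ → V,
      Tendsto (fun n => f (u n)) atTop (nhds c) →
      Tendsto (fun n => ‖f' (u n)‖) atTop (nhds 0) →
      ∃ φ : ℕ → ℕ, StrictMono φ ∧ ∃ v : V, Tendsto (u ∘ φ) atTop (nhds v))
    (hEK : E ∩ {v : V | f' v = 0 ∧ f v = c} = ∅) :
    ∃ ρ > 0, ∀ x, infDist x E < ρ → |f x - c| < ρ → ρ ≤ ‖f' x‖ := by
  by_contra! hcon
  choose u h1 h2 h3 using fun n : ℕ => hcon (1 / ((n : ℝ) + 1)) (by positivity)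
  have h0 := tendsto_one_div_add_atTop_nhds_zero_nat (𝕜 := ℝ)
  have t1 : Tendsto (fun n => infDist (u n) E) atTop (𝓝 0) :=
    squeeze_zero (fun n => infDist_nonneg) (fun n => (h1 n).le) h0
  have t2 : Tendsto (fun n => f (u n)) atTop (𝓝 c) := by
    rw [tendsto_iff_dist_tendsto_zero]
    exact squeeze_zero (fun n => dist_nonneg) (fun n => (h2 n).le) h0
  have t3 : Tendsto (fun n => ‖f' (u n)‖) atTop (𝓝 0) :=
    squeeze_zero (fun n => norm_nonneg _) (fun n => (h3 n).le) h0
  obtain ⟨φ, hφ, v, hv⟩ := hPS u t2 t3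
  have e1 : infDist v E = 0 := tendsto_nhds_unique
    (((continuous_infDist_pt E).tendsto v).comp hv) (t1.comp hφ.tendsto_atTop)
  have e2 : f v = c := tendsto_nhds_unique ((hf.tendsto v).comp hv) (t2.comp hφ.tendsto_atTop)
  have e3 : ‖f' v‖ = 0 := tendsto_nhds_unique
    ((hcont.norm.tendsto v).comp hv) (t3.comp hφ.tendsto_atTop)
  have : v ∈ E ∩ {v : V | f' v = 0 ∧ f v = c} :=
    ⟨(hE.mem_iff_infDist_zero hne).2 e1, norm_eq_zero.1 e3, e2⟩
  rw [hEK] at this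
  exact this

theorem exists_descent {V : Type*} [NormedAddCommGroup V] [NormedSpace ℝ V]
    (l : V →L[ℝ] ℝ) {ρ ε : ℝ} (hρ : 0 < ρ) (hε : 0 < ε) (hl : ρ ≤ ‖l‖) :
    ∃ v, ‖v‖ ≤ 2 * ε / ρ ∧ l v < -ε := by
  obtain ⟨u, hu1, hu2⟩ := l.exists_lt_apply_of_lt_opNorm (r := ρ / 2) (by linarith)
  have hk : 0 < 2 * ε / ρ := by positivity
  have hε' : ε = 2 * ε / ρ * (ρ / 2) := by field_simp
  rw [Real.norm_eq_abs] at hu2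
  rcases le_total 0 (l u) with h | h
  · rw [abs_of_nonneg h] at hu2
    refine ⟨-((2 * ε / ρ) • u), ?_, ?_⟩
    · rw [norm_neg, norm_smul, Real.norm_of_nonneg hk.le]
      nlinarith
    · rw [map_neg, map_smul, smul_eq_mul]
      nlinarith
  · rw [abs_of_nonpos h] at hu2
    refine ⟨(2 * ε / ρ) • u, ?_, ?_⟩
    · rw [norm_smul, Real.norm_of_nonneg hk.le]
      nlinarith
    · rw [map_smul, smul_eq_mul]
      nlinarith

end Main

open Metric Topology NNReal in
theorem deformation_lemma_aux
    {V : Type*} [NormedAddCommGroup V] [NormedSpace ℝ V] [CompleteSpace V]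
    (f : V → ℝ) (f' : V → (V →L[ℝ] ℝ))
    (hderiv : ∀ x, HasFDerivAt f (f' x) x) (hcont : Continuous f')
    (D E : Set V) (hD : IsClosed D) (hE : IsClosed E) (hne : E.Nonempty) (c : ℝ)
    (hPS : ∀ u : ℕ → V,
      Tendsto (fun n => f (u n)) atTop (nhds c) →
      Tendsto (fun n => ‖f' (u n)‖) atTop (nhds 0) →
      ∃ φ : ℕ → ℕ, StrictMono φ ∧ ∃ v : V, Tendsto (u ∘ φ) atTop (nhds v))
    (hDE : D ∩ E = ∅)
    (hEK : E ∩ {v : V | f' v = 0 ∧ f v = c} = ∅)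
    (hfE : ∀ x ∈ E, f x ≤ c) (hfD : ∀ x ∈ D, c ≤ f x) :
    ∃ ε : ℝ, 0 < ε ∧ ∃ η : ℝ × V → V, Continuous η ∧
      (∀ t : ℝ, ∃ h : V ≃ₜ V, (∀ x, h x = η (t, x)) ∧ (∀ x, h.symm x = η (-t, x))) ∧
      (∀ t : ℝ, 0 ≤ t → ∀ x : V, f (η (t, x)) ≤ f x) ∧
      (∀ t : ℝ, ∀ x ∈ D, η (t, x) = x) ∧
      (∀ x ∈ E, f (η (1, x)) ≤ c - ε) := by
  have hf : Continuous f := continuous_iff_continuousAt.2 fun x => (hderiv x).continuousAt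
  obtain ⟨ρ, hρ, hgrad⟩ := ps_uniform f f' hf hcont E hE hne c hPS hEK
  obtain ⟨ε, hε, hε1, hε2⟩ : ∃ ε > 0, ε < ρ ∧ 2 * ε / ρ ≤ ρ / 2 := by
    refine ⟨min (ρ / 2) (ρ * ρ / 4), by positivity, ?_, ?_⟩
    · linarith [min_le_left (ρ / 2) (ρ * ρ / 4)]
    · rw [div_le_iff₀ hρ]
      linarith [min_le_right (ρ / 2) (ρ * ρ / 4)]
  obtain ⟨M, hM⟩ : ∃ M : ℝ≥0, (M : ℝ) = 2 * ε / ρ := ⟨⟨2 * ε / ρ, by positivity⟩, rfl⟩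
  -- the pseudo-gradient field
  let A : Set V := {x | infDist x E ≤ ρ / 2 ∧ |f x - c| ≤ ε}
  have hA : IsClosed A :=
    (isClosed_le (continuous_infDist_pt E) continuous_const).inter
      (isClosed_le (hf.sub continuous_const).abs continuous_const)
  obtain ⟨v, vlip, hv⟩ := exists_locallyLipschitz_selection
    (fun x => {w : V | ‖w‖ ≤ M ∧ f' x w ≤ 0 ∧ (x ∈ A → f' x w ≤ -ε)}) (by
      intro x a ha b hb s t hs ht hst
      refine ⟨?_, ?_, fun hx => ?_⟩
      · have := norm_add_le (s • a) (t • b)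
        rw [norm_smul, norm_smul, Real.norm_of_nonneg hs, Real.norm_of_nonneg ht] at this
        have h1 := mul_le_mul_of_nonneg_left ha.1 hs
        have h2 := mul_le_mul_of_nonneg_left hb.1 ht
        have h3 : s * (M:ℝ) + t * M = M := by rw [← add_mul, hst, one_mul]
        linarith
      · rw [map_add, map_smul, map_smul, smul_eq_mul, smul_eq_mul]
        have h1 := mul_nonpos_of_nonneg_of_nonpos hs ha.2.1
        have h2 := mul_nonpos_of_nonneg_of_nonpos ht hb.2.1
        linarith
      · rw [map_add, map_smul, map_smul, smul_eq_mul, smul_eq_mul]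
        have h1 := mul_le_mul_of_nonneg_left (ha.2.2 hx) hs
        have h2 := mul_le_mul_of_nonneg_left (hb.2.2 hx) ht
        have h3 : s * (-ε) + t * (-ε) = -ε := by rw [← add_mul, hst, one_mul]
        linarith) (by
      intro x
      by_cases hx : x ∈ A
      · obtain ⟨w, hw1, hw2⟩ := exists_descent (f' x) hρ hε
          (hgrad x (by linarith [hx.1]) (by linarith [hx.2]))
        refine ⟨w, ?_⟩
        have hc : Continuous fun y => f' y w := hcont.clm_apply continuous_const
        filter_upwards [(hc.tendsto x).eventually (gt_mem_nhds hw2)] with y hy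
        exact ⟨hM ▸ hw1, by linarith, fun _ => hy.le⟩
      · refine ⟨0, ?_⟩
        filter_upwards [hA.isOpen_compl.mem_nhds hx] with y hy
        exact ⟨by simp, by simp, fun h => absurd h hy⟩)
  obtain ⟨σ, σc, σ0, σadd, σd, σlip⟩ := global_flow vlip (fun x => (hv x).1)
  have gd : ∀ x t, HasDerivAt (fun t => f (σ (t, x))) (f' (σ (t, x)) (v (σ (t, x)))) t :=
    fun x t => (hderiv _).comp_hasDerivAt t (σd x t)
  have ganti : ∀ x, Antitone fun t => f (σ (t, x)) := fun x =>
    antitone_of_deriv_nonpos (fun t => (gd x t).differentiableAt)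
      (fun t => by rw [(gd x t).deriv]; exact (hv _).2.1)
  have hdist : ∀ x ∈ E, ∀ t ∈ Icc (0:ℝ) 1, infDist (σ (t, x)) E ≤ ρ / 2 := by
    intro x hx t ht
    have h1 := (σlip x).dist_le_mul t 0
    simp only [σ0] at h1
    have h2 := infDist_le_dist_of_mem (x := σ (t, x)) hx
    rw [Real.dist_eq, sub_zero, abs_of_nonneg ht.1, hM] at h1
    have : 2 * ε / ρ * t ≤ 2 * ε / ρ * 1 := mul_le_mul_of_nonneg_left ht.2 (by positivity)
    linarith
  have hstart : ∀ x ∈ E, ∀ t, 0 ≤ t → f (σ (t, x)) ≤ c := by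
    intro x hx t ht
    have := ganti x ht
    simp only [σ0] at this
    exact this.trans (hfE x hx)
  have hdesc : ∀ x ∈ E, f (σ (1, x)) ≤ c - ε := by
    intro x hx
    by_contra! hcon
    obtain ⟨s, hs, hs2⟩ := exists_hasDerivAt_eq_slope (fun t => f (σ (t, x))) _ (zero_lt_one' ℝ)
      (continuous_iff_continuousAt.2 fun t => (gd x t).continuousAt).continuousOn
      (fun t _ => gd x t)
    have hsA : σ (s, x) ∈ A := by
      refine ⟨hdist x hx s (Ioo_subset_Icc_self hs), abs_le.2 ⟨?_, ?_⟩⟩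
      · have : f (σ (1, x)) ≤ f (σ (s, x)) := ganti x hs.2.le
        linarith
      · linarith [hstart x hx s hs.1.le]
    have := (hv _).2.2 hsA
    rw [hs2] at this
    simp only [σ0, sub_zero, div_one] at this
    linarith [hfE x hx]
  -- the closed set swept out by `E`
  let F : Set V := Prod.snd '' {p : Icc (0:ℝ) 1 × V | σ (-(p.1 : ℝ), p.2) ∈ E}
  have hF : IsClosed F := by
    apply isClosedMap_snd_of_compactSpace
    exact hE.preimage (σc.comp (by fun_prop))
  have hmemF : ∀ x ∈ E, ∀ t ∈ Icc (0:ℝ) 1, σ (t, x) ∈ F := by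
    intro x hx t ht
    refine ⟨(⟨t, ht⟩, σ (t, x)), ?_, rfl⟩
    simpa [← σadd, σ0] using hx
  have hDF : ∀ y ∈ D, y ∉ F := by
    rintro y hyD ⟨⟨⟨t, ht⟩, y'⟩, hE', rfl⟩
    simp only [mem_setOf_eq] at hE' hyD
    set x := σ (-t, y') with hx
    have hy : y' = σ (t, x) := by rw [hx, ← σadd]; simp [σ0]
    rcases eq_or_lt_of_le ht.1 with h0 | h0
    · rw [hy, ← h0, σ0] at hyD
      have : x ∈ D ∩ E := ⟨hyD, hE'⟩
      rw [hDE] at this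
      exact this
    · have hc := hfD _ hyD
      rw [hy] at hc
      obtain ⟨s, hs, hs2⟩ := exists_hasDerivAt_eq_slope (fun t => f (σ (t, x))) _ h0
        (continuous_iff_continuousAt.2 fun t => (gd x t).continuousAt).continuousOn
        (fun t _ => gd x t)
      have e1 := hstart x hE' s hs.1.le
      have e2 : f (σ (t, x)) ≤ f (σ (s, x)) := ganti x hs.2.le
      have e3 := hstart x hE' 0 le_rfl
      have hsA : σ (s, x) ∈ A := by
        refine ⟨hdist x hE' s ⟨hs.1.le, hs.2.le.trans ht.2⟩, abs_le.2 ⟨?_, ?_⟩⟩ <;> linarith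
      have h3 := (hv _).2.2 hsA
      rw [hs2] at h3
      have : 0 ≤ (f (σ (t, x)) - f (σ (0, x))) / (t - 0) :=
        div_nonneg (by linarith) (by linarith)
      linarith
  obtain ⟨χ, χlip, hχ⟩ := exists_locallyLipschitz_selection
    (fun x => {s : ℝ | (0 ≤ s ∧ s ≤ 1) ∧ (x ∈ D → s = 0) ∧ (x ∈ F → s = 1)}) (by
      intro x a ha b hb s t hs ht hst
      simp only [smul_eq_mul]
      refine ⟨⟨?_, ?_⟩, fun hx => ?_, fun hx => ?_⟩
      · exact add_nonneg (mul_nonneg hs ha.1.1) (mul_nonneg ht hb.1.1)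
      · have h1 := mul_le_mul_of_nonneg_left ha.1.2 hs
        have h2 := mul_le_mul_of_nonneg_left hb.1.2 ht
        linarith
      · simp [ha.2.1 hx, hb.2.1 hx]
      · simp [ha.2.2 hx, hb.2.2 hx, hst]) (by
      intro x
      by_cases hx : x ∈ D
      · refine ⟨0, ?_⟩
        filter_upwards [hF.isOpen_compl.mem_nhds (hDF x hx)] with y hy
        exact ⟨by simp, fun _ => rfl, fun h => absurd h hy⟩
      · refine ⟨1, ?_⟩
        filter_upwards [hD.isOpen_compl.mem_nhds hx] with y hy
        exact ⟨by simp, fun h => absurd h hy, fun _ => rfl⟩)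
  let W : V → V := fun x => χ x • v x
  have Wlip : LocallyLipschitz W := by
    have : LocallyLipschitz (fun p : ℝ × V => p.1 • p.2) :=
      (contDiff_fst.smul contDiff_snd : ContDiff ℝ 1 (fun p : ℝ × V => p.1 • p.2)).locallyLipschitz
    exact this.comp (χlip.prodMk vlip)
  have Wbd : ∀ x, ‖W x‖ ≤ M := by
    intro x
    simp only [W]
    rw [norm_smul, Real.norm_of_nonneg (hχ x).1.1]
    calc χ x * ‖v x‖ ≤ 1 * ‖v x‖ := mul_le_mul_of_nonneg_right (hχ x).1.2 (norm_nonneg _)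
      _ ≤ M := by rw [one_mul]; exact (hv x).1
  obtain ⟨η, ηc, η0, ηadd, ηd, -⟩ := global_flow Wlip Wbd
  have ed : ∀ x t, HasDerivAt (fun t => f (η (t, x))) (f' (η (t, x)) (W (η (t, x)))) t :=
    fun x t => (hderiv _).comp_hasDerivAt t (ηd x t)
  have eanti : ∀ x, Antitone fun t => f (η (t, x)) := fun x =>
    antitone_of_deriv_nonpos (fun t => (ed x t).differentiableAt)
      (fun t => by
        rw [(ed x t).deriv]
        simp only [W]
        rw [map_smul, smul_eq_mul]
        exact mul_nonpos_of_nonneg_of_nonpos (hχ _).1.1 (hv _).2.1)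
  have heq : ∀ x ∈ E, η (1, x) = σ (1, x) := by
    intro x hx
    have h1 : Tendsto (fun s : ℝ => η (1 - 2 * s, σ (s, x))) (𝓝[>] 0) (𝓝 (η (1, x))) := by
      have : Continuous (fun s : ℝ => η (1 - 2 * s, σ (s, x))) :=
        ηc.comp (by fun_prop)
      have := this.tendsto 0
      simp only [mul_zero, sub_zero, σ0] at this
      exact this.mono_left nhdsWithin_le_nhds
    have h2 : Tendsto (fun s : ℝ => σ (1 - s, x)) (𝓝[>] 0) (𝓝 (σ (1, x))) := by
      have : Continuous (fun s : ℝ => σ (1 - s, x)) := σc.comp (by fun_prop)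
      have := this.tendsto 0
      simp only [sub_zero] at this
      exact this.mono_left nhdsWithin_le_nhds
    refine tendsto_nhds_unique (h1.congr' ?_) h2
    filter_upwards [Ioo_mem_nhdsGT (show (0:ℝ) < 1 / 2 by norm_num)] with s hs
    have hu := sol_unique Wlip (γ := fun t => η (t - s, σ (s, x))) (δ := fun t => σ (t, x))
      (a := 0) (b := 1) (t0 := s)
      (fun t _ => HasDerivAt.comp_sub_const t s (ηd (σ (s, x)) (t - s)))
      (fun t ht => by
        have h := σd x t
        have hw : W (σ (t, x)) = v (σ (t, x)) := by
          simp only [W]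
          rw [(hχ _).2.2 (hmemF x hx t (Ioo_subset_Icc_self ht)), one_smul]
        rw [hw]
        exact h)
      ⟨hs.1, by linarith [hs.2]⟩ (by simp [η0])
    have := hu (x := 1 - s) ⟨by linarith [hs.2], by linarith [hs.1]⟩
    simp only at this
    rw [← this]
    congr 2
    ring
  refine ⟨ε, hε, η, ηc, fun t => ?_, fun t ht x => ?_, fun t x hx => ?_, fun x hx => ?_⟩
  · have hct : ∀ t, Continuous fun x => η (t, x) := fun t => ηc.comp (by fun_prop)
    exact ⟨{ toFun := fun x => η (t, x)
             invFun := fun x => η (-t, x)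
             left_inv := fun x => by simp [← ηadd, η0]
             right_inv := fun x => by simp [← ηadd, η0]
             continuous_toFun := hct t
             continuous_invFun := hct (-t) }, fun x => rfl, fun x => rfl⟩
  · have := eanti x ht
    simpa only [η0] using this
  · refine sol_unique_univ Wlip (γ := fun t => η (t, x)) (δ := fun _ => x) (ηd x) (fun t => ?_)
      (η0 x) t
    have : W x = 0 := by simp [W, (hχ x).2.1 hx]
    rw [this]
    exact hasDerivAt_const t x
  · rw [heq x hx]
    exact hdesc x hx

/-- **Deformation lemma.** Let `V` be a real Banach space, `D, E` closed subsets,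
`c ∈ ℝ`, and `f : V → ℝ` a `C¹` functional (derivative `f'`) satisfying the local
Palais–Smale condition at level `c`. If `D ∩ E = ∅`, `E` contains no critical
point of level `c`, `f ≤ c` on `E` and `f ≥ c` on `D`, then there exist `ε > 0`
and a continuous `η : ℝ × V → V` such that each `η (t, ·)` is a homeomorphism
with inverse `η (-t, ·)`, `f (η (t, x)) ≤ f x` for `t ≥ 0`, `η (t, ·)` fixes `D`
for all `t`, and `f (η (1, x)) ≤ c - ε` on `E`. -/
theorem deformation_lemma
    {V : Type*} [NormedAddCommGroup V] [NormedSpace ℝ V] [CompleteSpace V]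
    (f : V → ℝ) (f' : V → (V →L[ℝ] ℝ))
    (hderiv : ∀ x, HasFDerivAt f (f' x) x) (hcont : Continuous f')
    (D E : Set V) (hD : IsClosed D) (hE : IsClosed E) (c : ℝ)
    -- local Palais–Smale condition at level `c`
    (hPS : ∀ u : ℕ → V,
      Tendsto (fun n => f (u n)) atTop (nhds c) →
      Tendsto (fun n => ‖f' (u n)‖) atTop (nhds 0) →
      ∃ φ : ℕ → ℕ, StrictMono φ ∧ ∃ v : V, Tendsto (u ∘ φ) atTop (nhds v))
    -- (L1)
    (hDE : D ∩ E = ∅)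
    (hEK : E ∩ {v : V | f' v = 0 ∧ f v = c} = ∅)
    -- (L2)
    (hfE : ∀ x ∈ E, f x ≤ c) (hfD : ∀ x ∈ D, c ≤ f x) :
    ∃ ε : ℝ, 0 < ε ∧ ∃ η : ℝ × V → V, Continuous η ∧
      -- (i) each `η (t, ·)` is a homeomorphism with inverse `η (-t, ·)`
      (∀ t : ℝ, ∃ h : V ≃ₜ V, (∀ x, h x = η (t, x)) ∧ (∀ x, h.symm x = η (-t, x))) ∧
      -- (ii)
      (∀ t : ℝ, 0 ≤ t → ∀ x : V, f (η (t, x)) ≤ f x) ∧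
      -- (iii)
      (∀ t : ℝ, ∀ x ∈ D, η (t, x) = x) ∧
      -- (iv)
      (∀ x ∈ E, f (η (1, x)) ≤ c - ε) := by
  rcases E.eq_empty_or_nonempty with rfl | hne
  · refine ⟨1, one_pos, Prod.snd, continuous_snd, fun t => ⟨Homeomorph.refl V, fun x => rfl, fun x => rfl⟩,
      fun t _ x => le_rfl, fun t x _ => rfl, fun x hx => absurd hx (Set.notMem_empty x)⟩
  · exact deformation_lemma_aux f f' hderiv hcont D E hD hE hne c hPS hDE hEK hfE hfD
end

section
/- Let V = V₁ ⊕ V₂ be a real Banach space decomposed as a direct sum of two closed subspaces V₁ and V₂ with V₂ finite-dimensional, and let Φ : V → ℝ be a C¹ functional such that Φ(u) ≤ β for all u ∈ V₂ and Φ(u) ≥ α for all u ∈ V₁, where α, β ∈ ℝ. If Φ satisfies the local Palais–Smale condition (P.S.)_c for every c ∈ [α, β], then Φ admits a critical value c ∈ [α, β], i.e. there exists u ∈ V with Φ'(u) = 0 and α ≤ Φ(u) ≤ β. -/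
open Set Filter

theorem aux_det_pos {d : ℕ} (A : EuclideanSpace ℝ (Fin d) →L[ℝ] EuclideanSpace ℝ (Fin d))
    (hA : ‖A‖ < 1) : 0 < (1 + A).det := by
  have hne : ∀ s ∈ Icc (0:ℝ) 1, (1 + s • A).det ≠ 0 := by
    intro s hs h0
    have := LinearMap.bot_lt_ker_of_det_eq_zero (f := ((1 + s • A : EuclideanSpace ℝ (Fin d) →L[ℝ] EuclideanSpace ℝ (Fin d)) : EuclideanSpace ℝ (Fin d) →ₗ[ℝ] EuclideanSpace ℝ (Fin d))) h0
    obtain ⟨v, hv, hv0⟩ := (Submodule.ne_bot_iff _).1 this.ne'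
    have h1 : v + s • A v = 0 := by simpa using hv
    have h2 : ‖v‖ = s * ‖A v‖ := by
      calc ‖v‖ = ‖-(s • A v)‖ := congrArg norm (eq_neg_of_add_eq_zero_left h1)
        _ = s * ‖A v‖ := by rw [norm_neg, norm_smul, Real.norm_of_nonneg hs.1]
    have h3 : ‖A v‖ ≤ ‖A‖ * ‖v‖ := A.le_opNorm v
    have h4 : 0 < ‖v‖ := norm_pos_iff.2 hv0
    have h5 : s * ‖A v‖ ≤ 1 * ‖A v‖ := mul_le_mul_of_nonneg_right hs.2 (norm_nonneg _)
    nlinarith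
  by_contra hle
  push Not at hle
  have hc : ContinuousOn (fun s : ℝ => (1 + s • A).det) (Icc 0 1) := by
    apply Continuous.continuousOn
    exact ContinuousLinearMap.continuous_det.comp (by fun_prop)
  have := intermediate_value_Icc' (zero_le_one) hc
  have h0 : (0:ℝ) ∈ Icc ((1 + (1:ℝ) • A).det) ((1 + (0:ℝ) • A).det) := by
    constructor
    · simpa using hle
    · simp [ContinuousLinearMap.det]
  obtain ⟨s, hs, h⟩ := this h0
  exact hne s hs h

theorem aux_det_poly {d : ℕ} (A : EuclideanSpace ℝ (Fin d) →L[ℝ] EuclideanSpace ℝ (Fin d)) :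
    ∃ p : Polynomial ℝ, p.degree < (d + 1 : ℕ) ∧ ∀ t : ℝ, p.eval t = (1 + t • A).det := by
  let b := (EuclideanSpace.basisFun (Fin d) ℝ).toBasis
  let M := LinearMap.toMatrix b b (A : EuclideanSpace ℝ (Fin d) →ₗ[ℝ] EuclideanSpace ℝ (Fin d))
  refine ⟨Matrix.det ((Polynomial.X : Polynomial ℝ) • M.map Polynomial.C + (1 : Matrix (Fin d) (Fin d) ℝ).map Polynomial.C), ?_, ?_⟩
  · refine lt_of_le_of_lt Polynomial.degree_le_natDegree ?_
    have := Polynomial.natDegree_det_X_add_C_le M 1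
    simp only [Fintype.card_fin] at this
    exact_mod_cast Nat.lt_succ_of_le this
  · intro t
    rw [ContinuousLinearMap.det, ← LinearMap.det_toMatrix b, ← Polynomial.coe_evalRingHom, RingHom.map_det]
    congr 1
    ext i j
    by_cases hij : i = j <;>
    simp [M, LinearMap.toMatrix_apply, b, hij]
    all_goals ring

theorem aux_interp (d : ℕ) (t : ℝ) (ht : 0 < t) : ∃ c : ℕ → ℝ, ∃ v : ℕ → ℝ,
    (∀ i, i < d + 1 → 0 ≤ v i ∧ v i < t) ∧ ∑ i ∈ Finset.range (d+1), c i = 1 ∧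
    ∀ p : Polynomial ℝ, p.degree < (d + 1 : ℕ) →
      p.eval 1 = ∑ i ∈ Finset.range (d+1), c i * p.eval (v i) := by
  let v : ℕ → ℝ := fun i => t * i / (d + 1)
  have hv : Set.InjOn v (Finset.range (d+1)) := by
    intro i _ j _ h
    simp only [v] at h
    field_simp at h
    exact_mod_cast h
  refine ⟨fun i => (Lagrange.basis (Finset.range (d+1)) v i).eval 1, v, ?_, ?_, ?_⟩
  · intro i hi
    refine ⟨by positivity, ?_⟩
    have : (i:ℝ) < d + 1 := by exact_mod_cast hi
    simp only [v]
    rw [div_lt_iff₀ (by positivity)]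
    gcongr
  · rw [← Polynomial.eval_finsetSum, Lagrange.sum_basis hv ⟨0, by simp⟩]
    simp
  · intro p hp
    have h := Lagrange.eq_interpolate (s := Finset.range (d+1)) hv (by simpa using hp)
    conv_lhs => rw [h]
    rw [Lagrange.interpolate_apply, Polynomial.eval_finsetSum]
    simp [mul_comm]

open MeasureTheory in
theorem aux_vol_small {d : ℕ} (R : ℝ)
    (g : EuclideanSpace ℝ (Fin d) → EuclideanSpace ℝ (Fin d))
    (g' : EuclideanSpace ℝ (Fin d) → EuclideanSpace ℝ (Fin d) →L[ℝ] EuclideanSpace ℝ (Fin d))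
    (K : NNReal) (hg : LipschitzWith K g) (h0 : ∀ x, R ≤ ‖x‖ → g x = 0)
    (hd : ∀ x ∈ Metric.ball (0 : EuclideanSpace ℝ (Fin d)) R, HasFDerivAt g (g' x) x)
    (t : ℝ) (ht : 0 ≤ t) (htK : t * K < 1)
    (hmaps : ∀ x ∈ Metric.ball (0 : EuclideanSpace ℝ (Fin d)) R, x + t • g x ∈ Metric.ball (0 : EuclideanSpace ℝ (Fin d)) R) :
    IntegrableOn (fun x => (1 + t • g' x).det) (Metric.ball 0 R) ∧
    ∫ x in Metric.ball 0 R, (1 + t • g' x).det = volume.real (Metric.ball (0 : EuclideanSpace ℝ (Fin d)) R) := by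
  set U := Metric.ball (0 : EuclideanSpace ℝ (Fin d)) R
  have hLip : LipschitzWith (Real.toNNReal t * K) (fun x => t • g x) := by
    refine LipschitzWith.of_dist_le_mul fun x y => ?_
    rw [dist_smul₀, Real.norm_of_nonneg ht]
    simp only [NNReal.coe_mul, Real.coe_toNNReal t ht, mul_assoc]
    exact mul_le_mul_of_nonneg_left (hg.dist_le_mul x y) ht
  have hinj : InjOn (fun x => x + t • g x) U := by
    intro x _ y _ h
    by_contra hne
    have h1 := hLip.dist_le_mul x y
    have h2 : dist x y = dist (t • g x) (t • g y) := by
      have : x - y = t • g y - t • g x := by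
        have h' : x + t • g x = y + t • g y := h
        rw [sub_eq_sub_iff_add_eq_add, h', add_comm]
      rw [dist_eq_norm, this, dist_comm, dist_eq_norm]
    have h3 : 0 < dist x y := dist_pos.2 hne
    simp only [NNReal.coe_mul, Real.coe_toNNReal t ht] at h1
    nlinarith
  have himg : (fun x => x + t • g x) '' U = U := by
    apply Subset.antisymm
    · rintro _ ⟨x, hx, rfl⟩
      exact hmaps x hx
    · intro y hy
      have hcon : ContractingWith (Real.toNNReal t * K) (fun x => y - t • g x) := by
        refine ⟨?_, ?_⟩
        · rw [← NNReal.coe_lt_coe]; simpa [Real.coe_toNNReal t ht] using htK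
        · refine LipschitzWith.of_dist_le_mul fun a b => ?_
          rw [dist_sub_left]
          exact hLip.dist_le_mul a b
      have hfix := hcon.fixedPoint_isFixedPt
      set x := hcon.fixedPoint
      have hx : y - t • g x = x := hfix
      refine ⟨x, ?_, ?_⟩
      · by_contra hxU
        have : g x = 0 := h0 x (by simpa [U] using hxU)
        rw [this] at hx
        simp at hx
        exact hxU (hx ▸ hy)
      · simp only
        rw [← sub_eq_iff_eq_add.1 hx]
  have hder : ∀ x ∈ U, HasFDerivWithinAt (fun x => x + t • g x) (1 + t • g' x) U x := by
    intro x hx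
    exact ((hasFDerivAt_id x).add ((hd x hx).const_smul t)).hasFDerivWithinAt
  have hpos : ∀ x ∈ U, 0 < (1 + t • g' x).det := by
    intro x hx
    apply aux_det_pos
    rw [norm_smul, Real.norm_of_nonneg ht]
    have := (hd x hx).le_of_lipschitz hg
    have := mul_le_mul_of_nonneg_left this ht
    linarith
  have hU : MeasurableSet U := Metric.isOpen_ball.measurableSet
  have e1 := integral_image_eq_integral_abs_det_fderiv_smul volume hU hder hinj (fun _ => (1:ℝ))
  have e2 := integrableOn_image_iff_integrableOn_abs_det_fderiv_smul volume hU hder hinj (fun _ => (1:ℝ))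
  rw [himg] at e1 e2
  have habs : EqOn (fun x => |(1 + t • g' x).det| • (1:ℝ)) (fun x => (1 + t • g' x).det) U := by
    intro x hx
    simp [abs_of_pos (hpos x hx)]
  constructor
  · refine (e2.1 ?_).congr_fun habs hU
    exact integrableOn_const measure_ball_lt_top.ne
  · rw [← setIntegral_congr_fun hU habs, ← e1]
    simp

open MeasureTheory in
theorem aux_vol {d : ℕ} (R : ℝ)
    (g : EuclideanSpace ℝ (Fin d) → EuclideanSpace ℝ (Fin d))
    (g' : EuclideanSpace ℝ (Fin d) → EuclideanSpace ℝ (Fin d) →L[ℝ] EuclideanSpace ℝ (Fin d))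
    (K : NNReal) (hg : LipschitzWith K g) (h0 : ∀ x, R ≤ ‖x‖ → g x = 0)
    (hd : ∀ x ∈ Metric.ball (0 : EuclideanSpace ℝ (Fin d)) R, HasFDerivAt g (g' x) x)
    (hmaps : ∀ t : ℝ, 0 ≤ t → t < 1 → ∀ x ∈ Metric.ball (0 : EuclideanSpace ℝ (Fin d)) R, x + t • g x ∈ Metric.ball (0 : EuclideanSpace ℝ (Fin d)) R) :
    ∫ x in Metric.ball 0 R, (1 + g' x).det = volume.real (Metric.ball (0 : EuclideanSpace ℝ (Fin d)) R) := by
  have hK1 : (0:ℝ) < K + 1 := by positivity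
  obtain ⟨c, v, hv, hc, hp⟩ := aux_interp d (1 / (K + 1)) (by positivity)
  have hs : ∀ i ∈ Finset.range (d+1), _ := fun i hi => by
    obtain ⟨hi0, hi1⟩ := hv i (by simpa using hi)
    rw [lt_div_iff₀ hK1] at hi1
    have hK0 : (0:ℝ) ≤ K := K.2
    exact aux_vol_small R g g' K hg h0 hd (v i) hi0 (by nlinarith) (hmaps _ hi0 (by nlinarith))
  have e : ∀ x, (1 + g' x).det = ∑ i ∈ Finset.range (d+1), c i * (1 + v i • g' x).det := by
    intro x
    obtain ⟨p, hdeg, hev⟩ := aux_det_poly (g' x)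
    have := hp p hdeg
    simpa [hev] using this
  simp_rw [e]
  rw [integral_finsetSum]
  · simp_rw [integral_const_mul]
    rw [Finset.sum_congr rfl (fun i hi => by rw [(hs i hi).2]), ← Finset.sum_mul, hc, one_mul]
  · intro i hi
    exact (hs i hi).1.const_mul _

theorem aux_lip {d : ℕ} (R : ℝ) (hR : 0 < R)
    (g : EuclideanSpace ℝ (Fin d) → EuclideanSpace ℝ (Fin d)) (K : NNReal)
    (hK : LipschitzOnWith K g (Metric.closedBall 0 R))
    (h0 : ∀ x, R ≤ ‖x‖ → g x = 0) : LipschitzWith K g := by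
  have key : ∀ x y, ‖x‖ ≤ R → R ≤ ‖y‖ → dist (g x) (g y) ≤ K * dist x y := by
    intro x y hx hy
    obtain ⟨z, hz, hxz⟩ : ∃ z : EuclideanSpace ℝ (Fin d), ‖z‖ = R ∧ dist x z ≤ dist x y := by
      rcases eq_or_ne x 0 with rfl | hx0
      · have hy0 : 0 < ‖y‖ := hR.trans_le hy
        refine ⟨(R / ‖y‖) • y, ?_, ?_⟩
        · rw [norm_smul, Real.norm_of_nonneg (by positivity)]; field_simp
        · rw [dist_zero_left, dist_zero_left, norm_smul, Real.norm_of_nonneg (by positivity)]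
          field_simp; exact hy
      · have hx1 : 0 < ‖x‖ := norm_pos_iff.2 hx0
        refine ⟨(R / ‖x‖) • x, ?_, ?_⟩
        · rw [norm_smul, Real.norm_of_nonneg (by positivity)]; field_simp
        · have : (R / ‖x‖) • x - x = (R / ‖x‖ - 1) • x := by rw [sub_smul, one_smul]
          rw [dist_comm, dist_eq_norm, this, norm_smul, Real.norm_of_nonneg]
          · have h1 : (R / ‖x‖ - 1) * ‖x‖ = R - ‖x‖ := by field_simp
            rw [h1, dist_comm, dist_eq_norm]
            linarith [norm_sub_norm_le y x]
          · rw [sub_nonneg, le_div_iff₀ hx1]; linarith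
    have h1 := hK.dist_le_mul x (by simpa using hx) z (by simpa using hz.le)
    rw [h0 z hz.ge] at h1
    rw [h0 y hy]
    exact h1.trans (mul_le_mul_of_nonneg_left hxz K.2)
  refine LipschitzWith.of_dist_le_mul fun x y => ?_
  rcases le_total ‖x‖ R with hx | hx <;> rcases le_total ‖y‖ R with hy | hy
  · exact hK.dist_le_mul x (by simpa using hx) y (by simpa using hy)
  · exact key x y hx hy
  · rw [dist_comm, dist_comm x]; exact key y x hy hx
  · rw [h0 x hx, h0 y hy, dist_self]; positivity

theorem aux_no_retraction {d : ℕ} (R : ℝ) (hR : 0 < R)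
    (r : EuclideanSpace ℝ (Fin d) → EuclideanSpace ℝ (Fin d)) (hr : ContDiff ℝ 1 r)
    (hn : ∀ x, ‖r x‖ = R) (hid : ∀ x, ‖x‖ = R → r x = x) : False := by
  classical
  let g : EuclideanSpace ℝ (Fin d) → EuclideanSpace ℝ (Fin d) :=
    fun x => if ‖x‖ < R then r x - x else 0
  have hg0 : ∀ x, R ≤ ‖x‖ → g x = 0 := fun x hx => by simp [g, not_lt.2 hx]
  have hg1 : EqOn g (fun x => r x - x) (Metric.closedBall 0 R) := by
    intro x hx
    rcases lt_or_ge ‖x‖ R with h | h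
    · simp [g, h]
    · have : ‖x‖ = R := le_antisymm (by simpa using hx) h
      simp [hg0 x h, hid x this]
  have hc : ContDiff ℝ 1 (fun x => r x - x) := hr.sub contDiff_id
  obtain ⟨K, hK⟩ : ∃ K, LipschitzOnWith K (fun x => r x - x) (Metric.closedBall 0 R) :=
    hc.contDiffOn.exists_lipschitzOnWith one_ne_zero (convex_closedBall 0 R)
      (isCompact_closedBall 0 R)
  have hK' : LipschitzOnWith K g (Metric.closedBall 0 R) := by
    intro x hx y hy
    rw [hg1 hx, hg1 hy]
    exact hK hx hy
  have hdiff : ∀ x, HasFDerivAt r (fderiv ℝ r x) x := fun x =>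
    (hr.differentiable one_ne_zero x).hasFDerivAt
  have hd : ∀ x ∈ Metric.ball (0 : EuclideanSpace ℝ (Fin d)) R,
      HasFDerivAt g (fderiv ℝ r x - 1) x := by
    intro x hx
    refine ((hdiff x).sub (hasFDerivAt_id x)).congr_of_eventuallyEq ?_
    filter_upwards [Metric.isOpen_ball.mem_nhds hx] with y hy
    exact hg1 (Metric.ball_subset_closedBall hy)
  have := aux_vol R g _ K (aux_lip R hR g K hK' hg0) hg0 hd (by
    intro t ht ht1 x hx
    rw [hg1 (Metric.ball_subset_closedBall hx)]
    have e : x + t • (r x - x) = (1 - t) • x + t • r x := by module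
    simp only [mem_ball_zero_iff] at hx ⊢
    rw [e]
    refine (norm_add_le _ _).trans_lt ?_
    rw [norm_smul, norm_smul, hn, Real.norm_of_nonneg ht, Real.norm_of_nonneg (by linarith)]
    nlinarith)
  have hdet : ∀ x, (1 + (fderiv ℝ r x - 1)).det = 0 := by
    intro x
    rw [add_sub_cancel]
    by_contra hne
    obtain ⟨v, hv⟩ := (LinearMap.equivOfDetNeZero
      (fderiv ℝ r x : EuclideanSpace ℝ (Fin d) →ₗ[ℝ] EuclideanSpace ℝ (Fin d)) hne).surjective (r x)
    have hv' : fderiv ℝ r x v = r x := hv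
    have h1 := (hdiff x).norm_sq
    have h2 : (fun y => ‖r y‖ ^ 2) = fun _ => R ^ 2 := by ext y; rw [hn]
    rw [h2] at h1
    have h3 := h1.unique (hasFDerivAt_const (R^2) x)
    have h4 := congrArg (fun L => L v) h3
    simp [hv', hn] at h4
    exact hR.ne' h4
  simp_rw [hdet] at this
  have hpos : 0 < MeasureTheory.volume.real (Metric.ball (0 : EuclideanSpace ℝ (Fin d)) R) :=
    ENNReal.toReal_pos (Metric.measure_ball_pos _ _ hR).ne' MeasureTheory.measure_ball_lt_top.ne
  simp at this
  rw [← this] at hpos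
  exact lt_irrefl _ hpos

theorem aux_brouwer {d : ℕ} (R K : ℝ) (hR : 0 < R) (hKR : 2 * K < R)
    (f : EuclideanSpace ℝ (Fin d) → EuclideanSpace ℝ (Fin d)) (hf : Continuous f)
    (hK : ∀ x, ‖x‖ ≤ R → ‖f x - x‖ ≤ K) : ∃ x, ‖x‖ ≤ R ∧ f x = 0 := by
  by_contra hcon
  push Not at hcon
  obtain ⟨m, hm, hmf⟩ : ∃ m > 0, ∀ x, ‖x‖ ≤ R → m ≤ ‖f x‖ := by
    obtain ⟨x, hx, hmin⟩ := (isCompact_closedBall (0 : EuclideanSpace ℝ (Fin d)) R).exists_isMinOn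
      ⟨0, by simpa using hR.le⟩ hf.norm.continuousOn
    refine ⟨‖f x‖, norm_pos_iff.2 (hcon x (by simpa using hx)), fun y hy => hmin (by simpa using hy)⟩
  have hε : 0 < min m (R / 2 - K) := lt_min hm (by linarith)
  obtain ⟨p, hp, hpf, -⟩ := hf.exists_contDiff_approx (ε := fun _ => min m (R / 2 - K)) 1 continuous_const (fun _ => hε)
  let χ : ContDiffBump (0 : EuclideanSpace ℝ (Fin d)) := ⟨R / 2, R, by linarith, by linarith⟩
  let q : EuclideanSpace ℝ (Fin d) → EuclideanSpace ℝ (Fin d) := fun x => x + χ x • (p x - x)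
  have hq : ContDiff ℝ 1 q := contDiff_id.add (χ.contDiff.smul (hp.sub contDiff_id))
  have hqid : ∀ x, R ≤ ‖x‖ → q x = x := by
    intro x hx
    have : χ x = 0 := χ.zero_of_le_dist (by simpa using hx)
    simp [q, this]
  have hpx : ∀ x, ‖p x - f x‖ < min m (R / 2 - K) := fun x => by
    have := hpf x
    rwa [dist_eq_norm] at this
  have hq0 : ∀ x, q x ≠ 0 := by
    intro x h
    rcases le_total ‖x‖ R with hx | hx
    · rcases le_total ‖x‖ (R / 2) with hx2 | hx2
      · have : χ x = 1 := χ.one_of_mem_closedBall (by simpa using hx2)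
        simp only [q, this, one_smul, add_sub_cancel] at h
        have h1 := hpx x
        rw [h, zero_sub, norm_neg] at h1
        have := hmf x hx
        have := min_le_left m (R/2-K)
        linarith
      · have h1 : ‖p x - x‖ < R / 2 := by
          calc ‖p x - x‖ = ‖(p x - f x) + (f x - x)‖ := by congr 1; abel
            _ ≤ _ := norm_add_le _ _
            _ < R / 2 := by linarith [hpx x, hK x hx, min_le_right m (R/2-K)]
        have h2 : ‖x‖ = χ x * ‖p x - x‖ := by
          calc ‖x‖ = ‖-(χ x • (p x - x))‖ := congrArg norm (eq_neg_of_add_eq_zero_left h)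
            _ = _ := by rw [norm_neg, norm_smul, Real.norm_of_nonneg χ.nonneg]
        have h3 : χ x ≤ 1 := χ.le_one
        nlinarith [norm_nonneg (p x - x)]
    · rw [hqid x hx] at h
      rw [h, norm_zero] at hx
      linarith
  refine aux_no_retraction R hR (fun x => (R / ‖q x‖) • q x) ?_ ?_ ?_
  · exact (contDiff_const.div (hq.norm ℝ hq0) (fun x => norm_ne_zero_iff.2 (hq0 x))).smul hq
  · intro x
    have := norm_pos_iff.2 (hq0 x)
    rw [norm_smul, Real.norm_of_nonneg (by positivity)]
    field_simp
  · intro x hx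
    rw [hqid x hx.ge, hx, div_self hR.ne', one_smul]

theorem aux_ekeland {X : Type*} [MetricSpace X] [CompleteSpace X] (J : X → ℝ)
    (hJ : LowerSemicontinuous J) (a : ℝ) (ha : ∀ x, a ≤ J x) (σ : ℝ) (hσ : 0 < σ) (x₀ : X) :
    ∃ x, J x + σ * dist x₀ x ≤ J x₀ ∧ ∀ y, J y + σ * dist x y ≤ J x → y = x := by
  have hstep : ∀ (n : ℕ) (x : X), ∃ y, J y + σ * dist x y ≤ J x ∧
      ∀ z, J z + σ * dist x z ≤ J x → J y ≤ J z + (1 / 2) ^ n := by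
    intro n x
    have hne : (J '' {z | J z + σ * dist x z ≤ J x}).Nonempty := ⟨J x, x, by simp, rfl⟩
    have hbd : BddBelow (J '' {z | J z + σ * dist x z ≤ J x}) :=
      ⟨a, by rintro _ ⟨z, -, rfl⟩; exact ha z⟩
    obtain ⟨_, ⟨y, hy, rfl⟩, hlt⟩ := exists_lt_of_csInf_lt hne
      (lt_add_of_pos_right (sInf (J '' {z | J z + σ * dist x z ≤ J x}))
        (by positivity : (0:ℝ) < (1/2)^n))
    refine ⟨y, hy, fun z hz => ?_⟩
    have := csInf_le hbd ⟨z, hz, rfl⟩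
    linarith
  choose F hF1 hF2 using hstep
  let u : ℕ → X := fun n => Nat.rec x₀ (fun n x => F n x) n
  have hu : ∀ n, u (n+1) = F n (u n) := fun n => rfl
  have htrans : ∀ x y z, J y + σ * dist x y ≤ J x → J z + σ * dist y z ≤ J y →
      J z + σ * dist x z ≤ J x := by
    intro x y z h1 h2
    have := mul_le_mul_of_nonneg_left (dist_triangle x y z) hσ.le
    linarith
  have hmono : ∀ n m, n ≤ m → J (u m) + σ * dist (u n) (u m) ≤ J (u n) := by
    intro n m hnm
    induction m, hnm using Nat.le_induction with
    | base => simp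
    | succ m _ ih => exact htrans _ _ _ ih (by rw [hu]; exact hF1 m (u m))
  have hanti : Antitone (fun n => J (u n)) := by
    intro n m hnm
    have := hmono n m hnm
    have : 0 ≤ σ * dist (u n) (u m) := by positivity
    simp only
    linarith
  have hlim := tendsto_atTop_ciInf hanti ⟨a, by rintro _ ⟨n, rfl⟩; exact ha _⟩
  set l := ⨅ n, J (u n)
  have hcau : CauchySeq u := by
    refine cauchySeq_of_le_tendsto_0' (fun n => (J (u n) - l) / σ) ?_ ?_
    · intro n m hnm
      rw [le_div_iff₀ hσ]
      have h1 := hmono n m hnm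
      have h2 : l ≤ J (u m) := ciInf_le ⟨a, by rintro _ ⟨n, rfl⟩; exact ha _⟩ m
      linarith
    · have := (hlim.sub_const l).div_const σ
      simpa using this
  obtain ⟨x, hx⟩ := cauchySeq_tendsto_of_complete hcau
  have hxS : ∀ n, J x + σ * dist (u n) x ≤ J (u n) := by
    intro n
    have hlsc : LowerSemicontinuous (fun y => J y + σ * dist (u n) y) :=
      hJ.add (Continuous.lowerSemicontinuous (by fun_prop))
    have hcl : IsClosed {y | J y + σ * dist (u n) y ≤ J (u n)} := hlsc.isClosed_preimage (J (u n))
    exact hcl.mem_of_tendsto hx ((eventually_ge_atTop n).mono fun m hm => hmono n m hm)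
  refine ⟨x, hxS 0, fun y hy => ?_⟩
  have hle : J x ≤ J y := by
    have h1 : ∀ n, J x ≤ J y + (1/2)^n := by
      intro n
      have h2 := hF2 n (u n) y (htrans _ _ _ (hxS n) hy)
      have h3 := hxS (n+1)
      rw [hu] at h3
      have : 0 ≤ σ * dist (F n (u n)) x := by positivity
      linarith
    have h2 : Tendsto (fun n : ℕ => J y + (1/2:ℝ)^n) atTop (nhds (J y + 0)) :=
      (tendsto_pow_atTop_nhds_zero_of_lt_one (by norm_num) (by norm_num)).const_add _
    rw [add_zero] at h2
    exact ge_of_tendsto' h2 h1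
  have : dist x y ≤ 0 := by
    by_contra h
    push Not at h
    nlinarith
  exact (dist_le_zero.1 this).symm

theorem aux_descent {V : Type*} [NormedAddCommGroup V] [NormedSpace ℝ V]
    {B : Type*} [TopologicalSpace B] [CompactSpace B] [T2Space B]
    (Φ : V → ℝ) (Φ' : V → (V →L[ℝ] ℝ))
    (hderiv : ∀ x, HasFDerivAt Φ (Φ' x) x) (hcont : Continuous Φ')
    (γ : C(B, V)) (J δ : ℝ) (hδ : 0 < δ) (hJ : ∀ x, Φ (γ x) ≤ J)
    (hlow : ∀ x, Φ (γ x) = J → δ ≤ ‖Φ' (γ x)‖) :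
    ∃ h : C(B, V), (∀ x, ‖h x‖ ≤ 1) ∧
      ∀ᶠ t : ℝ in nhds 0, ∀ x, 0 < t → Φ (γ x + t • h x) ≤ J - t * (δ / 4) := by
  have hΦc : Continuous Φ := continuous_iff_continuousAt.2 fun x => (hderiv x).continuousAt
  obtain ⟨h, hh⟩ := exists_continuous_forall_mem_convex_of_local_const (X := B) (E := V)
    (t := fun x => {v | ‖v‖ ≤ 1 ∧ (Φ (γ x) = J → Φ' (γ x) v ≤ -(δ / 2))}) (by
      intro x v hv w hw a b ha hb hab
      refine ⟨?_, fun hx => ?_⟩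
      · have := convex_closedBall (0:V) 1 (by simpa using hv.1) (by simpa using hw.1) ha hb hab
        simpa using this
      · rw [map_add, map_smul, map_smul, smul_eq_mul, smul_eq_mul]
        have h1 := mul_le_mul_of_nonneg_left (hv.2 hx) ha
        have h2 := mul_le_mul_of_nonneg_left (hw.2 hx) hb
        have h3 : a * (-(δ/2)) + b * (-(δ/2)) = -(δ/2) := by rw [← add_mul, hab, one_mul]
        linarith) (by
      intro x
      rcases (hJ x).lt_or_eq with hx | hx
      · refine ⟨0, ?_⟩
        have : ∀ᶠ y in nhds x, Φ (γ y) < J :=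
          (hΦc.comp γ.continuous).continuousAt.eventually_lt_const hx
        filter_upwards [this] with y hy
        exact ⟨by simp, fun h => absurd h hy.ne⟩
      · have h1 := hlow x hx
        obtain ⟨v, hv1, hv2⟩ : ∃ v : V, ‖v‖ ≤ 1 ∧ Φ' (γ x) v < -(δ/2) := by
          obtain ⟨v, hv, hvn⟩ := (Φ' (γ x)).exists_lt_apply_of_lt_opNorm (r := δ / 2) (by linarith)
          rw [Real.norm_eq_abs] at hvn
          rcases lt_abs.1 hvn with h | h
          · exact ⟨-v, by simpa using hv.le, by rw [map_neg]; linarith⟩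
          · exact ⟨v, hv.le, by linarith⟩
        refine ⟨v, ?_⟩
        have hc : Continuous (fun y => Φ' (γ y) v) := by fun_prop
        filter_upwards [hc.continuousAt.eventually_lt_const hv2] with y hy
        exact ⟨hv1, fun _ => hy.le⟩)
  refine ⟨h, fun x => (hh x).1, ?_⟩
  have key := (isCompact_univ (X := B)).eventually_forall_of_forall_eventually (x₀ := (0:ℝ))
    (P := fun t x => 0 < t → Φ (γ x + t • h x) ≤ J - t * (δ / 4)) (by
      intro x _
      rcases (hJ x).lt_or_eq with hx | hx
      · have hc : Continuous (fun z : ℝ × B => Φ (γ z.2 + z.1 • h z.2) + z.1 * (δ / 4)) := by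
          fun_prop
        have := (hc.tendsto ((0:ℝ), x)).eventually_lt_const (u := J) (by simpa using hx)
        filter_upwards [this] with z hz _
        linarith
      · have hs : HasStrictFDerivAt Φ (Φ' (γ x)) (γ x) :=
          hasStrictFDerivAt_of_hasFDerivAt_of_continuousAt (Eventually.of_forall hderiv)
            hcont.continuousAt
        have h1 := (Asymptotics.isLittleO_iff.1 hs.isLittleO) (show 0 < δ / 8 by positivity)
        have hc : Continuous (fun z : ℝ × B => (γ z.2 + z.1 • h z.2, γ z.2)) := by fun_prop
        have ht : Tendsto (fun z : ℝ × B => (γ z.2 + z.1 • h z.2, γ z.2)) (nhds ((0:ℝ), x))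
            (nhds (γ x, γ x)) := by
          have := hc.tendsto ((0:ℝ), x)
          simpa using this
        have h2 := ht.eventually h1
        have hc2 : Continuous (fun z : ℝ × B => Φ' (γ x) (h z.2)) := by fun_prop
        have h3 := (hc2.tendsto ((0:ℝ), x)).eventually_lt_const (u := -(3 * δ / 8))
          (lt_of_le_of_lt ((hh x).2 hx) (by linarith))
        filter_upwards [h2, h3] with z hz hz3 hpos
        simp only [add_sub_cancel_left, map_smul, smul_eq_mul, norm_smul] at hz
        rw [Real.norm_of_nonneg hpos.le] at hz
        have h4 := (le_abs_self _).trans hz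
        have h5 := (hh z.2).1
        have h6 := hJ z.2
        have h7 : δ / 8 * (z.1 * ‖h z.2‖) ≤ δ / 8 * z.1 := by
          have : z.1 * ‖h z.2‖ ≤ z.1 * 1 := mul_le_mul_of_nonneg_left h5 hpos.le
          rw [mul_one] at this
          exact mul_le_mul_of_nonneg_left this (by positivity)
        have h8 := mul_lt_mul_of_pos_left hz3 hpos
        linarith)
  filter_upwards [key] with t ht x
  exact ht x (mem_univ x)

theorem silva_saddle_point
    {V : Type*} [NormedAddCommGroup V] [NormedSpace ℝ V] [CompleteSpace V]
    (V₁ V₂ : Submodule ℝ V)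
    (hV₁closed : IsClosed (V₁ : Set V)) (hV₂closed : IsClosed (V₂ : Set V))
    (hcompl : IsCompl V₁ V₂) (hfin : FiniteDimensional ℝ V₂)
    (Φ : V → ℝ) (Φ' : V → (V →L[ℝ] ℝ))
    (hderiv : ∀ x, HasFDerivAt Φ (Φ' x) x) (hcont : Continuous Φ')
    (α β : ℝ)
    -- (a)
    (hβ : ∀ u ∈ V₂, Φ u ≤ β)
    -- (b)
    (hα : ∀ u ∈ V₁, α ≤ Φ u)
    -- local Palais–Smale condition at every level `c ∈ [α, β]`
    (hPS : ∀ c ∈ Set.Icc α β, ∀ u : ℕ → V,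
      Tendsto (fun n => Φ (u n)) atTop (nhds c) →
      Tendsto (fun n => ‖Φ' (u n)‖) atTop (nhds 0) →
      ∃ φ : ℕ → ℕ, StrictMono φ ∧ ∃ v : V, Tendsto (u ∘ φ) atTop (nhds v)) :
    ∃ u : V, Φ' u = 0 ∧ α ≤ Φ u ∧ Φ u ≤ β := by
  by_contra hno
  have hΦc : Continuous Φ := continuous_iff_continuousAt.2 fun x => (hderiv x).continuousAt
  have hαβ : α ≤ β := (hα 0 V₁.zero_mem).trans (hβ 0 V₂.zero_mem)
  -- uniform lower bound on the derivative
  obtain ⟨δ, hδ, hlow⟩ : ∃ δ > 0, ∀ u, Φ u ∈ Icc α β → δ ≤ ‖Φ' u‖ := by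
    by_contra hcon
    push Not at hcon
    choose u hu1 hu2 using fun n : ℕ => hcon (1 / ((n:ℝ) + 1)) (by positivity)
    obtain ⟨c, hc, φ, hφ, hlim⟩ := isCompact_Icc.tendsto_subseq hu1
    have hz : Tendsto (fun n => ‖Φ' (u n)‖) atTop (nhds 0) :=
      squeeze_zero (fun n => norm_nonneg _) (fun n => (hu2 n).le)
        tendsto_one_div_add_atTop_nhds_zero_nat
    obtain ⟨ψ, hψ, v, hv⟩ := hPS c hc (u ∘ φ) hlim (hz.comp hφ.tendsto_atTop)
    have h1 : Φ v = c := tendsto_nhds_unique ((hΦc.tendsto v).comp hv)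
      (hlim.comp hψ.tendsto_atTop)
    have h2 : ‖Φ' v‖ = 0 := tendsto_nhds_unique ((hcont.norm.tendsto v).comp hv)
      ((hz.comp hφ.tendsto_atTop).comp hψ.tendsto_atTop)
    exact hno ⟨v, norm_eq_zero.1 h2, h1 ▸ hc.1, h1 ▸ hc.2⟩
  -- linear algebra
  obtain ⟨d, L, ι, hLι, hL0, hι⟩ : ∃ (d : ℕ) (L : V →L[ℝ] EuclideanSpace ℝ (Fin d))
      (ι : EuclideanSpace ℝ (Fin d) →L[ℝ] V), (∀ x, L (ι x) = x) ∧ (∀ u, L u = 0 → u ∈ V₁) ∧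
      ∀ x, ι x ∈ V₂ := by
    let T : V₂ ≃L[ℝ] EuclideanSpace ℝ (Fin (Module.finrank ℝ V₂)) := toEuclidean
    let P : V →L[ℝ] V₂ := V₂.projectionOntoL V₁
      (Submodule.IsCompl.isTopCompl_of_isClosed hcompl.symm hV₂closed hV₁closed)
    refine ⟨_, T.toContinuousLinearMap.comp P, V₂.subtypeL.comp T.symm.toContinuousLinearMap, ?_, ?_, ?_⟩
    · intro x
      simp [P]
    · intro u hu
      simpa [P] using hu
    · intro x
      simp
  set σ := δ / 4 with hσdef
  have hσ : 0 < σ := by positivity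
  set ρ := (β - α) / σ + 1 with hρ
  have hρ0 : 0 < ρ := by
    have : 0 ≤ (β - α) / σ := div_nonneg (by linarith) hσ.le
    linarith
  set R := 2 * (‖L‖ * ρ) + 1 with hRdef
  have hR : 0 < R := by positivity
  let B := Metric.closedBall (0 : EuclideanSpace ℝ (Fin d)) R
  have : CompactSpace B := isCompact_iff_compactSpace.1 (isCompact_closedBall _ _)
  have : Nonempty B := ⟨⟨0, by simp [B, hR.le]⟩⟩
  let γ₀ : C(B, V) := ⟨fun x => ι x, by fun_prop⟩
  let J : C(B, V) → ℝ := fun γ => ⨆ x, Φ (γ x)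
  have hbdd : ∀ γ : C(B, V), BddAbove (range fun x => Φ (γ x)) := fun γ =>
    (isCompact_range (hΦc.comp γ.continuous)).bddAbove
  have hJle : ∀ (γ : C(B, V)) x, Φ (γ x) ≤ J γ := fun γ x => le_ciSup (hbdd γ) x
  have hJlsc : LowerSemicontinuous J := by
    refine lowerSemicontinuous_ciSup hbdd fun x => Continuous.lowerSemicontinuous ?_
    exact hΦc.comp (continuous_eval_const x)
  have hJα : ∀ γ ∈ Metric.closedBall γ₀ ρ, α ≤ J γ := by
    intro γ hγ
    obtain ⟨f, hf⟩ := ContinuousMap.exists_restrict_eq (s := B) Metric.isClosed_closedBall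
      (⟨fun x => L (γ x), by fun_prop⟩ : C(B, EuclideanSpace ℝ (Fin d)))
    have hf' : ∀ x : B, f x = L (γ x) := fun x => congrArg (fun k => k x) hf
    obtain ⟨x, hx, hfx⟩ := aux_brouwer R (‖L‖ * ρ) hR (by linarith) f f.continuous (by
      intro x hx
      have hxB : x ∈ B := by simpa [B] using hx
      have e : f x - x = L (γ ⟨x, hxB⟩ - γ₀ ⟨x, hxB⟩) := by
        rw [map_sub, ← hf' ⟨x, hxB⟩]
        simp [γ₀, hLι]
      rw [e]
      refine (L.le_opNorm _).trans (mul_le_mul_of_nonneg_left ?_ (norm_nonneg _))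
      rw [← dist_eq_norm]
      exact (ContinuousMap.dist_apply_le_dist _).trans hγ)
    have hxB : x ∈ B := by simpa [B] using hx
    have h1 : γ ⟨x, hxB⟩ ∈ V₁ := hL0 _ (by rw [← hf' ⟨x, hxB⟩]; exact hfx)
    exact (hα _ h1).trans (hJle γ _)
  have hJ0 : J γ₀ ≤ β := ciSup_le fun x => hβ _ (hι _)
  have : CompleteSpace (Metric.closedBall γ₀ ρ) :=
    Metric.isClosed_closedBall.isComplete.completeSpace_coe
  obtain ⟨⟨γ, hγ⟩, hek1, hek2⟩ := aux_ekeland (X := Metric.closedBall γ₀ ρ) (fun γ => J γ)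
    (hJlsc.comp continuous_subtype_val) α (fun γ => hJα γ γ.2) σ hσ ⟨γ₀, by simp [hρ0.le]⟩
  simp only [Subtype.dist_eq] at hek1 hek2
  have hJγ : J γ ∈ Icc α β := by
    refine ⟨hJα γ hγ, ?_⟩
    have : 0 ≤ σ * dist γ₀ γ := by positivity
    linarith
  have hdist : dist γ₀ γ ≤ ρ - 1 := by
    have : (β - α) / σ = ρ - 1 := by rw [hρ]; ring
    rw [← this, le_div_iff₀ hσ]
    linarith [hJγ.1]
  obtain ⟨h, hh1, hh⟩ := aux_descent Φ Φ' hderiv hcont γ (J γ) δ hδ (hJle γ)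
    (fun x hx => hlow _ (hx ▸ hJγ))
  obtain ⟨t, ht, ht0, ht1⟩ : ∃ t : ℝ, (∀ x, 0 < t → Φ (γ x + t • h x) ≤ J γ - t * (δ / 4)) ∧
      0 < t ∧ t < 1 := by
    have h1 : ∀ᶠ t : ℝ in nhdsWithin 0 (Ioi 0), t ∈ Ioo (0:ℝ) 1 := Ioo_mem_nhdsGT one_pos
    obtain ⟨t, h2, h3⟩ := ((hh.filter_mono nhdsWithin_le_nhds).and h1).exists
    exact ⟨t, h2, h3.1, h3.2⟩
  let γ' : C(B, V) := γ + t • h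
  have hd : dist γ γ' ≤ t := by
    rw [ContinuousMap.dist_le ht0.le]
    intro x
    simp only [γ', ContinuousMap.add_apply, ContinuousMap.smul_apply, dist_self_add_right, norm_smul]
    rw [Real.norm_of_nonneg ht0.le]
    nlinarith [hh1 x]
  have hJ' : J γ' ≤ J γ - t * σ := ciSup_le fun x => ht x ht0
  have hγ' : γ' ∈ Metric.closedBall γ₀ ρ := by
    rw [Metric.mem_closedBall, dist_comm]
    linarith [dist_triangle γ₀ γ γ']
  have h3 := hek2 ⟨γ', hγ'⟩ (by
    have := mul_le_mul_of_nonneg_left hd hσ.le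
    simp only
    linarith)
  have h4 : γ' = γ := congrArg Subtype.val h3
  rw [h4] at hJ'
  nlinarith
end

section
/- Let V = V₁ ⊕ ℝe ⊕ V₂ be a real Banach space decomposed as a direct sum of closed subspaces with dim V₂ < ∞ and ‖e‖ = 1, and let Φ : V → ℝ be a C¹ functional. Assume: (a) there exist ρ > 0 and α ≥ 0 such that Φ(u) ≥ α for all u ∈ S_ρ, where S_ρ = closure(V₁ \ B(0,ρ)) ∪ ((ℝ⁺e ⊕ V₁) ∩ ∂B(0,ρ)); (b) there is β ∈ ℝ with Φ(u) ≤ β for all u ∈ V₂ ⊕ ℝe. If Φ satisfies the local Palais–Smale condition (P.S.)_c for every c ∈ [α, β], then Φ possesses a critical value c ∈ [α, β], i.e. there exists u ∈ V with Φ'(u) = 0 and α ≤ Φ(u) ≤ β. -/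
open Set Filter

lemma silva_poly_interp {X : Type*} [MeasurableSpace X] (μ : MeasureTheory.Measure X)
    (q : ℝ → X → ℝ) (d : ℕ)
    (hq : ∀ x, ∃ p : Polynomial ℝ, p.natDegree ≤ d ∧ ∀ t, p.eval t = q t x)
    (hint : ∀ t, MeasureTheory.Integrable (q t) μ) (c τ : ℝ) (hτ : 0 < τ)
    (hc : ∀ t ∈ Icc 0 τ, ∫ x, q t x ∂μ = c) : ∫ x, q 1 x ∂μ = c := by
  classical
  set s : Finset ℕ := Finset.range (d + 1) with hs
  set v : ℕ → ℝ := fun i => τ * (i / (d + 1)) with hv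
  have hinj : Set.InjOn v s := by
    intro i _ j _ hij
    have h1 : (0 : ℝ) < d + 1 := by positivity
    simp only [hv] at hij
    have := mul_left_cancel₀ hτ.ne' hij
    field_simp at this
    exact_mod_cast this
  have hmem : ∀ i ∈ s, v i ∈ Icc 0 τ := by
    intro i hi
    have h1 : (0 : ℝ) < d + 1 := by positivity
    have h2 : (i : ℝ) ≤ d + 1 := by
      have : i < d + 1 := by simpa [hs] using hi
      exact_mod_cast this.le
    refine ⟨by positivity, ?_⟩
    have : (i : ℝ) / (d + 1) ≤ 1 := (div_le_one h1).2 h2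
    simp only [hv]
    nlinarith
  have key : ∀ x, q 1 x = ∑ i ∈ s, q (v i) x * (Lagrange.basis s v i).eval 1 := by
    intro x
    obtain ⟨p, hp, hpq⟩ := hq x
    have hdeg : p.degree < s.card := by
      refine lt_of_le_of_lt Polynomial.degree_le_natDegree ?_
      rw [hs, Finset.card_range]
      exact_mod_cast Nat.lt_succ_of_le hp
    have := Lagrange.eq_interpolate hinj hdeg
    rw [← hpq 1]
    conv_lhs => rw [this]
    rw [Lagrange.interpolate_apply, Polynomial.eval_finsetSum]
    refine Finset.sum_congr rfl fun i _ => ?_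
    simp [hpq]
  simp_rw [key]
  rw [MeasureTheory.integral_finsetSum _ (fun i _ => (hint _).mul_const _)]
  have : ∀ i ∈ s, ∫ x, q (v i) x * (Lagrange.basis s v i).eval 1 ∂μ
      = c * (Lagrange.basis s v i).eval 1 := by
    intro i hi
    rw [MeasureTheory.integral_mul_const, hc _ (hmem i hi)]
  rw [Finset.sum_congr rfl this, ← Finset.mul_sum, ← Polynomial.eval_finsetSum,
    Lagrange.sum_basis hinj (by simp [hs])]
  simp

lemma silva_det_poly {n : ℕ} (A : EuclideanSpace ℝ (Fin n) →L[ℝ] EuclideanSpace ℝ (Fin n)) :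
    ∃ p : Polynomial ℝ, p.natDegree ≤ n ∧ ∀ t : ℝ,
      p.eval t = (ContinuousLinearMap.id ℝ (EuclideanSpace ℝ (Fin n)) - t • A).det := by
  classical
  let b := (EuclideanSpace.basisFun (Fin n) ℝ).toBasis
  let M := LinearMap.toMatrix b b (A : EuclideanSpace ℝ (Fin n) →ₗ[ℝ] EuclideanSpace ℝ (Fin n))
  refine ⟨Matrix.det ((Polynomial.X : Polynomial ℝ) • (-M).map Polynomial.C
    + (1 : Matrix (Fin n) (Fin n) ℝ).map Polynomial.C), ?_, ?_⟩
  · simpa using Polynomial.natDegree_det_X_add_C_le (-M) 1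
  · intro t
    rw [← Polynomial.coe_evalRingHom, RingHom.map_det, ContinuousLinearMap.det,
      ← LinearMap.det_toMatrix b]
    congr 1
    ext i j
    rcases eq_or_ne i j with rfl | h
    · simp [M, sub_eq_add_neg]
      ring
    · simp [M, sub_eq_add_neg, h]
      ring

lemma silva_q_poly {n : ℕ} (N : ℕ) (L : ℝ)
    (A : EuclideanSpace ℝ (Fin n) →L[ℝ] EuclideanSpace ℝ (Fin n)) (x k : EuclideanSpace ℝ (Fin n)) :
    ∃ p : Polynomial ℝ, p.natDegree ≤ n + N * 2 ∧ ∀ t : ℝ,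
      p.eval t = (ContinuousLinearMap.id ℝ (EuclideanSpace ℝ (Fin n)) - t • A).det *
        (1 - ‖x - t • k‖ ^ 2 / L) ^ N := by
  obtain ⟨p, hp, hpe⟩ := silva_det_poly A
  let r : Polynomial ℝ := Polynomial.C (-‖k‖ ^ 2 / L) * Polynomial.X ^ 2 +
    Polynomial.C (2 * inner ℝ x k / L) * Polynomial.X + Polynomial.C (1 - ‖x‖ ^ 2 / L)
  refine ⟨p * r ^ N, ?_, ?_⟩
  · refine Polynomial.natDegree_mul_le.trans (add_le_add hp ?_)
    refine Polynomial.natDegree_pow_le.trans (Nat.mul_le_mul le_rfl ?_)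
    exact Polynomial.natDegree_quadratic_le
  · intro t
    have : r.eval t = 1 - ‖x - t • k‖ ^ 2 / L := by
      rw [norm_sub_sq_real]
      simp [r, norm_smul, inner_smul_right, mul_pow]
      ring
    simp [hpe, this]

/-- for small `t`, the volume integral is independent of `t`. -/
lemma silva_small_t {n : ℕ} (k : EuclideanSpace ℝ (Fin n) → EuclideanSpace ℝ (Fin n))
    (hk : ContDiff ℝ 1 k) (R : ℝ) (hR : ∀ x, R ≤ ‖x‖ → k x = 0)
    (φ : EuclideanSpace ℝ (Fin n) → ℝ) :
    ∃ τ : ℝ, 0 < τ ∧ ∀ t ∈ Icc 0 τ,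
      ∫ x in Metric.closedBall 0 R,
        (ContinuousLinearMap.id ℝ (EuclideanSpace ℝ (Fin n)) - t • fderiv ℝ k x).det * φ (x - t • k x)
      = ∫ x in Metric.closedBall 0 R, φ x := by
  have hsupp : HasCompactSupport k := by
    refine HasCompactSupport.intro (isCompact_closedBall 0 R) fun x hx => hR x ?_
    simp at hx
    exact hx.le
  obtain ⟨C, hC⟩ := hk.lipschitzWith_of_hasCompactSupport hsupp (by simp)
  have hcont : Continuous (fderiv ℝ k) := hk.continuous_fderiv (by simp)
  have hdet : ∀ᶠ t : ℝ in nhds 0, ∀ x ∈ Metric.closedBall (0 : EuclideanSpace ℝ (Fin n)) R,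
      0 < (ContinuousLinearMap.id ℝ (EuclideanSpace ℝ (Fin n)) - t • fderiv ℝ k x).det := by
    refine (isCompact_closedBall 0 R).eventually_forall_of_forall_eventually fun x _ => ?_
    have hc : Continuous fun z : ℝ × EuclideanSpace ℝ (Fin n) =>
        (ContinuousLinearMap.id ℝ (EuclideanSpace ℝ (Fin n)) - z.1 • fderiv ℝ k z.2).det :=
      ContinuousLinearMap.continuous_det.comp (by fun_prop)
    refine hc.continuousAt.eventually (lt_mem_nhds ?_)
    simp [ContinuousLinearMap.det]
  have hlip : ∀ᶠ t : ℝ in nhds 0, |t| * C < 1 := by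
    have hc : Continuous fun t : ℝ => |t| * (C : ℝ) := by fun_prop
    refine hc.continuousAt.eventually (gt_mem_nhds ?_)
    simp
  obtain ⟨δ, hδ, hδ'⟩ := Metric.eventually_nhds_iff.1 (hdet.and hlip)
  refine ⟨δ / 2, by positivity, fun t ht => ?_⟩
  obtain ⟨hd, hl⟩ := hδ' (y := t) (by
    rw [Real.dist_eq, sub_zero, abs_of_nonneg ht.1]; linarith [ht.2])
  set f : EuclideanSpace ℝ (Fin n) → EuclideanSpace ℝ (Fin n) := fun x => x - t • k x with hf
  have hinj : Function.Injective f := by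
    intro x y hxy
    have h1 : x - y = t • (k x - k y) := by
      simp only [hf] at hxy
      rw [smul_sub, sub_eq_sub_iff_sub_eq_sub.1 hxy]
    have h2 : ‖x - y‖ ≤ |t| * C * ‖x - y‖ := by
      conv_lhs => rw [h1, norm_smul, Real.norm_eq_abs]
      rw [mul_assoc]
      gcongr
      have := hC.dist_le_mul x y
      rwa [dist_eq_norm, dist_eq_norm] at this
    have h3 : ‖x - y‖ = 0 := by nlinarith [norm_nonneg (x - y)]
    exact sub_eq_zero.1 (norm_eq_zero.1 h3)
  have hsurj : Function.Surjective f := by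
    intro y
    have hct : ContractingWith (‖t‖₊ * C) (fun x => y + t • k x) := by
      refine ⟨?_, ?_⟩
      · rw [← NNReal.coe_lt_coe]; simpa using hl
      · refine LipschitzWith.of_dist_le_mul fun a b => ?_
        rw [dist_add_left, dist_smul₀]
        have := hC.dist_le_mul a b
        push_cast
        rw [mul_assoc]
        gcongr
    refine ⟨hct.fixedPoint, ?_⟩
    have h := hct.fixedPoint_isFixedPt
    unfold Function.IsFixedPt at h
    simp only [hf]
    exact sub_eq_of_eq_add h.symm
  have hid : ∀ x, R ≤ ‖x‖ → f x = x := fun x hx => by simp [hf, hR x hx]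
  have himg : f '' Metric.closedBall 0 R = Metric.closedBall 0 R := by
    apply Subset.antisymm
    · rintro _ ⟨x, hx, rfl⟩
      by_contra hcon
      have h1 : R ≤ ‖f x‖ := by
        simp at hcon; exact hcon.le
      have := hinj (hid _ h1)
      rw [this] at hcon
      exact hcon hx
    · intro y hy
      obtain ⟨x, rfl⟩ := hsurj y
      refine ⟨x, ?_, rfl⟩
      by_contra hcon
      have h1 : R ≤ ‖x‖ := by
        simp at hcon; exact hcon.le
      rw [hid x h1] at hy
      exact hcon hy
  have hder : ∀ x, HasFDerivAt f
      (ContinuousLinearMap.id ℝ (EuclideanSpace ℝ (Fin n)) - t • fderiv ℝ k x) x := fun x =>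
    (hasFDerivAt_id x).sub
      (((hk.differentiable (by simp)) x).hasFDerivAt.const_smul t)
  have := MeasureTheory.integral_image_eq_integral_abs_det_fderiv_smul MeasureTheory.volume
    (Metric.isClosed_closedBall (x := (0 : EuclideanSpace ℝ (Fin n))) (ε := R)).measurableSet
    (fun x _ => (hder x).hasFDerivWithinAt) hinj.injOn φ
  rw [himg] at this
  rw [this]
  refine MeasureTheory.setIntegral_congr_fun Metric.isClosed_closedBall.measurableSet fun x hx => ?_
  simp only [smul_eq_mul]
  rw [abs_of_pos (hd x hx)]

lemma silva_core {n : ℕ} (k : EuclideanSpace ℝ (Fin n) → EuclideanSpace ℝ (Fin n))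
    (hk : ContDiff ℝ 1 k) (R ε : ℝ) (hε : 0 < ε) (hεR : ε ≤ R) (hR : ∀ x, R ≤ ‖x‖ → k x = 0)
    (hfix : ∀ x, ε ≤ ‖x - k x‖) : False := by
  have hRpos : 0 < R := hε.trans_le hεR
  have hkc : Continuous k := hk.continuous
  have hcont : Continuous (fderiv ℝ k) := hk.continuous_fderiv (by simp)
  set B := Metric.closedBall (0 : EuclideanSpace ℝ (Fin n)) R with hB
  have hBc : IsCompact B := isCompact_closedBall 0 R
  have hBm : MeasurableSet B := hBc.measurableSet
  obtain ⟨L₀, hL₀⟩ := (hBc.image (f := fun x => ‖x - k x‖ ^ 2) (by fun_prop)).bddAbove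
  set L := max L₀ (R ^ 2) with hL
  have hL1 : ∀ x ∈ B, ‖x - k x‖ ^ 2 ≤ L := fun x hx =>
    (hL₀ (mem_image_of_mem _ hx)).trans (le_max_left _ _)
  have hL2 : R ^ 2 ≤ L := le_max_right _ _
  have hLpos : 0 < L := lt_of_lt_of_le (by positivity) hL2
  set q : ℕ → ℝ → EuclideanSpace ℝ (Fin n) → ℝ := fun N t x =>
    (ContinuousLinearMap.id ℝ (EuclideanSpace ℝ (Fin n)) - t • fderiv ℝ k x).det *
        (1 - ‖x - t • k x‖ ^ 2 / L) ^ N with hq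
  have hdetc : ∀ t : ℝ, Continuous fun x =>
      (ContinuousLinearMap.id ℝ (EuclideanSpace ℝ (Fin n)) - t • fderiv ℝ k x).det := fun t =>
    ContinuousLinearMap.continuous_det.comp (by fun_prop)
  have hqc : ∀ N t, Continuous (q N t) := fun N t =>
    (hdetc t).mul (by fun_prop)
  have hI : ∀ N, ∫ x in B, q N 1 x = ∫ x in B, (1 - ‖x‖ ^ 2 / L) ^ N := by
    intro N
    obtain ⟨τ, hτ, h⟩ := silva_small_t k hk R hR (fun y => (1 - ‖y‖ ^ 2 / L) ^ N)
    exact silva_poly_interp _ (q N) (n + N * 2)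
      (fun x => silva_q_poly N L (fderiv ℝ k x) x (k x))
      (fun t => (hqc N t).continuousOn.integrableOn_compact hBc) _ τ hτ h
  set A := ∫ x in B, |(ContinuousLinearMap.id ℝ (EuclideanSpace ℝ (Fin n))
    - (1 : ℝ) • fderiv ℝ k x).det| with hA
  set a := 1 - ε ^ 2 / L with ha
  set b := 1 - (ε / 2) ^ 2 / L with hb
  have ha0 : 0 ≤ a := by
    have : ε ^ 2 / L ≤ 1 := (div_le_one hLpos).2 (le_trans (by gcongr) hL2)
    linarith
  have hab : a < b := by
    simp only [ha, hb]
    have : (ε / 2) ^ 2 / L < ε ^ 2 / L := by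
      gcongr
      linarith
    linarith
  set m := MeasureTheory.volume.real (Metric.closedBall (0 : EuclideanSpace ℝ (Fin n)) (ε / 2)) with hm
  have hmpos : 0 < m := by
    refine ENNReal.toReal_pos ?_ ?_
    · exact (Metric.measure_closedBall_pos _ _ (by positivity)).ne'
    · exact (isCompact_closedBall _ _).measure_lt_top.ne
  have hup : ∀ N, ∫ x in B, q N 1 x ≤ A * a ^ N := by
    intro N
    rw [hA, ← MeasureTheory.integral_mul_const]
    refine MeasureTheory.setIntegral_mono_on ((hqc N 1).continuousOn.integrableOn_compact hBc)
      (((hdetc 1).abs.mul continuous_const).continuousOn.integrableOn_compact hBc) hBm fun x hx => ?_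
    have h1 : 0 ≤ 1 - ‖x - (1 : ℝ) • k x‖ ^ 2 / L := by
      rw [one_smul]
      have := (div_le_one hLpos).2 (hL1 x hx)
      linarith
    have h2 : 1 - ‖x - (1 : ℝ) • k x‖ ^ 2 / L ≤ a := by
      rw [one_smul]
      have := hfix x
      simp only [ha]
      gcongr
    exact mul_le_mul (le_abs_self _) (pow_le_pow_left₀ h1 h2 N) (pow_nonneg h1 N) (abs_nonneg _)
  have hlow : ∀ N, m * b ^ N ≤ ∫ x in B, (1 - ‖x‖ ^ 2 / L) ^ N := by
    intro N
    have hc : Continuous fun x : EuclideanSpace ℝ (Fin n) => (1 - ‖x‖ ^ 2 / L) ^ N := by fun_prop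
    have hsub : Metric.closedBall (0 : EuclideanSpace ℝ (Fin n)) (ε / 2) ⊆ B :=
      Metric.closedBall_subset_closedBall (by linarith)
    calc m * b ^ N = ∫ x in Metric.closedBall (0 : EuclideanSpace ℝ (Fin n)) (ε / 2), b ^ N := by
          rw [MeasureTheory.setIntegral_const, smul_eq_mul]
      _ ≤ ∫ x in Metric.closedBall (0 : EuclideanSpace ℝ (Fin n)) (ε / 2), (1 - ‖x‖ ^ 2 / L) ^ N := by
          refine MeasureTheory.setIntegral_mono_on
            (continuous_const.continuousOn.integrableOn_compact (isCompact_closedBall _ _))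
            (hc.continuousOn.integrableOn_compact (isCompact_closedBall _ _))
            (isCompact_closedBall _ _).measurableSet fun x hx => ?_
          have hx' : ‖x‖ ≤ ε / 2 := by simpa using hx
          refine pow_le_pow_left₀ (ha0.trans hab.le) ?_ N
          simp only [hb]
          gcongr
      _ ≤ _ := by
          refine MeasureTheory.setIntegral_mono_set (hc.continuousOn.integrableOn_compact hBc) ?_
            hsub.eventuallyLE
          refine (MeasureTheory.ae_restrict_iff' hBm).2 (Eventually.of_forall fun x hx => ?_)
          have hx' : ‖x‖ ≤ R := by simpa [hB] using hx
          have : ‖x‖ ^ 2 / L ≤ 1 := (div_le_one hLpos).2 (le_trans (by gcongr) hL2)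
          exact pow_nonneg (by linarith) N
  have hb0 : 0 < b := ha0.trans_lt hab
  have hineq : ∀ N : ℕ, m ≤ A * (a / b) ^ N := by
    intro N
    have := (hlow N).trans ((hI N).symm.le.trans (hup N))
    rw [div_pow, ← mul_div_assoc, le_div_iff₀ (by positivity)]
    exact this
  have hlim : Tendsto (fun N : ℕ => A * (a / b) ^ N) atTop (nhds (A * 0)) :=
    (tendsto_pow_atTop_nhds_zero_of_lt_one (by positivity) ((div_lt_one hb0).2 hab)).const_mul A
  have := ge_of_tendsto' hlim hineq
  linarith [mul_zero A]

lemma silva_brouwer_euclid {n : ℕ} (k : EuclideanSpace ℝ (Fin n) → EuclideanSpace ℝ (Fin n))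
    (hk : Continuous k) (M : ℝ) (hM : ∀ x, ‖k x‖ ≤ M) : ∃ x, k x = x := by
  by_contra! hno
  have hM0 : 0 ≤ M := (norm_nonneg _).trans (hM 0)
  -- cutoff, supported in ball of radius M+1
  set χ : EuclideanSpace ℝ (Fin n) → ℝ := fun x => max 0 (min 1 (M + 1 - ‖x‖)) with hχ
  have hχc : Continuous χ := by fun_prop
  have hχ0 : ∀ x, 0 ≤ χ x := fun x => le_max_left _ _
  have hχ1 : ∀ x, χ x ≤ 1 := fun x => max_le zero_le_one (min_le_left _ _)
  have hχM : ∀ x, ‖x‖ ≤ M → χ x = 1 := fun x hx => by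
    simp only [hχ]
    rw [min_eq_left (by linarith), max_eq_right zero_le_one]
  have hχz : ∀ x, M + 1 ≤ ‖x‖ → χ x = 0 := fun x hx => by
    simp only [hχ]
    rw [max_eq_left]
    exact (min_le_right _ _).trans (by linarith)
  set h : EuclideanSpace ℝ (Fin n) → EuclideanSpace ℝ (Fin n) := fun x => χ x • k x with hh
  have hhc : Continuous h := hχc.smul hk
  have hsupp : HasCompactSupport h := by
    refine HasCompactSupport.intro (isCompact_closedBall 0 (M + 1)) fun x hx => ?_
    simp at hx
    simp [hh, hχz x hx.le]
  have hhM : ∀ x, ‖h x‖ ≤ M := fun x => by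
    simp only [hh, norm_smul, Real.norm_eq_abs, abs_of_nonneg (hχ0 x)]
    nlinarith [hχ0 x, hχ1 x, hM x, norm_nonneg (k x)]
  have hne : ∀ x, x - h x ≠ 0 := by
    intro x hx
    have hx' : x = h x := sub_eq_zero.1 hx
    have : ‖x‖ ≤ M := by rw [hx']; exact hhM x
    have h2 : h x = k x := by simp [hh, hχM x this]
    exact hno x (by rw [← h2, ← hx'])
  set R := M + 2 with hR
  obtain ⟨x₀, _, hx₀⟩ := (isCompact_closedBall (0 : EuclideanSpace ℝ (Fin n)) R).exists_isMinOn
    ⟨0, by simp; positivity⟩ (f := fun x => ‖x - h x‖) (by fun_prop)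
  set δ := min ‖x₀ - h x₀‖ 1 with hδ
  have hδ0 : 0 < δ := lt_min (norm_pos_iff.2 (hne x₀)) one_pos
  have hδB : ∀ x, δ ≤ ‖x - h x‖ := by
    intro x
    by_cases hx : ‖x‖ ≤ R
    · exact (min_le_left _ _).trans (hx₀ (by simpa using hx))
    · push Not at hx
      have : h x = 0 := by simp [hh, hχz x (by linarith)]
      rw [this, sub_zero]
      exact (min_le_right _ _).trans (by linarith)
  obtain ⟨g, hg, hgd⟩ := (hsupp.uniformContinuous_of_continuous hhc).exists_contDiff_dist_le
    (half_pos hδ0)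
  -- smooth cutoff
  let ψ : ContDiffBump (0 : EuclideanSpace ℝ (Fin n)) := ⟨M + 1, M + 2, by linarith, by linarith⟩
  refine silva_core (fun x => ψ x • g x) ?_ R (δ / 2) (by positivity) ?_ ?_ ?_
  · exact (ψ.contDiff (n := 1)).smul (hg.of_le (by norm_cast))
  · have : δ ≤ 1 := min_le_right _ _
    linarith
  · intro x hx
    have : ψ x = 0 := ψ.zero_of_le_dist (by simpa [ψ] using hx)
    simp [this]
  · intro x
    have h1 : ψ x • h x = h x := by
      by_cases hx : ‖x‖ ≤ M + 1
      · rw [ψ.one_of_mem_closedBall (by simpa [ψ] using hx), one_smul]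
      · push Not at hx
        simp [hh, hχz x hx.le]
    have h2 : ‖h x - ψ x • g x‖ ≤ δ / 2 := by
      rw [← h1, ← smul_sub, norm_smul, Real.norm_eq_abs, abs_of_nonneg ψ.nonneg]
      have h3 : ‖h x - g x‖ < δ / 2 := by rw [← dist_eq_norm, dist_comm]; exact hgd x
      have h4 : ψ x ≤ 1 := ψ.le_one
      have h5 : 0 ≤ ψ x := ψ.nonneg
      nlinarith [norm_nonneg (h x - g x)]
    have h6 : ‖x - h x‖ ≤ ‖x - ψ x • g x‖ + ‖h x - ψ x • g x‖ := by
      have : x - h x = (x - ψ x • g x) - (h x - ψ x • g x) := by abel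
      rw [this]; exact norm_sub_le _ _
    linarith [hδB x]

lemma silva_brouwer {E : Type*} [NormedAddCommGroup E] [NormedSpace ℝ E] [FiniteDimensional ℝ E]
    (k : E → E) (hk : Continuous k) (M : ℝ) (hM : ∀ x, ‖k x‖ ≤ M) : ∃ x, k x = x := by
  let T := toEuclidean (E := E)
  obtain ⟨y, hy⟩ := silva_brouwer_euclid (fun y => T (k (T.symm y)))
    (T.continuous.comp (hk.comp T.symm.continuous)) (‖(T : E →L[ℝ] EuclideanSpace ℝ (Fin (Module.finrank ℝ E)))‖ * M) (fun y =>
      ((T : E →L[ℝ] EuclideanSpace ℝ (Fin (Module.finrank ℝ E))).le_opNorm (k (T.symm y))).trans (mul_le_mul_of_nonneg_left (hM _) (norm_nonneg _)))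
  exact ⟨T.symm y, by rw [← T.symm_apply_apply (k _), hy]⟩

lemma silva_ekeland {X : Type*} [MetricSpace X] [CompleteSpace X] (J : X → ℝ) (hJ : Continuous J)
    (α : ℝ) (hα : ∀ x, α ≤ J x) (x₀ : X) (ε : ℝ) (hε : 0 < ε) :
    ∃ x, J x + ε * dist x x₀ ≤ J x₀ ∧ ∀ y, y ≠ x → J x - ε * dist y x < J y := by
  -- S x : points below x
  let S : X → Set X := fun x => {y | J y + ε * dist y x ≤ J x}
  have hself : ∀ x, x ∈ S x := fun x => by simp [S]
  have htrans : ∀ x y z, y ∈ S x → z ∈ S y → z ∈ S x := by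
    intro x y z hy hz
    simp only [S, mem_ofPred_eq] at *
    have := dist_triangle z y x
    nlinarith
  have hclosed : ∀ x, IsClosed (S x) := fun x => isClosed_le (by fun_prop) (by fun_prop)
  have hbdd : ∀ x, BddBelow (J '' S x) := fun x => ⟨α, by rintro _ ⟨y, _, rfl⟩; exact hα y⟩
  have hstep : ∀ (n : ℕ) (x : X), ∃ y ∈ S x, J y < sInf (J '' S x) + (1 / 2) ^ n := by
    intro n x
    have : sInf (J '' S x) < sInf (J '' S x) + (1 / 2 : ℝ) ^ n := by
      have : (0 : ℝ) < (1 / 2) ^ n := by positivity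
      linarith
    obtain ⟨_, ⟨y, hy, rfl⟩, h⟩ := exists_lt_of_csInf_lt ⟨_, mem_image_of_mem J (hself x)⟩ this
    exact ⟨y, hy, h⟩
  choose nxt hn1 hn2 using hstep
  let u : ℕ → X := fun n => Nat.rec x₀ (fun n x => nxt n x) n
  have hu : ∀ n, u (n + 1) = nxt n (u n) := fun n => rfl
  have hmem : ∀ n m, n ≤ m → u m ∈ S (u n) := by
    intro n m hnm
    induction m, hnm using Nat.le_induction with
    | base => exact hself _
    | succ m _ ih => exact htrans _ _ _ ih (by rw [hu]; exact hn1 _ _)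
  -- any point in S (u (n+1)) is close to u (n+1)
  have hclose : ∀ n, ∀ y ∈ S (u (n + 1)), ε * dist y (u (n + 1)) ≤ (1 / 2) ^ n := by
    intro n y hy
    have h1 : y ∈ S (u n) := htrans _ _ _ (hmem n (n + 1) (Nat.le_succ n)) hy
    have h2 : sInf (J '' S (u n)) ≤ J y := csInf_le (hbdd _) (mem_image_of_mem J h1)
    have h3 := hn2 n (u n)
    rw [← hu] at h3
    have h4 : J y + ε * dist y (u (n + 1)) ≤ J (u (n + 1)) := hy
    linarith
  have hlim0 : Tendsto (fun n : ℕ => (1 / 2 : ℝ) ^ n / ε) atTop (nhds 0) := by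
    have := (tendsto_pow_atTop_nhds_zero_of_lt_one (r := (1 / 2 : ℝ)) (by norm_num)
      (by norm_num)).div_const ε
    simpa using this
  have hcauchy : CauchySeq (fun n => u (n + 1)) := by
    refine cauchySeq_of_le_tendsto_0' (fun n : ℕ => (1 / 2 : ℝ) ^ n / ε) (fun n m hnm => ?_) hlim0
    rw [le_div_iff₀ hε, mul_comm, dist_comm]
    exact hclose n _ (hmem (n + 1) (m + 1) (by omega))
  obtain ⟨x, hx⟩ := cauchySeq_tendsto_of_complete hcauchy
  have hxS : ∀ n, x ∈ S (u n) := fun n =>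
    (hclosed _).mem_of_tendsto hx ((eventually_ge_atTop n).mono fun m hm => hmem n (m + 1) (by omega))
  refine ⟨x, hxS 0, fun y hy => ?_⟩
  by_contra! hcon
  have hyx : y ∈ S x := by simp only [S, mem_ofPred_eq]; linarith
  have hyS : ∀ n, y ∈ S (u n) := fun n => htrans _ _ _ (hxS n) hyx
  have hty : Tendsto (fun n => u (n + 1)) atTop (nhds y) := by
    rw [tendsto_iff_dist_tendsto_zero]
    refine squeeze_zero (fun _ => dist_nonneg) (fun n => ?_) hlim0
    rw [le_div_iff₀ hε, mul_comm, dist_comm]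
    exact hclose n _ (hyS (n + 1))
  exact hy (tendsto_nhds_unique hty hx)

/-- the deformation step -/
lemma silva_descent {V : Type*} [NormedAddCommGroup V] [NormedSpace ℝ V]
    {D : Type*} [MetricSpace D] [CompactSpace D]
    (Φ : V → ℝ) (Φ' : V → (V →L[ℝ] ℝ))
    (hderiv : ∀ x, HasFDerivAt Φ (Φ' x) x) (hcont : Continuous Φ')
    (h : C(D, V)) (m ε : ℝ) (hε : 0 < ε) (hm : ∀ w, Φ (h w) ≤ m)
    (hbig : ∀ w, Φ (h w) = m → 2 * ε < ‖Φ' (h w)‖) :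
    ∃ v : C(D, V), (∀ w, ‖v w‖ ≤ 1) ∧
      ∀ᶠ τ : ℝ in nhds 0, 0 < τ → ∀ w, Φ (h w + τ • v w) < m - ε * τ := by
  have hΦc : Continuous Φ := continuous_iff_continuousAt.2 fun x => (hderiv x).continuousAt
  obtain ⟨v, hv⟩ := exists_continuous_forall_mem_convex_of_local_const (X := D) (E := V)
    (t := fun w => {v | ‖v‖ ≤ 1 ∧ (Φ (h w) = m → Φ' (h w) v < -(2 * ε))})
    (by
      intro w x hx y hy a b ha hb hab
      refine ⟨?_, fun hw => ?_⟩
      · calc ‖a • x + b • y‖ ≤ ‖a • x‖ + ‖b • y‖ := norm_add_le _ _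
          _ = a * ‖x‖ + b * ‖y‖ := by
            rw [norm_smul, norm_smul, Real.norm_of_nonneg ha, Real.norm_of_nonneg hb]
          _ ≤ 1 := by nlinarith [hx.1, hy.1]
      · have h1 := hx.2 hw
        have h2 := hy.2 hw
        simp only [map_add, map_smul, smul_eq_mul]
        rcases eq_or_lt_of_le ha with rfl | ha'
        · have : b = 1 := by linarith
          subst this; linarith
        · nlinarith)
    (by
      intro w
      by_cases hw : Φ (h w) = m
      · have : ∃ c : V, ‖c‖ ≤ 1 ∧ Φ' (h w) c < -(2 * ε) := by
          obtain ⟨c, hc, hc'⟩ := ContinuousLinearMap.exists_lt_apply_of_lt_opNorm (Φ' (h w)) (hbig w hw)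
          rw [Real.norm_eq_abs] at hc'
          rcases lt_abs.1 hc' with h1 | h1
          · exact ⟨-c, by rw [norm_neg]; exact hc.le, by rw [map_neg]; linarith⟩
          · exact ⟨c, hc.le, by linarith⟩
        obtain ⟨c, hc1, hc2⟩ := this
        refine ⟨c, ?_⟩
        have hcc : Continuous fun y => Φ' (h y) c := by fun_prop
        filter_upwards [hcc.continuousAt.eventually (gt_mem_nhds hc2)] with y hy
        exact ⟨hc1, fun _ => hy⟩
      · refine ⟨0, ?_⟩
        have hcc : Continuous fun y => Φ (h y) := by fun_prop
        filter_upwards [hcc.continuousAt.eventually (isOpen_ne.mem_nhds hw)] with y hy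
        exact ⟨by simp, fun h' => absurd h' hy⟩)
  refine ⟨v, fun w => (hv w).1, ?_⟩
  have := (isCompact_univ (X := D)).eventually_forall_of_forall_eventually (x₀ := (0 : ℝ))
    (P := fun τ w => 0 < τ → Φ (h w + τ • v w) < m - ε * τ) (by
      intro w _
      by_cases hw : Φ (h w) = m
      · have hstrict : HasStrictFDerivAt Φ (Φ' (h w)) (h w) :=
          hasStrictFDerivAt_of_hasFDerivAt_of_continuousAt
            (Eventually.of_forall hderiv) hcont.continuousAt
        have hb := (hstrict.isLittleO.def (half_pos hε))
        have hc : Continuous fun z : ℝ × D => ((h z.2 + z.1 • v z.2, h z.2) : V × V) := by fun_prop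
        have ht : Tendsto (fun z : ℝ × D => ((h z.2 + z.1 • v z.2, h z.2) : V × V))
            (nhds (0, w)) (nhds (h w, h w)) := by
          have := hc.tendsto (0, w)
          simpa using this
        have hc2 : Continuous fun z : ℝ × D => Φ' (h w) (v z.2) := by fun_prop
        filter_upwards [ht.eventually hb,
          hc2.continuousAt.eventually (gt_mem_nhds ((hv w).2 hw))] with z h1 h2 hz
        simp only [add_sub_cancel_left, map_smul, smul_eq_mul, norm_smul, Real.norm_eq_abs] at h1
        rw [abs_of_pos hz] at h1
        have h3 := (abs_le.1 h1).2
        have h4 := (hv z.2).1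
        have h5 := hm z.2
        have h6 : z.1 * ‖v z.2‖ ≤ z.1 := by nlinarith
        nlinarith
      · have hlt : Φ (h w) < m := lt_of_le_of_ne (hm w) hw
        have hc : Continuous fun z : ℝ × D => Φ (h z.2 + z.1 • v z.2) - (m - ε * z.1) := by fun_prop
        filter_upwards [hc.continuousAt.eventually (gt_mem_nhds (a := 0) (by simpa using hlt))] with z hz _
        linarith)
  filter_upwards [this] with τ hτ h0 w using hτ w (mem_univ _) h0

lemma silva_minimax {V : Type*} [NormedAddCommGroup V] [NormedSpace ℝ V] [CompleteSpace V]
    {D : Type*} [MetricSpace D] [CompactSpace D] [Nonempty D]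
    (Φ : V → ℝ) (Φ' : V → (V →L[ℝ] ℝ))
    (hderiv : ∀ x, HasFDerivAt Φ (Φ' x) x) (hcont : Continuous Φ')
    (i : C(D, V)) (α β C ε : ℝ) (hε : 0 < ε)
    (hlink : ∀ h : C(D, V), (∀ w, ‖h w - i w‖ ≤ C) → ∃ w, α ≤ Φ (h w))
    (hβ : ∀ w, Φ (i w) ≤ β) (hC : β - α < ε * C) (hC0 : 0 ≤ C) :
    ∃ u, α ≤ Φ u ∧ Φ u ≤ β ∧ ‖Φ' u‖ ≤ 2 * ε := by
  have hΦc : Continuous Φ := continuous_iff_continuousAt.2 fun x => (hderiv x).continuousAt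
  have : CompleteSpace (Metric.closedBall i C) :=
    (Metric.isClosed_closedBall).completeSpace_coe
  let J₀ : C(D, V) → ℝ := fun h => sSup ((fun w => Φ (h w)) '' univ)
  have hJc : Continuous J₀ := by
    refine IsCompact.continuous_sSup (f := fun (h : C(D, V)) w => Φ (h w)) isCompact_univ ?_
    exact hΦc.comp (continuous_eval (F := C(D, V)))
  have hJ1 : ∀ (h : C(D, V)) w, Φ (h w) ≤ J₀ h := fun h w =>
    le_csSup (isCompact_univ.image (by fun_prop)).bddAbove (mem_image_of_mem _ (mem_univ w))
  have hJ2 : ∀ h : C(D, V), ∃ w, Φ (h w) = J₀ h := fun h => by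
    obtain ⟨w, _, hw⟩ := (isCompact_univ (X := D).image (f := fun w => Φ (h w)) (by fun_prop)).sSup_mem
      (univ_nonempty.image _)
    exact ⟨w, hw⟩
  have hball : ∀ h : Metric.closedBall i C, ∀ w, ‖h.1 w - i w‖ ≤ C := fun h w => by
    rw [← dist_eq_norm]
    exact (ContinuousMap.dist_apply_le_dist w).trans h.2
  have hJα : ∀ h : Metric.closedBall i C, α ≤ J₀ h.1 := fun h => by
    obtain ⟨w, hw⟩ := hlink h.1 (hball h)
    exact hw.trans (hJ1 _ w)
  have hJβ : J₀ i ≤ β := by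
    obtain ⟨w, hw⟩ := hJ2 i
    rw [← hw]; exact hβ w
  obtain ⟨h, he1, he2⟩ := silva_ekeland (fun h : Metric.closedBall i C => J₀ h.1)
    (hJc.comp continuous_subtype_val) α hJα ⟨i, Metric.mem_closedBall_self hC0⟩ ε hε
  have he1' : J₀ h.1 + ε * dist h.1 i ≤ J₀ i := he1
  have hJh : J₀ h.1 ≤ β := by
    have : 0 ≤ ε * dist h.1 i := by positivity
    linarith
  have hdist : dist h.1 i < C := by
    have := hJα h
    have h2 : ε * dist h.1 i < ε * C := by linarith
    exact lt_of_mul_lt_mul_left h2 hε.le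
  by_contra! hcon
  obtain ⟨v, hv1, hv2⟩ := silva_descent Φ Φ' hderiv hcont h.1 (J₀ h.1) ε hε (hJ1 h.1)
    (fun w hw => hcon _ (by rw [hw]; exact hJα h) (by rw [hw]; exact hJh))
  obtain ⟨δ, hδ, hδ'⟩ := Metric.eventually_nhds_iff.1 hv2
  set τ := min (δ / 2) (C - dist h.1 i) with hτ
  have hτ0 : 0 < τ := lt_min (half_pos hδ) (sub_pos.2 hdist)
  have hdesc := hδ' (y := τ) (by
    rw [Real.dist_eq, sub_zero, abs_of_pos hτ0]
    exact (min_le_left _ _).trans_lt (half_lt_self hδ)) hτ0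
  let h' : C(D, V) := h.1 + τ • v
  have hh' : dist h' h.1 ≤ τ := by
    rw [ContinuousMap.dist_le hτ0.le]
    intro w
    simp only [h', ContinuousMap.add_apply, ContinuousMap.smul_apply, dist_eq_norm,
      add_sub_cancel_left, norm_smul, Real.norm_eq_abs, abs_of_pos hτ0]
    nlinarith [hv1 w]
  have hmem : h' ∈ Metric.closedBall i C := by
    have h1 := dist_triangle h' h.1 i
    have h2 : τ ≤ C - dist h.1 i := min_le_right _ _
    rw [Metric.mem_closedBall]
    linarith
  have hJ' : J₀ h' < J₀ h.1 - ε * τ := by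
    obtain ⟨w, hw⟩ := hJ2 h'
    rw [← hw]
    exact hdesc w
  have hne : (⟨h', hmem⟩ : Metric.closedBall i C) ≠ h := by
    intro heq
    have : h' = h.1 := congrArg Subtype.val heq
    rw [this] at hJ'
    nlinarith
  have h3 : J₀ h.1 - ε * dist h' h.1 < J₀ h' := he2 ⟨h', hmem⟩ hne
  nlinarith

/-- linking -/
lemma silva_link {V : Type*} [NormedAddCommGroup V] [NormedSpace ℝ V]
    (W : Submodule ℝ V) [FiniteDimensional ℝ W] (P : V →L[ℝ] W) (hP : ∀ w : W, P w = w)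
    (σ : V →L[ℝ] ℝ) (e : W) (hσe : σ e = 1) (hσP : ∀ v, σ (P v) = σ v)
    (he : ‖e‖ = 1) (ρ C M : ℝ) (hM : M = ‖P‖ * C + ‖σ‖ * ρ) (hρ : 0 < ρ) (hC : 0 ≤ C)
    (h : C(Metric.closedBall (0 : W) M, V)) (hh : ∀ w, ‖h w - (w.1 : V)‖ ≤ C) :
    ∃ w, P (h w) = σ (h w) • e ∧
      min (σ (h w)) (‖σ‖ * (‖h w‖ - ρ)) = 0 := by
  have hM0 : 0 ≤ M := by rw [hM]; positivity
  have hrad : ∀ x : W, (M / max M ‖x‖) • x ∈ Metric.closedBall (0 : W) M := by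
    intro x
    rw [mem_closedBall_zero_iff, norm_smul, Real.norm_eq_abs, abs_of_nonneg (by positivity)]
    rcases eq_or_lt_of_le hM0 with h0 | h0
    · rw [← h0]; simp
    · have : 0 < max M ‖x‖ := lt_max_of_lt_left h0
      rw [div_mul_eq_mul_div, div_le_iff₀ this]
      exact mul_le_mul_of_nonneg_left (le_max_right _ _) hM0
  have hMpos : 0 < M := by
    have : σ ≠ 0 := by rintro rfl; simp at hσe
    have := norm_pos_iff.2 this
    rw [hM]
    positivity
  let r : W → Metric.closedBall (0 : W) M := fun x => ⟨(M / max M ‖x‖) • x, hrad x⟩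
  have hr : Continuous r := by
    refine Continuous.subtype_mk ?_ _
    refine Continuous.smul (Continuous.div continuous_const (continuous_const.max continuous_norm) fun x => ?_) continuous_id
    exact (lt_max_of_lt_left hMpos).ne'
  let k : Metric.closedBall (0 : W) M → W := fun w =>
    w.1 - P (h w) + (σ (h w) - min (σ (h w)) (‖σ‖ * (‖h w‖ - ρ))) • e
  have hkc : Continuous k := by fun_prop
  have hkM : ∀ w, ‖k w‖ ≤ M := by
    intro w
    have h1 : ‖w.1 - P (h w)‖ ≤ ‖P‖ * C := by
      have : w.1 - P (h w) = P ((w.1 : V) - h w) := by rw [map_sub, hP]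
      rw [this]
      refine (P.le_opNorm _).trans ?_
      rw [norm_sub_rev]
      exact mul_le_mul_of_nonneg_left (hh w) (norm_nonneg _)
    have h2 : ‖(σ (h w) - min (σ (h w)) (‖σ‖ * (‖h w‖ - ρ))) • e‖ ≤ ‖σ‖ * ρ := by
      rw [norm_smul, he, mul_one, Real.norm_eq_abs,
        abs_of_nonneg (sub_nonneg.2 (min_le_left _ _))]
      have h3 := (le_abs_self _).trans (σ.le_opNorm (h w))
      have h4 : 0 ≤ ‖σ‖ * ρ := by positivity
      rcases min_choice (σ (h w)) (‖σ‖ * (‖h w‖ - ρ)) with h5 | h5 <;> rw [h5] <;> linarith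
    rw [hM]
    exact (norm_add_le _ _).trans (add_le_add h1 h2)
  obtain ⟨x, hx⟩ := silva_brouwer (fun x => k (r x)) (hkc.comp hr) M (fun x => hkM _)
  have hxM : ‖x‖ ≤ M := by rw [← hx]; exact hkM _
  have hrx : (r x).1 = x := by
    simp only [r]
    rw [max_eq_left hxM, div_self hMpos.ne', one_smul]
  refine ⟨r x, ?_⟩
  have h1 : P (h (r x)) = (σ (h (r x)) - min (σ (h (r x))) (‖σ‖ * (‖h (r x)‖ - ρ))) • e := by
    have h2 : (r x).1 - P (h (r x)) +
      (σ (h (r x)) - min (σ (h (r x))) (‖σ‖ * (‖h (r x)‖ - ρ))) • e = x := hx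
    rw [hrx, sub_add_eq_add_sub, sub_eq_iff_eq_add] at h2
    exact (add_left_cancel h2).symm
  have h3 : min (σ (h (r x))) (‖σ‖ * (‖h (r x)‖ - ρ)) = 0 := by
    have h4 := hσP (h (r x))
    rw [h1] at h4
    rw [Submodule.coe_smul, map_smul, hσe, smul_eq_mul, mul_one] at h4
    linarith
  refine ⟨?_, h3⟩
  rw [h1, h3, sub_zero]

lemma silva_proj {V : Type*} [NormedAddCommGroup V] [NormedSpace ℝ V] [CompleteSpace V]
    (V₁ V₂ : Submodule ℝ V) (e : V) (he : ‖e‖ = 1)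
    (hV₁closed : IsClosed (V₁ : Set V))
    (hfin : FiniteDimensional ℝ V₂)
    (hinternal : DirectSum.IsInternal ![V₁, ℝ ∙ e, V₂])
    (W : Submodule ℝ V) (hW : W = (ℝ ∙ e) ⊔ V₂) :
    ∃ (P : V →L[ℝ] W) (σ : V →L[ℝ] ℝ),
      (∀ w : W, P w = w) ∧ σ e = 1 ∧ (∀ v, σ (P v) = σ v) ∧
      (∀ v, P v = 0 → v ∈ V₁) := by
  have hWfin : FiniteDimensional ℝ W := by rw [hW]; infer_instance
  have hind := hinternal.submodule_iSupIndep
  have htop := hinternal.submodule_iSup_eq_top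
  have hsup : V₁ ⊔ W = ⊤ := by
    rw [← htop, iSup_fin_three]; simp [hW, sup_assoc]
  have hdisj : Disjoint V₁ W := by
    have := hind 0
    refine this.mono_right ?_
    rw [hW]
    refine sup_le ?_ ?_
    · exact le_iSup₂_of_le (1 : Fin 3) (by decide) le_rfl
    · exact le_iSup₂_of_le (2 : Fin 3) (by decide) le_rfl
  have hc : IsCompl W V₁ := ⟨hdisj.symm, codisjoint_iff.2 (by rw [sup_comm]; exact hsup)⟩
  have hWc : IsClosed (W : Set V) := W.closed_of_finiteDimensional
  have ht : Submodule.IsTopCompl W V₁ := Submodule.IsCompl.isTopCompl_of_isClosed hc hWc hV₁closed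
  obtain ⟨f, -, hf⟩ := exists_dual_vector ℝ e (by rw [he]; exact one_ne_zero)
  have heW : e ∈ W := hW ▸ Submodule.mem_sup_left (Submodule.mem_span_singleton_self e)
  let P := Submodule.projectionOntoL W V₁ ht
  have hP : ∀ v, P v = Submodule.projectionOnto W V₁ hc v := fun v => rfl
  have hPW : ∀ w : W, P w = w := fun w => by
    rw [hP]; exact Submodule.projectionOnto_apply_left hc w
  refine ⟨P, f.comp (W.subtypeL.comp P), hPW, ?_, ?_, ?_⟩
  · have := hPW ⟨e, heW⟩
    simp only at this
    simp [this, hf, he]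
  · intro v
    simp [hPW]
  · intro v hv
    rw [hP] at hv
    exact (Submodule.projectionOnto_apply_eq_zero_iff hc).1 hv

/-- **Silva's generalized mountain pass theorem with global estimates.**
Let `V = V₁ ⊕ ℝe ⊕ V₂` be a real Banach space decomposed as a topological
direct sum of closed subspaces, with `dim V₂ < ∞` and `‖e‖ = 1`, and let
`Φ : V → ℝ` be `C¹`. Assume there are `ρ > 0` and `α ≥ 0` with `Φ ≥ α` on
`S_ρ = closure (V₁ \ B(0,ρ)) ∪ ((ℝ⁺e ⊕ V₁) ∩ ∂B(0,ρ))`, and `β` with `Φ ≤ β`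
on `V₂ ⊕ ℝe`. If `Φ` satisfies the local Palais–Smale condition at every level
`c ∈ [α, β]`, then `Φ` possesses a critical value in `[α, β]`. -/
theorem silva_generalized_mountain_pass
    {V : Type*} [NormedAddCommGroup V] [NormedSpace ℝ V] [CompleteSpace V]
    (V₁ V₂ : Submodule ℝ V) (e : V) (he : ‖e‖ = 1)
    (hV₁closed : IsClosed (V₁ : Set V)) (hV₂closed : IsClosed (V₂ : Set V))
    (hfin : FiniteDimensional ℝ V₂)
    -- `V = V₁ ⊕ ℝe ⊕ V₂` (internal topological direct sum of closed subspaces)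
    (hinternal : DirectSum.IsInternal ![V₁, ℝ ∙ e, V₂])
    (Φ : V → ℝ) (Φ' : V → (V →L[ℝ] ℝ))
    (hderiv : ∀ x, HasFDerivAt Φ (Φ' x) x) (hcont : Continuous Φ')
    (ρ α β : ℝ) (hρ : 0 < ρ) (hα : 0 ≤ α)
    -- (a) `Φ ≥ α` on `S_ρ = closure (V₁ \ B(0,ρ)) ∪ ((ℝ⁺e ⊕ V₁) ∩ ∂B(0,ρ))`
    (hSρ : ∀ u ∈ closure ((V₁ : Set V) \ Metric.ball 0 ρ) ∪
        ({x : V | ∃ s : ℝ, 0 ≤ s ∧ ∃ v ∈ V₁, x = s • e + v} ∩ Metric.sphere 0 ρ),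
      α ≤ Φ u)
    -- (b) `Φ ≤ β` on `V₂ ⊕ ℝe`
    (hβ : ∀ u : V, (∃ s : ℝ, ∃ v ∈ V₂, u = s • e + v) → Φ u ≤ β)
    -- local Palais–Smale condition at every level `c ∈ [α, β]`
    (hPS : ∀ c ∈ Set.Icc α β, ∀ u : ℕ → V,
      Tendsto (fun n => Φ (u n)) atTop (nhds c) →
      Tendsto (fun n => ‖Φ' (u n)‖) atTop (nhds 0) →
      ∃ φ : ℕ → ℕ, StrictMono φ ∧ ∃ v : V, Tendsto (u ∘ φ) atTop (nhds v)) :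
    ∃ u : V, Φ' u = 0 ∧ α ≤ Φ u ∧ Φ u ≤ β := by
  obtain ⟨W, hW⟩ : ∃ W : Submodule ℝ V, W = (ℝ ∙ e) ⊔ V₂ := ⟨_, rfl⟩
  obtain ⟨P, σ, hPW, hσe, hσP, hker⟩ := silva_proj V₁ V₂ e he hV₁closed hfin hinternal W hW
  have hWfin : FiniteDimensional ℝ W := by rw [hW]; infer_instance
  have heW : e ∈ W := hW ▸ Submodule.mem_sup_left (Submodule.mem_span_singleton_self e)
  have hΦc : Continuous Φ := continuous_iff_continuousAt.2 fun x => (hderiv x).continuousAt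
  have hσ0 : 0 < ‖σ‖ := norm_pos_iff.2 (by rintro rfl; simp at hσe)
  have hWβ : ∀ w : W, Φ w ≤ β := by
    intro w
    obtain ⟨y, hy, z, hz, hyz⟩ := Submodule.mem_sup.1 (hW.le w.2)
    obtain ⟨s, rfl⟩ := Submodule.mem_span_singleton.1 hy
    exact hβ _ ⟨s, z, hz, hyz.symm⟩
  have hαv : ∀ v : V, P v = σ v • (⟨e, heW⟩ : W) → min (σ v) (‖σ‖ * (‖v‖ - ρ)) = 0 → α ≤ Φ v := by
    intro v h1 h2
    have hv1 : v - σ v • e ∈ V₁ := by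
      apply hker
      have : P e = ⟨e, heW⟩ := hPW ⟨e, heW⟩
      rw [map_sub, map_smul, this, h1, sub_self]
    apply hSρ
    have h3 : 0 ≤ σ v := h2 ▸ min_le_left _ _
    have h4 : 0 ≤ ‖σ‖ * (‖v‖ - ρ) := h2 ▸ min_le_right _ _
    have h5 : ρ ≤ ‖v‖ := by
      have := nonneg_of_mul_nonneg_right h4 hσ0
      linarith
    rcases min_choice (σ v) (‖σ‖ * (‖v‖ - ρ)) with h6 | h6
    · left
      rw [h2] at h6
      rw [← h6, zero_smul, sub_zero] at hv1
      exact subset_closure ⟨hv1, by simpa using h5⟩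
    · right
      rw [h2] at h6
      have h7 : ‖v‖ = ρ := by
        rcases mul_eq_zero.1 h6.symm with h8 | h8 <;> linarith
      exact ⟨⟨σ v, h3, v - σ v • e, hv1, by abel⟩, by simpa using h7⟩
  have hex : ∀ ε : ℝ, 0 < ε → ∃ u, α ≤ Φ u ∧ Φ u ≤ β ∧ ‖Φ' u‖ ≤ 2 * ε := by
    intro ε hε
    set C := (|β - α| + 1) / ε with hC
    have hC0 : 0 ≤ C := by positivity
    obtain ⟨M, hM⟩ : ∃ M, M = ‖P‖ * C + ‖σ‖ * ρ := ⟨_, rfl⟩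
    have hM0 : 0 ≤ M := by rw [hM]; positivity
    have : CompactSpace (Metric.closedBall (0 : W) M) :=
      isCompact_iff_compactSpace.1 (isCompact_closedBall _ _)
    have : Nonempty (Metric.closedBall (0 : W) M) := ⟨⟨0, Metric.mem_closedBall_self hM0⟩⟩
    refine silva_minimax Φ Φ' hderiv hcont
      (⟨fun w : Metric.closedBall (0 : W) M => ((w.1 : W) : V), by fun_prop⟩) α β C ε hε ?_
      (fun w => hWβ w.1) ?_ hC0
    · intro h hh
      obtain ⟨w, hw1, hw2⟩ := silva_link W P hPW σ ⟨e, heW⟩ hσe hσP he ρ C M hM hρ hC0 h hh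
      exact ⟨w, hαv _ hw1 hw2⟩
    · rw [hC, mul_div_cancel₀ _ hε.ne']
      linarith [le_abs_self (β - α)]
  have hpos : ∀ n : ℕ, (0 : ℝ) < 1 / ((n : ℝ) + 1) := fun n => by positivity
  choose u hu1 hu2 hu3 using fun n : ℕ => hex _ (hpos n)
  have hlim : Tendsto (fun n => ‖Φ' (u n)‖) atTop (nhds 0) := by
    refine squeeze_zero (fun _ => norm_nonneg _) hu3 ?_
    have := (tendsto_one_div_add_atTop_nhds_zero_nat (𝕜 := ℝ)).const_mul 2
    simpa using this
  obtain ⟨c, hc, φ, hφ, hφc⟩ := (isCompact_Icc (a := α) (b := β)).tendsto_subseq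
    (x := fun n => Φ (u n)) (fun n => ⟨hu1 n, hu2 n⟩)
  obtain ⟨ψ, hψ, v, hv⟩ := hPS c hc (u ∘ φ) hφc (hlim.comp hφ.tendsto_atTop)
  have h1 : Tendsto (fun n => Φ ((u ∘ φ ∘ ψ) n)) atTop (nhds (Φ v)) := (hΦc.tendsto v).comp hv
  have h2 : Tendsto (fun n => ‖Φ' ((u ∘ φ ∘ ψ) n)‖) atTop (nhds ‖Φ' v‖) :=
    ((hcont.norm).tendsto v).comp hv
  have h3 : Tendsto (fun n => ‖Φ' ((u ∘ φ ∘ ψ) n)‖) atTop (nhds 0) :=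
    hlim.comp (hφ.tendsto_atTop.comp hψ.tendsto_atTop)
  exact ⟨v, norm_eq_zero.1 (tendsto_nhds_unique h2 h3), ge_of_tendsto' h1 fun n => hu1 _,
    le_of_tendsto' h1 fun n => hu2 _⟩
end

section
/- Let X be a real Banach space, K a compact metric space, K₀ ⊆ K a closed subset, μ : K₀ → X continuous, and let E = {m ∈ C(K, X) : m|_{K₀} = μ}, a complete metric space under the uniform distance. Let f : X → ℝ be a C¹ functional, set c = inf_{m ∈ E} max_{s ∈ K} f(m(s)) and d = max_{s ∈ K₀} f(μ(s)), and suppose c > d. Then for every ε ∈ (0, c − d) and every p ∈ E such that max_{s ∈ K} f(p(s)) ≤ c + ε, there exists u ∈ X such that c − ε ≤ f(u) ≤ max_{s ∈ K} f(p(s)), dist(u, p(K)) ≤ √ε, and ‖f'(u)‖ ≤ √ε. -/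
open Set Filter

theorem ekeland_aux {E : Type*} [MetricSpace E] [CompleteSpace E] (F : E → ℝ) (k c : ℝ)
    (hk : 0 < k) (hF : ∀ m, c ≤ F m)
    (hcl : ∀ n, IsClosed {m | F m + k * dist m n ≤ F n}) (p : E) :
    ∃ q, F q + k * dist q p ≤ F p ∧ ∀ m, F q ≤ F m + k * dist m q := by
  have step : ∀ (n : ℕ) (x : E), ∃ y, F y + k * dist y x ≤ F x ∧
      ∀ m, F m + k * dist m x ≤ F x → F y ≤ F m + 1 / ((n : ℝ) + 1) := by
    intro n x
    have hne : (F '' {m | F m + k * dist m x ≤ F x}).Nonempty := ⟨F x, x, by simp, rfl⟩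
    have hbd : BddBelow (F '' {m | F m + k * dist m x ≤ F x}) :=
      ⟨c, by rintro _ ⟨m, _, rfl⟩; exact hF m⟩
    obtain ⟨_, ⟨y, hy, rfl⟩, hlt⟩ := Real.lt_sInf_add_pos hne
      (show (0:ℝ) < 1 / ((n : ℝ) + 1) by positivity)
    refine ⟨y, hy, fun m hm => ?_⟩
    have := csInf_le hbd ⟨m, hm, rfl⟩
    linarith
  choose g hg1 hg2 using step
  let x : ℕ → E := fun n => Nat.rec p (fun n y => g n y) n
  have hx : ∀ n, x (n + 1) = g n (x n) := fun n => rfl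
  have tr : ∀ a b e, F a + k * dist a b ≤ F b → F b + k * dist b e ≤ F e →
      F a + k * dist a e ≤ F e := by
    intro a b e h1 h2
    have := mul_le_mul_of_nonneg_left (dist_triangle a b e) hk.le
    linarith
  have hmono : ∀ n j, F (x (n + j)) + k * dist (x (n + j)) (x n) ≤ F (x n) := by
    intro n j
    induction j with
    | zero => simp
    | succ j ih =>
      refine tr _ (x (n + j)) _ ?_ ih
      exact hg1 (n + j) (x (n + j))
  have hanti : Antitone (fun n => F (x n)) := by
    refine antitone_nat_of_succ_le fun n => ?_
    have h := hmono n 1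
    have : 0 ≤ k * dist (x (n + 1)) (x n) := by positivity
    linarith
  have hlim := tendsto_atTop_ciInf hanti ⟨c, by rintro _ ⟨n, rfl⟩; exact hF _⟩
  have hcs : CauchySeq x := by
    have hc := hlim.cauchySeq
    rw [Metric.cauchySeq_iff'] at hc ⊢
    intro e he
    obtain ⟨N, hN⟩ := hc (k * e) (by positivity)
    refine ⟨N, fun n hn => ?_⟩
    have h1 := hN n hn
    obtain ⟨j, rfl⟩ := Nat.exists_eq_add_of_le hn
    have h2 := hmono N j
    rw [Real.dist_eq] at h1
    have h3 := (abs_lt.1 h1).1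
    have : k * dist (x (N + j)) (x N) < k * e := by linarith
    exact lt_of_mul_lt_mul_left this hk.le
  obtain ⟨q, hq⟩ := cauchySeq_tendsto_of_complete hcs
  have hqS : ∀ n, F q + k * dist q (x n) ≤ F (x n) := by
    intro n
    refine (hcl (x n)).mem_of_tendsto hq ?_
    filter_upwards [eventually_ge_atTop n] with m hm
    obtain ⟨j, rfl⟩ := Nat.exists_eq_add_of_le hm
    exact hmono n j
  refine ⟨q, hqS 0, fun m => ?_⟩
  by_contra! hm
  have h1 : ∀ n : ℕ, F q ≤ F m + 1 / ((n : ℝ) + 1) := by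
    intro n
    have a := hg2 n (x n) m (tr _ q _ hm.le (hqS n))
    have b := hqS (n + 1)
    rw [hx] at b
    have : 0 ≤ k * dist q (g n (x n)) := by positivity
    linarith
  have h2 : F q ≤ F m := by
    have := (tendsto_one_div_add_atTop_nhds_zero_nat (𝕜 := ℝ)).const_add (F m)
    rw [add_zero] at this
    exact ge_of_tendsto' this h1
  have : 0 ≤ k * dist m q := by positivity
  linarith



/-- **Minimax theorem via Ekeland's variational principle.**
Let `X` be a real Banach space, `K` a compact metric space, `K₀ ⊆ K` closed,
`μ : K₀ → X` continuous, and `E = {m ∈ C(K,X) : m|_{K₀} = μ}`. Let `f` be a `C¹`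
functional, `c = inf_{m ∈ E} max_{s ∈ K} f (m s)` and `d = max_{s ∈ K₀} f (μ s)`,
and suppose `c > d`. Then for every `ε ∈ (0, c - d)` and every `p ∈ E` with
`max_K f ∘ p ≤ c + ε` there is `u ∈ X` with `c - ε ≤ f u ≤ max_K f ∘ p`,
`dist (u, p '' K) ≤ √ε` and `‖f' u‖ ≤ √ε`. -/
theorem minimax_via_ekeland
    {X : Type*} [NormedAddCommGroup X] [NormedSpace ℝ X] [CompleteSpace X]
    {K : Type*} [MetricSpace K] [CompactSpace K]
    (K₀ : Set K) (hK₀closed : IsClosed K₀) (hK₀ne : K₀.Nonempty)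
    (μ : C(K₀, X))
    (f : X → ℝ) (f' : X → (X →L[ℝ] ℝ))
    (hderiv : ∀ x, HasFDerivAt f (f' x) x) (hcont : Continuous f')
    (c d : ℝ)
    (hc : c = sInf { a : ℝ | ∃ m : C(K, X), (∀ s : K₀, m ↑s = μ s) ∧
      a = ⨆ s : K, f (m s) })
    (hd : d = ⨆ s : K₀, f (μ s))
    (hcd : d < c)
    (ε : ℝ) (hε : ε ∈ Set.Ioo 0 (c - d))
    (p : C(K, X)) (hp : ∀ s : K₀, p ↑s = μ s)
    (hpmax : (⨆ s : K, f (p s)) ≤ c + ε) :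
    ∃ u : X, (c - ε ≤ f u ∧ f u ≤ ⨆ s : K, f (p s)) ∧
      Metric.infDist u (Set.range p) ≤ Real.sqrt ε ∧
      ‖f' u‖ ≤ Real.sqrt ε := by
  obtain ⟨hε0, hεd⟩ := hε
  have hk : 0 < Real.sqrt ε := Real.sqrt_pos.2 hε0
  set k := Real.sqrt ε with hkdef
  have hkk : k * k = ε := Real.mul_self_sqrt hε0.le
  have hfc : Continuous f := continuous_iff_continuousAt.2 fun x => (hderiv x).continuousAt
  obtain ⟨s₀, hs₀⟩ := hK₀ne
  have : Nonempty K := ⟨s₀⟩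
  have : CompactSpace K₀ := isCompact_iff_compactSpace.1 hK₀closed.isCompact
  have hbdd : ∀ m : C(K, X), BddAbove (range fun s => f (m s)) := fun m =>
    (isCompact_range (hfc.comp m.continuous)).bddAbove
  have hbdd0 : BddAbove (range fun s : K₀ => f (μ s)) :=
    (isCompact_range (hfc.comp μ.continuous)).bddAbove
  have hd0 : ∀ s : K₀, f (μ s) ≤ d := fun s => hd ▸ le_ciSup hbdd0 s
  have hcF : ∀ m : C(K, X), (∀ s : K₀, m ↑s = μ s) → c ≤ ⨆ s : K, f (m s) := by
    intro m hm
    rw [hc]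
    refine csInf_le ⟨f (μ ⟨s₀, hs₀⟩), ?_⟩ ⟨m, hm, rfl⟩
    rintro _ ⟨n, hn, rfl⟩
    rw [← hn]
    exact le_ciSup (hbdd n) s₀
  have hEcl : IsClosed {m : C(K, X) | ∀ s : K₀, m ↑s = μ s} := by
    simp only [ofPred_forall]
    exact isClosed_iInter fun s => isClosed_eq (continuous_eval_const _)
      continuous_const
  have : CompleteSpace {m : C(K, X) | ∀ s : K₀, m ↑s = μ s} := hEcl.completeSpace_coe
  obtain ⟨⟨q, hqE⟩, hq1, hq2⟩ := ekeland_aux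
    (E := {m : C(K, X) | ∀ s : K₀, m ↑s = μ s}) (fun m => ⨆ s : K, f (m.1 s)) k c hk
    (fun m => hcF m.1 m.2) (by
      intro n
      have : {m : {m : C(K, X) | ∀ s : K₀, m ↑s = μ s} |
          (⨆ s : K, f (m.1 s)) + k * dist m n ≤ ⨆ s : K, f (n.1 s)} =
          ⋂ s : K, {m | f (m.1 s) + k * dist m n ≤ ⨆ s : K, f (n.1 s)} := by
        ext m
        simp only [mem_ofPred_eq, mem_iInter, ← le_sub_iff_add_le]
        exact ciSup_le_iff (hbdd m.1)
      rw [this]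
      refine isClosed_iInter fun s => isClosed_le ?_ continuous_const
      have h1 : Continuous fun m : {m : C(K, X) | ∀ s : K₀, m ↑s = μ s} => f (m.1 s) :=
        hfc.comp ((continuous_eval_const s).comp continuous_subtype_val)
      exact h1.add (continuous_const.mul (continuous_id.dist continuous_const)))
    ⟨p, hp⟩
  simp only [Subtype.dist_eq] at hq1 hq2
  have hqE' : ∀ s : K₀, q ↑s = μ s := hqE
  have hcq := hcF q hqE'
  set M := ⨆ s : K, f (q s) with hM
  have hleM : ∀ s, f (q s) ≤ M := fun s => le_ciSup (hbdd q) s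
  have hdist : dist q p ≤ k := by
    have : k * dist q p ≤ k * k := by linarith
    exact le_of_mul_le_mul_left this hk
  have key : ∃ s, f (q s) = M ∧ ‖f' (q s)‖ ≤ k := by
    by_contra! hcon
    have hBcl : IsClosed {s | f (q s) = M} :=
      isClosed_eq (hfc.comp q.continuous) continuous_const
    obtain ⟨w, hw⟩ := exists_continuous_forall_mem_convex_of_local_const
      (t := fun s : K => {v : X | ‖v‖ ≤ 1 ∧ (s ∈ K₀ → v = 0) ∧
        (f (q s) = M → f' (q s) v < -k)}) (by
        intro s v hv u hu a b ha hb hab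
        obtain ⟨v1, v2, v3⟩ := hv
        obtain ⟨u1, u2, u3⟩ := hu
        refine ⟨?_, ?_, ?_⟩
        · have := (convex_closedBall (0 : X) 1) (mem_closedBall_zero_iff.2 v1)
            (mem_closedBall_zero_iff.2 u1) ha hb hab
          exact mem_closedBall_zero_iff.1 this
        · intro hs
          simp [v2 hs, u2 hs]
        · intro hs
          exact (convex_Iio (-k)).linear_preimage (f' (q s)).toLinearMap
            (v3 hs) (u3 hs) ha hb hab)
      (by
        intro s
        by_cases hs : f (q s) = M
        · obtain ⟨v, hv1, hv2⟩ : ∃ v, ‖v‖ ≤ 1 ∧ f' (q s) v < -k := by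
            obtain ⟨v, hv1, hv2⟩ := (f' (q s)).exists_lt_apply_of_lt_opNorm (hcon s hs)
            rw [Real.norm_eq_abs] at hv2
            rcases lt_abs.1 hv2 with h | h
            · exact ⟨-v, by simpa using hv1.le, by simpa using h⟩
            · exact ⟨v, hv1.le, by linarith⟩
          have hsK : s ∉ K₀ := by
            intro h
            have := hd0 ⟨s, h⟩
            rw [← hqE' ⟨s, h⟩] at this
            simp only at this
            linarith
          have hcv : Continuous fun s => f' (q s) v :=
            (hcont.comp q.continuous).clm_apply continuous_const
          refine ⟨v, ?_⟩
          filter_upwards [hK₀closed.isOpen_compl.mem_nhds hsK,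
            (isOpen_lt hcv continuous_const).mem_nhds hv2] with y hy1 hy2
          exact ⟨hv1, fun h => absurd h hy1, fun _ => hy2⟩
        · refine ⟨0, ?_⟩
          filter_upwards [hBcl.isOpen_compl.mem_nhds hs] with y hy
          exact ⟨by simp, fun _ => rfl, fun h => absurd h hy⟩)
    have hw1 : ‖w‖ ≤ 1 := (ContinuousMap.norm_le _ zero_le_one).2 fun s => (hw s).1
    -- approximate maximizers
    have hstep : ∀ n : ℕ, ∃ s : K, ∃ θ ∈ Icc (0:ℝ) (1 / ((n : ℝ) + 1)),
        M - k * (1 / ((n : ℝ) + 1)) ≤ f (q s + (1 / ((n : ℝ) + 1)) • w s) ∧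
        -k ≤ f' (q s + θ • w s) (w s) := by
      intro n
      set h : ℝ := 1 / ((n : ℝ) + 1) with hh
      have hpos : 0 < h := by positivity
      have hin : ∀ s : K₀, (q + h • w) ↑s = μ s := by
        intro s
        simp [(hw s).2.1 s.2, hqE' s]
      have h1 := hq2 ⟨q + h • w, hin⟩
      have h2 : dist (q + h • w) q ≤ h := by
        rw [dist_eq_norm, add_sub_cancel_left, norm_smul, Real.norm_of_nonneg hpos.le]
        nlinarith
      obtain ⟨s, hs⟩ := (isCompact_range
        (hfc.comp (q + h • w).continuous)).sSup_mem (range_nonempty _)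
      change f ((q + h • w) s) = ⨆ s : K, f ((q + h • w) s) at hs
      simp only at h1
      rw [← hs] at h1
      have h3 : M - k * h ≤ f (q s + h • w s) := by
        have := mul_le_mul_of_nonneg_left h2 hk.le
        simp only [ContinuousMap.add_apply, ContinuousMap.smul_apply] at h1
        linarith
      have hD : ∀ t : ℝ, HasDerivAt (fun t : ℝ => f (q s + t • w s))
          (f' (q s + t • w s) (w s)) t := by
        intro t
        have a : HasDerivAt (fun t : ℝ => q s + t • w s) (w s) t := by
          simpa using ((hasDerivAt_id t).smul_const (w s)).const_add (q s)
        exact (hderiv _).comp_hasDerivAt t a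
      obtain ⟨θ, hθ, he⟩ := exists_hasDerivAt_eq_slope (fun t : ℝ => f (q s + t • w s))
        (fun t => f' (q s + t • w s) (w s)) hpos
        (fun t _ => (hD t).continuousAt.continuousWithinAt) (fun t _ => hD t)
      refine ⟨s, θ, Ioo_subset_Icc_self hθ, h3, ?_⟩
      rw [he, le_div_iff₀ (by linarith)]
      have := hleM s
      simp only [zero_smul, add_zero]
      linarith
    choose s θ hθ hs1 hs2 using hstep
    obtain ⟨s', -, φ, hφ, hlim⟩ := isCompact_univ.tendsto_subseq (x := s) fun n => mem_univ _
    have hh0 : Tendsto (fun n => 1 / ((φ n : ℝ) + 1)) atTop (nhds 0) :=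
      (tendsto_one_div_add_atTop_nhds_zero_nat (𝕜 := ℝ)).comp hφ.tendsto_atTop
    have hθ0 : Tendsto (fun n => θ (φ n)) atTop (nhds 0) :=
      squeeze_zero (fun n => (hθ _).1) (fun n => (hθ _).2) hh0
    have hqs : Tendsto (fun n => q (s (φ n))) atTop (nhds (q s')) :=
      (q.continuous.tendsto s').comp hlim
    have hws : Tendsto (fun n => w (s (φ n))) atTop (nhds (w s')) :=
      (w.continuous.tendsto s').comp hlim
    have hA : M ≤ f (q s') := by
      have a := hqs.add (hh0.smul hws)
      rw [zero_smul, add_zero] at a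
      have b := (hfc.tendsto _).comp a
      have e := (hh0.const_mul k).const_sub M
      rw [mul_zero, sub_zero] at e
      exact le_of_tendsto_of_tendsto' e b fun n => hs1 (φ n)
    have hB : -k ≤ f' (q s') (w s') := by
      have a := hqs.add (hθ0.smul hws)
      rw [zero_smul, add_zero] at a
      have hj : Continuous fun z : X × X => f' z.1 z.2 :=
        (hcont.comp continuous_fst).clm_apply continuous_snd
      have b := (hj.tendsto (q s', w s')).comp (a.prodMk_nhds hws)
      exact ge_of_tendsto' b fun n => hs2 (φ n)
    have := (hw s').2.2 (le_antisymm (hleM s') hA)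
    linarith
  obtain ⟨s, hsM, hsn⟩ := key
  refine ⟨q s, ⟨by linarith, ?_⟩, ?_, hsn⟩
  · have : 0 ≤ k * dist q p := by positivity
    linarith
  · exact (Metric.infDist_le_dist_of_mem (mem_range_self s)).trans
      ((ContinuousMap.dist_apply_le_dist s).trans hdist)
end

section
/- Let X be a real Banach space, Q ⊆ X compact with relative boundary ∂Q ⊆ Q, S ⊆ X closed, and suppose S and ∂Q link, i.e. S ∩ ∂Q = ∅ and γ(Q) ∩ S ≠ ∅ for every γ ∈ E = {γ ∈ C(Q, X) : γ = id on ∂Q}. Let g ∈ E and let ε > 0 satisfy ε < dist(∂Q, S). Set A = {x ∈ Q : dist(g(x), S) < ε}, which is nonempty. Then for every continuous map k : Ā → X (Ā the closure of A in Q) such that k = g on the topological boundary of A in Q, we have k(Ā) ∩ S ≠ ∅. -/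
open Set Filter

/-- **Localized linking property.** Let `X` be a real Banach space, `Q ⊆ X`
compact with relative boundary `bQ ⊆ Q`, `S ⊆ X` closed, and suppose `S` and
`bQ` link. Let `g ∈ E = {γ ∈ C(Q,X) : γ = id on bQ}` and `0 < ε < dist(bQ, S)`.
Set `A = {x ∈ Q : dist (g x, S) < ε}`; then `A` is nonempty, and every
continuous map `k : Ā → X` agreeing with `g` on the topological boundary of
`A` in `Q` (which, `A` being open in `Q`, is `closure A \ A`) satisfies
`k (Ā) ∩ S ≠ ∅`. -/
theorem localized_linking
    {X : Type*} [NormedAddCommGroup X] [NormedSpace ℝ X] [CompleteSpace X]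
    (Q bQ S : Set X) (hQcompact : IsCompact Q) (hbQ : bQ ⊆ Q)
    (hSclosed : IsClosed S)
    -- `S` and `bQ` link
    (hdisj : S ∩ bQ = ∅)
    (hlink : ∀ γ : X → X, ContinuousOn γ Q → (∀ x ∈ bQ, γ x = x) →
      (γ '' Q ∩ S).Nonempty)
    -- `g ∈ E`
    (g : X → X) (hgcont : ContinuousOn g Q) (hgid : ∀ x ∈ bQ, g x = x)
    -- `0 < ε < dist(bQ, S)`
    (ε : ℝ) (hε : 0 < ε)
    (hεsep : ε < sInf { r : ℝ | ∃ a ∈ bQ, ∃ b ∈ S, r = dist a b }) :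
    ({ x ∈ Q | Metric.infDist (g x) S < ε } : Set X).Nonempty ∧
    ∀ k : X → X,
      ContinuousOn k (closure { x ∈ Q | Metric.infDist (g x) S < ε }) →
      (∀ x ∈ closure { x ∈ Q | Metric.infDist (g x) S < ε } \
          { x ∈ Q | Metric.infDist (g x) S < ε }, k x = g x) →
      (k '' closure { x ∈ Q | Metric.infDist (g x) S < ε } ∩ S).Nonempty := by
  classical
  have hmem : ∀ x ∈ Q, g x ∈ S → x ∈ { x ∈ Q | Metric.infDist (g x) S < ε } := by
    intro x hx hg
    refine ⟨hx, ?_⟩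
    rw [Metric.infDist_zero_of_mem hg]
    exact hε
  have hne : ({ x ∈ Q | Metric.infDist (g x) S < ε } : Set X).Nonempty := by
    obtain ⟨_, ⟨x, hx, rfl⟩, hs⟩ := hlink g hgcont hgid
    exact ⟨x, hmem x hx hs⟩
  have hSne : S.Nonempty := by
    obtain ⟨y, _, hs⟩ := hlink g hgcont hgid
    exact ⟨y, hs⟩
  have hb : ∀ x ∈ bQ, x ∉ { x ∈ Q | Metric.infDist (g x) S < ε } := by
    rintro x hx ⟨_, hlt⟩
    rw [hgid x hx, Metric.infDist_lt_iff hSne] at hlt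
    obtain ⟨y, hy, hxy⟩ := hlt
    have h1 : sInf { r : ℝ | ∃ a ∈ bQ, ∃ b ∈ S, r = dist a b } ≤ dist x y := by
      apply csInf_le
      · refine ⟨0, ?_⟩
        rintro r ⟨a, _, b, _, rfl⟩
        exact dist_nonneg
      · exact ⟨x, hx, y, hy, rfl⟩
    linarith
  refine ⟨hne, ?_⟩
  have hclosed : IsClosed (Q ∩ g ⁻¹' {y | ε ≤ Metric.infDist y S}) :=
    hgcont.preimage_isClosed_of_isClosed hQcompact.isClosed
      (isClosed_le continuous_const (Metric.continuous_infDist_pt S))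
  generalize hA : ({ x ∈ Q | Metric.infDist (g x) S < ε } : Set X) = A at *
  have hB : ∀ x, x ∈ Q ∩ g ⁻¹' {y | ε ≤ Metric.infDist y S} ↔ x ∈ Q ∧ x ∉ A := by
    intro x
    rw [← hA]
    simp only [mem_inter_iff, mem_preimage, mem_setOf_eq, not_and, not_lt]
    tauto
  intro k hk hkg
  let γ : X → X := fun x => if x ∈ A then k x else g x
  have h1 : ContinuousOn γ (closure A) := by
    refine hk.congr fun x hx => ?_
    by_cases h : x ∈ A
    · simp [γ, h]
    · simp [γ, h, hkg x ⟨hx, h⟩]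
  have h2 : ContinuousOn γ (Q ∩ g ⁻¹' {y | ε ≤ Metric.infDist y S}) := by
    refine (hgcont.mono inter_subset_left).congr fun x hx => ?_
    simp [γ, ((hB x).1 hx).2]
  have h3 : ContinuousOn γ Q := by
    refine (h1.union_of_isClosed h2 isClosed_closure hclosed).mono fun x hx => ?_
    by_cases h : x ∈ A
    · exact Or.inl (subset_closure h)
    · exact Or.inr ((hB x).2 ⟨hx, h⟩)
  obtain ⟨_, ⟨x, hx, rfl⟩, hs⟩ := hlink γ h3 (fun x hx => by simp [γ, hb x hx, hgid x hx])
  by_cases h : x ∈ A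
  · refine ⟨k x, ⟨x, subset_closure h, rfl⟩, ?_⟩
    simpa [γ, h] using hs
  · exact absurd (hmem x hx (by simpa [γ, h] using hs)) h
end

section
/- Let X be a real Banach space and Φ : X → ℝ a C¹ functional satisfying the Palais–Smale condition (P.S.). If Φ has two distinct local minima u₁ ≠ u₂ (or two distinct local maxima), then Φ possesses a third critical point: there exists u₃ ∈ X with u₃ ≠ u₁, u₃ ≠ u₂ and Φ'(u₃) = 0. -/
open Set Filter

lemma psEkeland {α : Type*} [MetricSpace α] [CompleteSpace α] (F : α → ℝ)
    (hF : LowerSemicontinuous F) (m : ℝ) (hm : ∀ x, m ≤ F x) (x0 : α) (ε : ℝ) (hε : 0 < ε) :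
    ∃ y, F y + ε * dist x0 y ≤ F x0 ∧ ∀ z, F y - ε * dist y z ≤ F z := by
  have step : ∀ (n : ℕ) (x : α), ∃ y, F y + ε * dist x y ≤ F x ∧
      ∀ z, F z + ε * dist x z ≤ F x → F y ≤ F z + (1/2:ℝ)^n := by
    intro n x
    have hne : (F '' {z | F z + ε * dist x z ≤ F x}).Nonempty := ⟨F x, x, by simp, rfl⟩
    have hbd : BddBelow (F '' {z | F z + ε * dist x z ≤ F x}) :=
      ⟨m, by rintro _ ⟨z, -, rfl⟩; exact hm z⟩
    obtain ⟨_, ⟨y, hy, rfl⟩, hlt⟩ := exists_lt_of_csInf_lt hne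
      (lt_add_of_pos_right _ (by positivity : (0:ℝ) < (1/2:ℝ)^n))
    refine ⟨y, hy, fun z hz => ?_⟩
    have := csInf_le hbd (mem_image_of_mem F hz)
    linarith
  choose g hg1 hg2 using step
  let x : ℕ → α := fun n => Nat.rec x0 (fun n y => g n y) n
  have hx0 : x 0 = x0 := rfl
  have hxs : ∀ n, x (n+1) = g n (x n) := fun n => rfl
  have hmono : ∀ n k, F (x (n+k)) + ε * dist (x n) (x (n+k)) ≤ F (x n) := by
    intro n k
    induction k with
    | zero => simp
    | succ k ih =>
      have h1 := hg1 (n+k) (x (n+k))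
      rw [← hxs] at h1
      have h2 := dist_triangle (x n) (x (n+k)) (x (n+k+1))
      have h3 := mul_le_mul_of_nonneg_left h2 hε.le
      change F (x (n+k+1)) + ε * dist (x n) (x (n+k+1)) ≤ F (x n)
      linarith
  have hanti : Antitone (fun n => F (x n)) := antitone_nat_of_succ_le fun n => by
    have := hmono n 1
    have h2 : 0 ≤ ε * dist (x n) (x (n+1)) := by positivity
    linarith
  have hlim := tendsto_atTop_ciInf hanti ⟨m, by rintro _ ⟨n, rfl⟩; exact hm _⟩
  set L := ⨅ n, F (x n)
  have hLle : ∀ n, L ≤ F (x n) := fun n => hanti.le_of_tendsto hlim n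
  have hcau : CauchySeq x := by
    refine cauchySeq_of_le_tendsto_0' (fun n => (F (x n) - L) / ε) ?_ ?_
    · intro n k hnk
      obtain ⟨k, rfl⟩ := Nat.exists_eq_add_of_le hnk
      rw [le_div_iff₀ hε]
      have := hmono n k
      have := hLle (n+k)
      linarith
    · have := (hlim.sub_const L).div_const ε
      simpa using this
  obtain ⟨y, hy⟩ := cauchySeq_tendsto_of_complete hcau
  have hyS : ∀ n, F y + ε * dist (x n) y ≤ F (x n) := by
    intro n
    have hl : LowerSemicontinuous (fun z => F z + ε * dist (x n) z) :=
      hF.add (Continuous.lowerSemicontinuous (by fun_prop))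
    have hc := hl.isClosed_preimage (F (x n))
    refine hc.mem_of_tendsto hy ?_
    filter_upwards [eventually_ge_atTop n] with k hk
    obtain ⟨k, rfl⟩ := Nat.exists_eq_add_of_le hk
    exact hmono n k
  refine ⟨y, hyS 0, fun z => ?_⟩
  by_contra! hz
  have hzS : ∀ n, F (x (n+1)) ≤ F z + (1/2:ℝ)^n := by
    intro n
    apply hg2
    have h2 := dist_triangle (x n) y z
    have h3 := mul_le_mul_of_nonneg_left h2 hε.le
    have := hyS n
    linarith
  have h1 : ∀ n, F y ≤ F z + (1/2:ℝ)^n := by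
    intro n
    have := hyS (n+1)
    have h2 : 0 ≤ ε * dist (x (n+1)) y := by positivity
    linarith [hzS n]
  have h2 : F y ≤ F z + 0 := ge_of_tendsto'
    ((tendsto_pow_atTop_nhds_zero_of_lt_one (by norm_num) (by norm_num)).const_add _) h1
  have h3 : 0 ≤ ε * dist y z := by positivity
  linarith

lemma psNorm {X : Type*} [NormedAddCommGroup X] [NormedSpace ℝ X] (f : X →L[ℝ] ℝ) (ε : ℝ)
    (hε : 0 ≤ ε) (h : ∀ v, ‖v‖ ≤ 1 → -ε ≤ f v) : ‖f‖ ≤ ε := by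
  refine ContinuousLinearMap.opNorm_le_of_unit_norm hε fun v hv => ?_
  rw [Real.norm_eq_abs, abs_le]
  have h1 := h v hv.le
  have h2 := h (-v) (by simp [hv])
  rw [map_neg] at h2
  constructor <;> linarith

lemma psDeriv {X : Type*} [NormedAddCommGroup X] [NormedSpace ℝ X] (Φ : X → ℝ)
    (f : X →L[ℝ] ℝ) (y : X) (hd : HasFDerivAt Φ f y) (ε : ℝ) (hε : 0 ≤ ε)
    (h : ∀ᶠ z in nhds y, Φ y - ε * dist y z ≤ Φ z) : ‖f‖ ≤ ε := by
  refine psNorm f ε hε fun v hv => ?_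
  have hl := (hd.hasLineDerivAt v).tendsto_slope_zero_right
  refine ge_of_tendsto hl ?_
  have ht : Tendsto (fun t : ℝ => y + t • v) (nhdsWithin 0 (Ioi 0)) (nhds y) := by
    have : Continuous (fun t : ℝ => y + t • v) := by fun_prop
    have := this.tendsto 0
    simp only [zero_smul, add_zero] at this
    exact this.mono_left nhdsWithin_le_nhds
  filter_upwards [ht.eventually h, self_mem_nhdsWithin] with t h1 h2
  have h2 : 0 < t := h2
  simp only [smul_eq_mul]
  rw [← div_eq_inv_mul, le_div_iff₀ h2]
  have h3 : dist y (y + t • v) ≤ t := by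
    rw [dist_self_add_right, norm_smul, Real.norm_eq_abs, abs_of_pos h2]
    nlinarith
  have := mul_le_mul_of_nonneg_left h3 hε
  linarith

lemma psSphere {X : Type*} [NormedAddCommGroup X] [NormedSpace ℝ X] [CompleteSpace X]
    (Φ : X → ℝ) (Φ' : X → (X →L[ℝ] ℝ))
    (hderiv : ∀ x, HasFDerivAt Φ (Φ' x) x) (hcont : Continuous Φ')
    (hPS : ∀ u : ℕ → X, (∃ M : ℝ, ∀ n, |Φ (u n)| ≤ M) →
      Tendsto (fun n => ‖Φ' (u n)‖) atTop (nhds 0) →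
      ∃ φ : ℕ → ℕ, StrictMono φ ∧ ∃ v : X, Tendsto (u ∘ φ) atTop (nhds v))
    (u : X) (r : ℝ) (hr : 0 < r) (hmin : ∀ x ∈ Metric.closedBall u (2*r), Φ u ≤ Φ x)
    (hno : ∀ x ∈ Metric.sphere u r, Φ' x ≠ 0) :
    ∃ b, Φ u < b ∧ ∀ x ∈ Metric.sphere u r, b ≤ Φ x := by
  by_contra! hcon
  have hΦc : Continuous Φ := continuous_iff_continuousAt.2 fun x => (hderiv x).continuousAt
  let e : ℕ → ℝ := fun n => r / 2 * (1 / ((n:ℝ) + 1))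
  have he0 : ∀ n, 0 < e n := fun n => by positivity
  have her : ∀ n, e n ≤ r / 2 := fun n => by
    have h1 : 1 / ((n:ℝ) + 1) ≤ 1 := by
      rw [div_le_one (by positivity)]; linarith [(Nat.cast_nonneg n : (0:ℝ) ≤ n)]
    have := mul_le_mul_of_nonneg_left h1 (by positivity : 0 ≤ r/2)
    simpa [e] using this
  have het : Tendsto e atTop (nhds 0) := by
    simpa [e] using (tendsto_one_div_add_atTop_nhds_zero_nat (𝕜 := ℝ)).const_mul (r/2)
  have key : ∀ n, ∃ y, |dist y u - r| ≤ e n ∧ ‖Φ' y‖ ≤ e n ∧ |Φ y| ≤ |Φ u| + r ^ 2 := by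
    intro n
    obtain ⟨x, hx, hxb⟩ := hcon (Φ u + e n * e n) (by have := he0 n; nlinarith)
    rw [Metric.mem_sphere] at hx
    have : CompleteSpace (Metric.closedBall u (2*r)) :=
      Metric.isClosed_closedBall.isComplete.completeSpace_coe
    obtain ⟨⟨y, hyb⟩, hy1, hy2⟩ := psEkeland (α := Metric.closedBall u (2*r)) (fun z => Φ z)
      (Continuous.lowerSemicontinuous (by fun_prop)) (Φ u) (fun z => hmin z z.2)
      ⟨x, by rw [Metric.mem_closedBall]; linarith⟩ (e n) (he0 n)
    simp only [Subtype.dist_eq] at hy1 hy2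
    have hymin := hmin y hyb
    have hxy : dist x y ≤ e n := by
      have : e n * dist x y ≤ e n * e n := by linarith
      exact le_of_mul_le_mul_left this (he0 n)
    have habs : |dist y u - r| ≤ e n := by
      rw [← hx]
      exact (abs_dist_sub_le y x u).trans (by rwa [dist_comm])
    refine ⟨y, habs, ?_, ?_⟩
    · refine psDeriv Φ _ y (hderiv y) _ (he0 n).le ?_
      have hyb' : y ∈ Metric.ball u (2*r) := by
        rw [Metric.mem_ball]
        have := (abs_le.1 habs).2
        linarith [her n]
      filter_upwards [Metric.isOpen_ball.mem_nhds hyb'] with z hz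
      exact hy2 ⟨z, Metric.ball_subset_closedBall hz⟩
    · have h0 : 0 ≤ e n * dist x y := mul_nonneg (he0 n).le dist_nonneg
      have h1 : e n * e n ≤ r ^ 2 := by nlinarith [her n, he0 n]
      rw [abs_le]
      constructor
      · nlinarith [neg_abs_le (Φ u)]
      · linarith [le_abs_self (Φ u)]
  choose y hy1 hy2 hy3 using key
  obtain ⟨φ, hφ, v, hv⟩ := hPS y ⟨_, hy3⟩
    (squeeze_zero (fun n => norm_nonneg _) hy2 het)
  have hev := het.comp hφ.tendsto_atTop
  refine hno v ?_ ?_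
  · rw [Metric.mem_sphere]
    have h1 : Tendsto (fun n => |dist ((y ∘ φ) n) u - r|) atTop (nhds |dist v u - r|) :=
      ((hv.dist tendsto_const_nhds).sub_const r).abs
    have h2 := squeeze_zero (fun n => abs_nonneg _) (fun n => hy1 (φ n)) hev
    have := abs_eq_zero.1 (tendsto_nhds_unique h1 h2)
    linarith
  · have h1 := ((hcont.tendsto v).comp hv).norm
    have h2 := squeeze_zero (fun n => norm_nonneg _) (fun n => hy2 (φ n)) hev
    exact norm_eq_zero.1 (tendsto_nhds_unique h1 h2)

/-- Ekeland on the path space: an almost-critical point on some path. -/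
lemma psPath {X : Type*} [NormedAddCommGroup X] [NormedSpace ℝ X] [CompleteSpace X]
    (Φ : X → ℝ) (Φ' : X → (X →L[ℝ] ℝ))
    (hderiv : ∀ x, HasFDerivAt Φ (Φ' x) x) (hcont : Continuous Φ')
    (u₁ u₂ : X) (b B : ℝ) (h1 : Φ u₁ < b) (h2 : Φ u₂ < b)
    (hb : ∀ γ : C(unitInterval, X), γ 0 = u₁ → γ 1 = u₂ → ∃ t, b ≤ Φ (γ t))
    (γ₀ : C(unitInterval, X)) (hγ0 : γ₀ 0 = u₁) (hγ1 : γ₀ 1 = u₂) (hB : ∀ t, Φ (γ₀ t) ≤ B)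
    (ε : ℝ) (hε : 0 < ε) :
    ∃ y, b ≤ Φ y ∧ Φ y ≤ B ∧ ‖Φ' y‖ ≤ 2 * ε := by
  have hΦc : Continuous Φ := continuous_iff_continuousAt.2 fun x => (hderiv x).continuousAt
  let S : Set C(unitInterval, X) := {γ | γ 0 = u₁ ∧ γ 1 = u₂}
  have hS : IsClosed S :=
    (isClosed_eq (continuous_eval_const 0) continuous_const).inter
      (isClosed_eq (continuous_eval_const 1) continuous_const)
  have : CompleteSpace S := hS.isComplete.completeSpace_coe
  let F : C(unitInterval, X) → ℝ := fun γ => ⨆ t, Φ (γ t)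
  have hbdd : ∀ γ : C(unitInterval, X), BddAbove (range fun t => Φ (γ t)) := fun γ =>
    (isCompact_range (by fun_prop)).bddAbove
  have hle : ∀ (γ : C(unitInterval, X)) t, Φ (γ t) ≤ F γ := fun γ t => le_ciSup (hbdd γ) t
  have hatt : ∀ γ : C(unitInterval, X), ∃ t, Φ (γ t) = F γ := by
    intro γ
    obtain ⟨t, -, ht⟩ := isCompact_univ.exists_isMaxOn (s := (univ : Set unitInterval))
      ⟨0, mem_univ _⟩ (f := fun t => Φ (γ t)) (by fun_prop)
    exact ⟨t, le_antisymm (hle γ t) (ciSup_le fun s => ht (mem_univ s))⟩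
  have hlsc : LowerSemicontinuous (fun γ : S => F γ) := by
    refine lowerSemicontinuous_ciSup (fun γ => hbdd γ) fun t => ?_
    refine Continuous.lowerSemicontinuous (hΦc.comp ?_)
    exact (continuous_eval_const t).comp continuous_subtype_val
  have hFb : ∀ γ : S, b ≤ F γ := fun γ => by
    obtain ⟨t, ht⟩ := hb γ γ.2.1 γ.2.2
    exact ht.trans (hle _ t)
  obtain ⟨⟨γ, hγ⟩, hE1, hE2⟩ := psEkeland (fun γ : S => F γ) hlsc b hFb ⟨γ₀, hγ0, hγ1⟩ ε hε
  simp only [Subtype.dist_eq] at hE1 hE2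
  have hγb : b ≤ F γ := hFb ⟨γ, hγ⟩
  have hγB : F γ ≤ B := by
    have h3 : F γ₀ ≤ B := ciSup_le hB
    have : 0 ≤ ε * dist γ₀ γ := by positivity
    linarith
  by_contra! hcon
  have hsel : ∀ t, Φ (γ t) = F γ → ∃ v, ‖v‖ ≤ 1 ∧ Φ' (γ t) v < -(2*ε) := by
    intro t ht
    by_contra! hv
    have := psNorm (Φ' (γ t)) (2*ε) (by positivity) hv
    have := hcon (γ t) (by linarith) (by linarith)
    linarith
  have hMc : IsClosed {t | Φ (γ t) = F γ} := isClosed_eq (by fun_prop) continuous_const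
  have hM0 : ∀ t, Φ (γ t) = F γ → t ≠ 0 ∧ t ≠ 1 := by
    intro t ht
    constructor <;> rintro rfl
    · rw [hγ.1] at ht; linarith
    · rw [hγ.2] at ht; linarith
  obtain ⟨v, hv⟩ := exists_continuous_forall_mem_convex_of_local_const
    (X := unitInterval) (E := X)
    (t := fun s => {w | ‖w‖ ≤ 1 ∧ (Φ (γ s) = F γ → Φ' (γ s) w < -(2*ε)) ∧
      ((s = 0 ∨ s = 1) → w = 0)})
    (by
      rintro s w ⟨hw1, hw2, hw3⟩ w' ⟨hw1', hw2', hw3'⟩ a c ha hc hac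
      refine ⟨?_, fun hs => ?_, fun hs => ?_⟩
      · have := convex_closedBall (0:X) 1 (by simpa using hw1) (by simpa using hw1') ha hc hac
        simpa using this
      · have hh1 := hw2 hs
        have hh2 := hw2' hs
        exact (convex_halfSpace_lt (Φ' (γ s)).isLinear (-(2*ε))) hh1 hh2 ha hc hac
      · simp [hw3 hs, hw3' hs])
    (by
      intro s
      by_cases hs : Φ (γ s) = F γ
      · obtain ⟨w, hw1, hw2⟩ := hsel s hs
        refine ⟨w, ?_⟩
        have hc : Continuous fun t => Φ' (γ t) w := by fun_prop
        filter_upwards [hc.continuousAt.eventually_lt continuousAt_const hw2,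
          isOpen_ne.mem_nhds (hM0 s hs).1, isOpen_ne.mem_nhds (hM0 s hs).2] with t ht1 ht2 ht3
        exact ⟨hw1, fun _ => ht1, fun h => (h.elim ht2 ht3).elim⟩
      · refine ⟨0, ?_⟩
        filter_upwards [hMc.isOpen_compl.mem_nhds hs] with t ht
        exact ⟨by simp, fun h => (ht h).elim, fun _ => rfl⟩)
  simp only [Set.mem_ofPred_eq] at hv
  have hvn : ‖v‖ ≤ 1 := (ContinuousMap.norm_le _ zero_le_one).2 fun t => (hv t).1
  let h : ℕ → ℝ := fun n => 1 / ((n:ℝ) + 1)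
  have hh0 : ∀ n, 0 < h n := fun n => by positivity
  have hht : Tendsto h atTop (nhds 0) := tendsto_one_div_add_atTop_nhds_zero_nat (𝕜 := ℝ)
  have key : ∀ n, ∃ t : unitInterval, ∃ θ : ℝ, 0 < θ ∧ θ < h n ∧
      F γ - ε * h n ≤ Φ (γ t + h n • v t) ∧ -ε ≤ Φ' (γ t + θ • v t) (v t) := by
    intro n
    have hmem : γ + h n • v ∈ S := by
      constructor
      · simp [(hv 0).2.2 (Or.inl rfl), hγ.1]
      · simp [(hv 1).2.2 (Or.inr rfl), hγ.2]
    have hE := hE2 ⟨_, hmem⟩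
    have hd : dist γ (γ + h n • v) ≤ h n := by
      rw [dist_self_add_right, norm_smul, Real.norm_eq_abs, abs_of_pos (hh0 n)]
      nlinarith [hh0 n]
    have hd' := mul_le_mul_of_nonneg_left hd hε.le
    obtain ⟨t, ht⟩ := hatt (γ + h n • v)
    simp only [ContinuousMap.add_apply, ContinuousMap.smul_apply] at ht
    have hder : ∀ s : ℝ, HasDerivAt (fun s : ℝ => Φ (γ t + s • v t))
        (Φ' (γ t + s • v t) (v t)) s := by
      intro s
      have hl : HasDerivAt (fun s : ℝ => γ t + s • v t) (v t) s := by
        simpa using ((hasDerivAt_id s).smul_const (v t)).const_add (γ t)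
      exact (hderiv _).comp_hasDerivAt s hl
    obtain ⟨θ, hθ, hθe⟩ := exists_hasDerivAt_eq_slope (fun s : ℝ => Φ (γ t + s • v t))
      (fun s => Φ' (γ t + s • v t) (v t)) (hh0 n)
      (fun s _ => (hder s).continuousAt.continuousWithinAt) (fun s _ => hder s)
    refine ⟨t, θ, hθ.1, hθ.2, by linarith, ?_⟩
    rw [hθe, le_div_iff₀ (by linarith [hh0 n])]
    have := hle γ t
    simp only [zero_smul, add_zero, sub_zero]
    linarith
  choose t θ hθ0 hθ1 hk1 hk2 using key
  obtain ⟨s, φ, hφ, hs⟩ := CompactSpace.tendsto_subseq t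
  have hhφ := hht.comp hφ.tendsto_atTop
  have hθφ : Tendsto (θ ∘ φ) atTop (nhds 0) :=
    squeeze_zero (fun n => (hθ0 _).le) (fun n => (hθ1 (φ n)).le) hhφ
  have hγs := (γ.continuous.tendsto s).comp hs
  have hvs := (v.continuous.tendsto s).comp hs
  have e1 : F γ ≤ Φ (γ s) := by
    have a1 := (hΦc.tendsto _).comp (hγs.add (hhφ.smul hvs))
    have a2 := (hhφ.const_mul ε).const_sub (F γ)
    have := le_of_tendsto_of_tendsto' a2 a1 (fun n => hk1 (φ n))
    simpa using this
  have e2 : -ε ≤ Φ' (γ s) (v s) := by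
    have a1 := ((isBoundedBilinearMap_apply (𝕜 := ℝ) (E := X) (F := ℝ)).continuous.tendsto
      (_, _)).comp (((hcont.tendsto _).comp (hγs.add (hθφ.smul hvs))).prodMk_nhds hvs)
    have := ge_of_tendsto' a1 (fun n => hk2 (φ n))
    simpa using this
  have := (hv s).2.1 (le_antisymm (hle γ s) e1)
  linarith

lemma psMin {X : Type*} [NormedAddCommGroup X] [NormedSpace ℝ X] [CompleteSpace X]
    (Φ : X → ℝ) (Φ' : X → (X →L[ℝ] ℝ))
    (hderiv : ∀ x, HasFDerivAt Φ (Φ' x) x) (hcont : Continuous Φ')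
    (hPS : ∀ u : ℕ → X, (∃ M : ℝ, ∀ n, |Φ (u n)| ≤ M) →
      Tendsto (fun n => ‖Φ' (u n)‖) atTop (nhds 0) →
      ∃ φ : ℕ → ℕ, StrictMono φ ∧ ∃ v : X, Tendsto (u ∘ φ) atTop (nhds v))
    (u₁ u₂ : X) (hne : u₁ ≠ u₂) (hmin : IsLocalMin Φ u₁) (hle : Φ u₂ ≤ Φ u₁) :
    ∃ u₃ : X, u₃ ≠ u₁ ∧ u₃ ≠ u₂ ∧ Φ' u₃ = 0 := by
  by_contra! hno
  have hΦc : Continuous Φ := continuous_iff_continuousAt.2 fun x => (hderiv x).continuousAt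
  obtain ⟨R, hR, hRm⟩ := Metric.eventually_nhds_iff_ball.1 hmin
  have hd : 0 < dist u₂ u₁ := dist_pos.2 hne.symm
  obtain ⟨r, hr, hrR, hrd⟩ : ∃ r, 0 < r ∧ 2 * r < R ∧ r < dist u₂ u₁ := by
    refine ⟨min R (dist u₂ u₁) / 3, by positivity, ?_, ?_⟩
    · linarith [min_le_left R (dist u₂ u₁)]
    · linarith [min_le_right R (dist u₂ u₁)]
  obtain ⟨b, hb, hbs⟩ := psSphere Φ Φ' hderiv hcont hPS u₁ r hr
    (fun x hx => hRm x (Metric.closedBall_subset_ball hrR hx))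
    (fun x hx => by
      rw [Metric.mem_sphere] at hx
      refine hno x ?_ ?_
      · rintro rfl; simp at hx; linarith
      · rintro rfl; linarith)
  let γ₀ : C(unitInterval, X) := ⟨fun t => u₁ + (t:ℝ) • (u₂ - u₁), by fun_prop⟩
  obtain ⟨B, hB⟩ := (isCompact_range (f := fun t => Φ (γ₀ t)) (by fun_prop)).bddAbove
  have key := fun n : ℕ => psPath Φ Φ' hderiv hcont u₁ u₂ b B hb (by linarith)
    (by
      intro γ h0 h1
      have hc : Continuous fun t => dist (γ t) u₁ := by fun_prop
      obtain ⟨t, ht⟩ := mem_range_of_exists_le_of_exists_ge hc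
        ⟨0, show dist (γ 0) u₁ ≤ r by rw [h0]; simp [hr.le]⟩
        ⟨1, show r ≤ dist (γ 1) u₁ by rw [h1]; exact hrd.le⟩
      exact ⟨t, hbs _ ht⟩)
    γ₀ (by simp [γ₀]) (by simp [γ₀]) (fun t => hB ⟨t, rfl⟩) (1 / ((n:ℝ)+1)) (by positivity)
  choose y hy1 hy2 hy3 using key
  have het : Tendsto (fun n : ℕ => 2 * (1 / ((n:ℝ)+1))) atTop (nhds 0) := by
    simpa using (tendsto_one_div_add_atTop_nhds_zero_nat (𝕜 := ℝ)).const_mul 2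
  have hy0 := squeeze_zero (fun n => norm_nonneg _) hy3 het
  obtain ⟨φ, hφ, v, hv⟩ := hPS y ⟨max |b| |B|, fun n => abs_le_max_abs_abs (hy1 n) (hy2 n)⟩ hy0
  have hvb : b ≤ Φ v := ge_of_tendsto' ((hΦc.tendsto v).comp hv) fun n => hy1 (φ n)
  refine hno v ?_ ?_ ?_
  · rintro rfl; linarith
  · rintro rfl; linarith
  · exact norm_eq_zero.1 (tendsto_nhds_unique ((hcont.tendsto v).comp hv).norm
      (hy0.comp hφ.tendsto_atTop))

lemma psMin2 {X : Type*} [NormedAddCommGroup X] [NormedSpace ℝ X] [CompleteSpace X]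
    (Φ : X → ℝ) (Φ' : X → (X →L[ℝ] ℝ))
    (hderiv : ∀ x, HasFDerivAt Φ (Φ' x) x) (hcont : Continuous Φ')
    (hPS : ∀ u : ℕ → X, (∃ M : ℝ, ∀ n, |Φ (u n)| ≤ M) →
      Tendsto (fun n => ‖Φ' (u n)‖) atTop (nhds 0) →
      ∃ φ : ℕ → ℕ, StrictMono φ ∧ ∃ v : X, Tendsto (u ∘ φ) atTop (nhds v))
    (u₁ u₂ : X) (hne : u₁ ≠ u₂) (h1 : IsLocalMin Φ u₁) (h2 : IsLocalMin Φ u₂) :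
    ∃ u₃ : X, u₃ ≠ u₁ ∧ u₃ ≠ u₂ ∧ Φ' u₃ = 0 := by
  rcases le_total (Φ u₂) (Φ u₁) with h | h
  · exact psMin Φ Φ' hderiv hcont hPS u₁ u₂ hne h1 h
  · obtain ⟨u, a, b, c⟩ := psMin Φ Φ' hderiv hcont hPS u₂ u₁ hne.symm h2 h
    exact ⟨u, b, a, c⟩



/-- **Pucci–Serrin three critical points theorem.**
Let `X` be a real Banach space and `Φ : X → ℝ` a `C¹` functional satisfying the
Palais–Smale condition. If `Φ` has two distinct local minima (or two distinct
local maxima), then `Φ` possesses a third critical point. -/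
theorem pucci_serrin_three_critical_points
    {X : Type*} [NormedAddCommGroup X] [NormedSpace ℝ X] [CompleteSpace X]
    (Φ : X → ℝ) (Φ' : X → (X →L[ℝ] ℝ))
    (hderiv : ∀ x, HasFDerivAt Φ (Φ' x) x) (hcont : Continuous Φ')
    -- Palais–Smale condition
    (hPS : ∀ u : ℕ → X, (∃ M : ℝ, ∀ n, |Φ (u n)| ≤ M) →
      Tendsto (fun n => ‖Φ' (u n)‖) atTop (nhds 0) →
      ∃ φ : ℕ → ℕ, StrictMono φ ∧ ∃ v : X, Tendsto (u ∘ φ) atTop (nhds v))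
    (u₁ u₂ : X) (hne : u₁ ≠ u₂)
    (hextrema : (IsLocalMin Φ u₁ ∧ IsLocalMin Φ u₂) ∨
      (IsLocalMax Φ u₁ ∧ IsLocalMax Φ u₂)) :
    ∃ u₃ : X, u₃ ≠ u₁ ∧ u₃ ≠ u₂ ∧ Φ' u₃ = 0 := by
  rcases hextrema with ⟨h1, h2⟩ | ⟨h1, h2⟩
  · exact psMin2 Φ Φ' hderiv hcont hPS u₁ u₂ hne h1 h2
  · obtain ⟨u, a, b, c⟩ := psMin2 (fun x => - Φ x) (fun x => - Φ' x)
      (fun x => (hderiv x).neg) hcont.neg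
      (by
        intro u hM ht
        simp only [abs_neg, norm_neg] at hM ht
        exact hPS u hM ht) u₁ u₂ hne h1.neg h2.neg
    exact ⟨u, a, b, neg_eq_zero.1 c⟩
end

section
/- Let V = V₁ ⊕ V₂ be a real Banach space decomposed as a topological direct sum of two closed subspaces with dim V₂ < ∞, and let R > 0. Set S = V₁, Q = {u ∈ V₂ : ‖u‖ ≤ R}, and ∂Q = {u ∈ V₂ : ‖u‖ = R}. Then S and ∂Q link: S ∩ ∂Q = ∅, and for every continuous map γ : V → V with γ(x) = x for all x ∈ ∂Q, one has γ(Q) ∩ S ≠ ∅. -/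
open Set Filter

/-- A small Lipschitz perturbation of the identity, vanishing on the sphere, is a bijection of the
closed ball. -/
theorem aux_bij {E : Type*} [NormedAddCommGroup E] [NormedSpace ℝ E] [CompleteSpace E]
    (g : E → E) (K L t : ℝ) (hK : 0 < K) (hL : 0 ≤ L)
    (hg : ∀ x y, ‖x‖ ≤ K → ‖y‖ ≤ K → ‖g x - g y‖ ≤ L * ‖x - y‖)
    (hg0 : ∀ x, ‖x‖ = K → g x = 0) (ht : 0 ≤ t) (htL : t * (2 * L) < 1) :
    InjOn (fun x => x + t • g x) (Metric.closedBall 0 K) ∧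
    (fun x => x + t • g x) '' (Metric.closedBall 0 K) = Metric.closedBall 0 K := by
  classical
  let G : E → E := fun x => if ‖x‖ ≤ K then g x else 0
  have hGin : ∀ x, ‖x‖ ≤ K → G x = g x := fun x hx => if_pos hx
  have hGout : ∀ x, ¬ ‖x‖ ≤ K → G x = 0 := fun x hx => if_neg hx
  have key : ∀ x y, ‖x‖ ≤ K → ¬ ‖y‖ ≤ K → ‖g x‖ ≤ 2 * L * ‖x - y‖ := by
    intro x y hx hy
    push Not at hy
    have hy0 : 0 < ‖y‖ := hK.trans hy
    have hz : ‖(K / ‖y‖) • y‖ = K := by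
      rw [norm_smul, Real.norm_of_nonneg (by positivity)]
      field_simp
    have h1 := hg x _ hx hz.le
    rw [hg0 _ hz, sub_zero] at h1
    have h2 : ‖y - (K / ‖y‖) • y‖ = ‖y‖ - K := by
      have : y - (K / ‖y‖) • y = (1 - K / ‖y‖) • y := by rw [sub_smul, one_smul]
      rw [this, norm_smul, Real.norm_of_nonneg]
      · field_simp
      · rw [sub_nonneg, div_le_one hy0]; exact hy.le
    have h3 : ‖y‖ - ‖x‖ ≤ ‖x - y‖ := by
      rw [norm_sub_rev]; exact norm_sub_norm_le y x
    have h4 : ‖x - (K / ‖y‖) • y‖ ≤ 2 * ‖x - y‖ := by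
      calc ‖x - (K / ‖y‖) • y‖ ≤ ‖x - y‖ + ‖y - (K / ‖y‖) • y‖ := norm_sub_le_norm_sub_add_norm_sub _ _ _
        _ ≤ 2 * ‖x - y‖ := by rw [h2]; linarith
    nlinarith
  have hGL : ∀ x y, ‖G x - G y‖ ≤ 2 * L * ‖x - y‖ := by
    intro x y
    by_cases hx : ‖x‖ ≤ K <;> by_cases hy : ‖y‖ ≤ K
    · rw [hGin x hx, hGin y hy]
      have := hg x y hx hy
      have := mul_nonneg hL (norm_nonneg (x - y))
      linarith
    · rw [hGin x hx, hGout y hy, sub_zero]; exact key x y hx hy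
    · rw [hGin y hy, hGout x hx, zero_sub, norm_neg, norm_sub_rev]; exact key y x hy hx
    · rw [hGout y hy, hGout x hx, sub_zero, norm_zero]; positivity
  have hinj : ∀ x y, x + t • G x = y + t • G y → x = y := by
    intro x y h
    have h1 : x - y = t • (G y - G x) := by
      rw [smul_sub, sub_eq_sub_iff_add_eq_add, h, add_comm]
    have h2 : ‖x - y‖ ≤ t * (2 * L) * ‖x - y‖ := by
      calc ‖x - y‖ = t * ‖G y - G x‖ := by rw [h1, norm_smul, Real.norm_of_nonneg ht]
        _ ≤ t * (2 * L * ‖y - x‖) := mul_le_mul_of_nonneg_left (hGL y x) ht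
        _ = _ := by rw [norm_sub_rev]; ring
    have h3 : ‖x - y‖ = 0 := by
      have := norm_nonneg (x - y)
      nlinarith
    exact sub_eq_zero.1 (norm_eq_zero.1 h3)
  have hsurj : ∀ y, ∃ x, x + t • G x = y := by
    intro y
    have hc : ContractingWith ⟨t * (2 * L), by positivity⟩ (fun x => y - t • G x) := by
      refine ⟨htL, LipschitzWith.of_dist_le_mul fun a b => ?_⟩
      rw [dist_eq_norm, dist_eq_norm]
      calc ‖y - t • G a - (y - t • G b)‖ = t * ‖G b - G a‖ := by
            rw [sub_sub_sub_cancel_left, ← smul_sub, norm_smul, Real.norm_of_nonneg ht]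
        _ ≤ t * (2 * L * ‖b - a‖) := mul_le_mul_of_nonneg_left (hGL b a) ht
        _ = t * (2 * L) * ‖a - b‖ := by rw [norm_sub_rev]; ring
    obtain ⟨x, hx, -⟩ := hc.exists_fixedPoint y (edist_ne_top _ _)
    refine ⟨x, ?_⟩
    have : y - t • G x = x := hx
    rw [← sub_eq_iff_eq_add.1 this]
  constructor
  · intro x hx y hy h
    rw [mem_closedBall_zero_iff] at hx hy
    apply hinj
    rw [hGin x hx, hGin y hy]; exact h
  · ext y
    simp only [mem_image, mem_closedBall_zero_iff]
    constructor
    · rintro ⟨x, hx, rfl⟩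
      by_contra hy
      have : x = x + t • g x := by
        apply hinj
        rw [hGout _ hy, hGin _ hx, smul_zero, add_zero]
      rw [← this] at hy
      exact hy hx
    · intro hy
      obtain ⟨x, hx⟩ := hsurj y
      by_cases hxK : ‖x‖ ≤ K
      · exact ⟨x, hxK, by rw [← hGin x hxK]; exact hx⟩
      · rw [hGout x hxK, smul_zero, add_zero] at hx
        exact absurd (hx ▸ hy) hxK

/-- Interpolation: `det (1 + A)` is a fixed affine combination of `det (1 + t i • A)`. -/
theorem aux_interp_s11 {E : Type*} [NormedAddCommGroup E] [NormedSpace ℝ E] [FiniteDimensional ℝ E]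
    (ε : ℝ) (hε : 0 < ε) :
    ∃ (s : Finset ℕ) (t c : ℕ → ℝ), (∀ i, 0 ≤ t i ∧ t i ≤ ε) ∧ ∑ i ∈ s, c i = 1 ∧
      ∀ A : E →L[ℝ] E, (ContinuousLinearMap.id ℝ E + A).det
        = ∑ i ∈ s, c i * (ContinuousLinearMap.id ℝ E + t i • A).det := by
  classical
  let n := Module.finrank ℝ E
  let s := Finset.range (n + 1)
  let t : ℕ → ℝ := fun i => ε / (i + 1)
  have hinj : Set.InjOn t s := by
    intro i _ j _ h
    have h' : ε / ((i : ℝ) + 1) = ε / (j + 1) := h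
    field_simp at h'
    exact_mod_cast (by linarith : (i : ℝ) = j)
  have hint : ∀ p : Polynomial ℝ, p.natDegree ≤ n →
      p.eval 1 = ∑ i ∈ s, (Lagrange.basis s t i).eval 1 * p.eval (t i) := by
    intro p hp
    have hd : p.degree < (s.card : ℕ) := by
      refine lt_of_le_of_lt Polynomial.degree_le_natDegree ?_
      simp only [s, Finset.card_range]
      exact_mod_cast Nat.lt_succ_of_le hp
    conv_lhs => rw [Lagrange.eq_interpolate hinj hd]
    rw [Lagrange.interpolate_apply, Polynomial.eval_finsetSum]
    refine Finset.sum_congr rfl fun i _ => ?_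
    rw [Polynomial.eval_mul, Polynomial.eval_C, mul_comm]
  refine ⟨s, t, fun i => (Lagrange.basis s t i).eval 1, ?_, ?_, ?_⟩
  · intro i
    refine ⟨by positivity, ?_⟩
    exact div_le_self hε.le (by linarith [(Nat.cast_nonneg i : (0 : ℝ) ≤ i)])
  · have := hint 1 (by simp)
    simpa using this.symm
  · intro A
    let b := Module.finBasis ℝ E
    let M := LinearMap.toMatrix b b (A : E →ₗ[ℝ] E)
    let p : Polynomial ℝ :=
      Matrix.det ((Polynomial.X : Polynomial ℝ) • M.map Polynomial.C
        + (1 : Matrix _ _ ℝ).map Polynomial.C)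
    have hp : p.natDegree ≤ n := by
      have := Polynomial.natDegree_det_X_add_C_le M 1
      simpa [p, n] using this
    have hev : ∀ u : ℝ, p.eval u = (ContinuousLinearMap.id ℝ E + u • A).det := by
      intro u
      have h1 : (ContinuousLinearMap.id ℝ E + u • A).det
          = (LinearMap.toMatrix b b (LinearMap.id + u • (A : E →ₗ[ℝ] E))).det := by
        rw [LinearMap.det_toMatrix]; rfl
      rw [h1, map_add, map_smul, LinearMap.toMatrix_id]
      simp only [p]
      rw [← Polynomial.coe_evalRingHom, RingHom.map_det]
      congr 1
      ext i j
      simp [Matrix.map_apply, Matrix.add_apply, M, Matrix.one_apply, add_comm]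
      split_ifs <;> simp [mul_comm]
    have := hint p hp
    simp only [hev, one_smul] at this
    exact this

/-- No `C¹` retraction onto the sphere. -/
theorem aux_noretract {E : Type*} [NormedAddCommGroup E] [InnerProductSpace ℝ E]
    [FiniteDimensional ℝ E] (r : E → E) (hr : ContDiff ℝ 1 r) (K : ℝ) (hK : 0 < K)
    (hn : ∀ x, ‖r x‖ = K) (hid : ∀ x, ‖x‖ = K → r x = x) : False := by
  let _ : MeasurableSpace E := borel E
  have : BorelSpace E := ⟨rfl⟩
  let μ : MeasureTheory.Measure E := MeasureTheory.volume
  let g : E → E := fun x => r x - x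
  have hgc : ContDiff ℝ 1 g := hr.sub contDiff_id
  have hgd : Differentiable ℝ g := hgc.differentiable one_ne_zero
  have hfc : Continuous (fderiv ℝ g) := hgc.continuous_fderiv one_ne_zero
  let B : Set E := Metric.closedBall 0 K
  have hB : IsCompact B := isCompact_closedBall 0 K
  obtain ⟨L, hL0, hL⟩ : ∃ L : ℝ, 0 < L ∧ ∀ x ∈ B, ‖fderiv ℝ g x‖ ≤ L := by
    obtain ⟨C, hC⟩ := hB.exists_bound_of_continuousOn hfc.continuousOn
    exact ⟨max C 1, by positivity, fun x hx => (hC x hx).trans (le_max_left _ _)⟩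
  have hlip : ∀ x y, ‖x‖ ≤ K → ‖y‖ ≤ K → ‖g x - g y‖ ≤ L * ‖x - y‖ := by
    intro x y hx hy
    exact Convex.norm_image_sub_le_of_norm_fderiv_le (s := B) (fun z _ => hgd z) hL
      (convex_closedBall 0 K) (by simpa [B] using hy) (by simpa [B] using hx)
  obtain ⟨η, hη, hdet⟩ : ∃ η > 0, ∀ A : E →L[ℝ] E, ‖A‖ < η →
      0 < (ContinuousLinearMap.id ℝ E + A).det := by
    have hc : Continuous fun A : E →L[ℝ] E => (ContinuousLinearMap.id ℝ E + A).det :=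
      ContinuousLinearMap.continuous_det.comp (continuous_const.add continuous_id)
    have h0 : 0 < (ContinuousLinearMap.id ℝ E + 0).det := by
      rw [add_zero]
      have : (ContinuousLinearMap.id ℝ E).det = 1 := LinearMap.det_id
      rw [this]; exact one_pos
    obtain ⟨η, hη, h⟩ := Metric.eventually_nhds_iff.1
      (hc.continuousAt.eventually (lt_mem_nhds h0))
    exact ⟨η, hη, fun A hA => h (by simpa using hA)⟩
  let ε := min (1 / (4 * L)) (η / (2 * L))
  have hε : 0 < ε := by positivity
  obtain ⟨s, t, c, ht, hc1, hc⟩ := aux_interp_s11 (E := E) ε hε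
  have hcont : ∀ u : ℝ, Continuous fun x => (ContinuousLinearMap.id ℝ E + u • fderiv ℝ g x).det :=
    fun u => ContinuousLinearMap.continuous_det.comp (continuous_const.add (hfc.const_smul u))
  have hvol : ∀ i, ∫ x in B, (ContinuousLinearMap.id ℝ E + t i • fderiv ℝ g x).det ∂μ
      = μ.real B := by
    intro i
    obtain ⟨h0, h1⟩ := ht i
    have h2 : t i * (2 * L) < 1 := by
      have : t i ≤ 1 / (4 * L) := h1.trans (min_le_left _ _)
      calc t i * (2 * L) ≤ 1 / (4 * L) * (2 * L) := by gcongr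
        _ < 1 := by field_simp; norm_num
    have h3 : t i * L < η := by
      have : t i ≤ η / (2 * L) := h1.trans (min_le_right _ _)
      calc t i * L ≤ η / (2 * L) * L := by gcongr
        _ < η := by field_simp; norm_num
    obtain ⟨hi, him⟩ := aux_bij g K L (t i) hK hL0.le hlip
      (fun x hx => by simp [g, hid x hx]) h0 h2
    have hcv := MeasureTheory.integral_image_eq_integral_abs_det_fderiv_smul μ
      (s := B) (f := fun x => x + t i • g x)
      (f' := fun x => ContinuousLinearMap.id ℝ E + t i • fderiv ℝ g x)
      hB.measurableSet
      (fun x _ => ((hasFDerivAt_id x).add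
        ((hgd x).hasFDerivAt.const_smul (t i))).hasFDerivWithinAt) hi (fun _ => (1 : ℝ))
    rw [him] at hcv
    have : ∫ x in B, (ContinuousLinearMap.id ℝ E + t i • fderiv ℝ g x).det ∂μ =
        ∫ x in B, |(ContinuousLinearMap.id ℝ E + t i • fderiv ℝ g x).det| • (1 : ℝ) ∂μ := by
      refine MeasureTheory.setIntegral_congr_fun hB.measurableSet fun x hx => ?_
      have : 0 < (ContinuousLinearMap.id ℝ E + t i • fderiv ℝ g x).det := by
        apply hdet
        rw [norm_smul, Real.norm_of_nonneg h0]
        exact lt_of_le_of_lt (mul_le_mul_of_nonneg_left (hL x hx) h0) h3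
      simp only [smul_eq_mul, mul_one]
      rw [abs_of_pos this]
    rw [this, ← hcv]
    simp [B]
  have hzero : ∀ x, (ContinuousLinearMap.id ℝ E + fderiv ℝ g x).det = 0 := by
    intro x
    have hrd : HasFDerivAt r (ContinuousLinearMap.id ℝ E + fderiv ℝ g x) x := by
      have := (hasFDerivAt_id x).add (hgd x).hasFDerivAt
      refine this.congr_of_eventuallyEq (Eventually.of_forall fun y => ?_)
      simp [g]
    set D := ContinuousLinearMap.id ℝ E + fderiv ℝ g x with hD
    by_contra hne
    have hsurj : Function.Surjective D := by
      have hu : IsUnit (LinearMap.det (D : E →ₗ[ℝ] E)) := isUnit_iff_ne_zero.2 hne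
      have h := (LinearMap.isUnit_iff_isUnit_det _).2 hu
      exact ((Module.End.isUnit_iff _).1 h).2
    obtain ⟨v, hv⟩ := hsurj (r x)
    have h1 := hrd.norm_sq
    have h2 : HasFDerivAt (fun y => ‖r y‖ ^ 2) (0 : E →L[ℝ] ℝ) x := by
      simp only [hn]; exact hasFDerivAt_const _ _
    have h3 := congrArg (fun f : E →L[ℝ] ℝ => f v) (h1.unique h2)
    simp [hv, hn] at h3
    exact hK.ne' h3
  have hfin : ∫ x in B, (ContinuousLinearMap.id ℝ E + fderiv ℝ g x).det ∂μ = μ.real B := by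
    have hfun : (fun x => (ContinuousLinearMap.id ℝ E + fderiv ℝ g x).det) = fun x =>
        ∑ i ∈ s, c i * (ContinuousLinearMap.id ℝ E + t i • fderiv ℝ g x).det :=
      funext fun x => hc _
    rw [hfun]
    rw [MeasureTheory.integral_finsetSum]
    · simp_rw [MeasureTheory.integral_const_mul, hvol, ← Finset.sum_mul, hc1, one_mul]
    · intro i _
      exact ((hcont (t i)).continuousOn.integrableOn_compact hB).const_mul _
  simp only [hzero, MeasureTheory.integral_zero] at hfin
  have : 0 < μ.real B := by
    apply ENNReal.toReal_pos
    · exact (Metric.measure_closedBall_pos μ 0 hK).ne'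
    · exact hB.measure_lt_top.ne
  linarith

theorem aux_zero {E : Type*} [NormedAddCommGroup E] [InnerProductSpace ℝ E]
    [FiniteDimensional ℝ E] (F : E → E) (hF : Continuous F) (K : ℝ) (hK : 0 < K)
    (hid : ∀ x, K ≤ ‖x‖ → F x = x) : ∃ x, F x = 0 := by
  by_contra! hne
  have hB : IsCompact (Metric.closedBall (0 : E) K) := isCompact_closedBall 0 K
  obtain ⟨h, hh, happ, hsupp⟩ := Continuous.exists_contDiff_approx (f := fun x => F x - x)
    (ε := fun x => ‖F x‖) 1 (hF.sub continuous_id) hF.norm (fun x => norm_pos_iff.2 (hne x))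
  let G : E → E := fun x => x + h x
  have hGne : ∀ x, G x ≠ 0 := by
    intro x hx
    have h1 := happ x
    have h2 : h x = -x := by rw [eq_neg_iff_add_eq_zero, add_comm]; exact hx
    rw [h2, dist_eq_norm] at h1
    have : -x - (F x - x) = - F x := by abel
    rw [this, norm_neg] at h1
    exact lt_irrefl _ h1
  have hGid : ∀ x, K ≤ ‖x‖ → G x = x := by
    intro x hx
    have : h x = 0 := by
      by_contra h0
      exact hsupp h0 (by simp [hid x hx])
    simp [G, this]
  have hG : ContDiff ℝ 1 G := contDiff_id.add (by exact_mod_cast hh)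
  refine aux_noretract (fun x => (K / ‖G x‖) • G x) ?_ K hK ?_ ?_
  · exact (contDiff_const.div (hG.norm ℝ hGne) (fun x => norm_ne_zero_iff.2 (hGne x))).smul hG
  · intro x
    have := norm_pos_iff.2 (hGne x)
    rw [norm_smul, Real.norm_of_nonneg (by positivity)]
    field_simp
  · intro x hx
    simp only [hGid x hx.ge, hx, div_self hK.ne', one_smul]

theorem aux_zero_ball {E : Type*} [NormedAddCommGroup E] [NormedSpace ℝ E]
    [FiniteDimensional ℝ E] (f : E → E) (hf : Continuous f) (R : ℝ) (hR : 0 < R)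
    (hid : ∀ x, ‖x‖ = R → f x = x) : ∃ x, ‖x‖ ≤ R ∧ f x = 0 := by
  classical
  let F : E → E := fun x => if ‖x‖ ≤ R then f x else x
  have hF : Continuous F :=
    Continuous.if_le hf continuous_id continuous_norm continuous_const hid
  let e := toEuclidean (E := E)
  let e' : E →L[ℝ] EuclideanSpace ℝ (Fin (Module.finrank ℝ E)) := e
  have he : ∀ x, e' x = e x := fun _ => rfl
  obtain ⟨y, hy⟩ := aux_zero (fun y => e (F (e.symm y)))
    (e.continuous.comp (hF.comp e.symm.continuous))
    (‖e'‖ * R + 1) (by positivity) (by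
      intro y hy
      have h1 : ‖y‖ ≤ ‖e'‖ * ‖e.symm y‖ := by
        have := e'.le_opNorm (e.symm y)
        rw [he, e.apply_symm_apply] at this
        exact this
      have h2 : ¬ ‖e.symm y‖ ≤ R := by
        intro h
        have := mul_le_mul_of_nonneg_left h (norm_nonneg e')
        linarith
      simp [F, h2])
  have h0 : F (e.symm y) = 0 := by simpa using hy
  by_cases h : ‖e.symm y‖ ≤ R
  · exact ⟨_, h, by simpa [F, h] using h0⟩
  · have : e.symm y = 0 := by simpa only [F, h, if_false] using h0
    rw [this, norm_zero] at h
    exact absurd hR.le h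

/-- **Example 1: the saddle point geometry links.**
Let `V = V₁ ⊕ V₂` be a real Banach space, a topological direct sum of two
closed subspaces with `dim V₂ < ∞`, and `R > 0`. With `S = V₁`,
`Q = {u ∈ V₂ : ‖u‖ ≤ R}` and `bQ = {u ∈ V₂ : ‖u‖ = R}`, the sets `S` and `bQ`
link: `S ∩ bQ = ∅` and every continuous `γ : V → V` fixing `bQ` satisfies
`γ(Q) ∩ S ≠ ∅`. -/
theorem saddle_point_geometry_links
    {V : Type*} [NormedAddCommGroup V] [NormedSpace ℝ V] [CompleteSpace V]
    (V₁ V₂ : Submodule ℝ V)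
    (hV₁closed : IsClosed (V₁ : Set V)) (hV₂closed : IsClosed (V₂ : Set V))
    (hcompl : IsCompl V₁ V₂) (hfin : FiniteDimensional ℝ V₂)
    (R : ℝ) (hR : 0 < R) :
    ((V₁ : Set V) ∩ { u : V | u ∈ V₂ ∧ ‖u‖ = R } = ∅) ∧
    ∀ γ : V → V, Continuous γ →
      (∀ x ∈ { u : V | u ∈ V₂ ∧ ‖u‖ = R }, γ x = x) →
      (γ '' { u : V | u ∈ V₂ ∧ ‖u‖ ≤ R } ∩ (V₁ : Set V)).Nonempty := by
  constructor
  · ext u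
    simp only [mem_inter_iff, SetLike.mem_coe, mem_setOf_eq, mem_empty_iff_false, iff_false]
    rintro ⟨h1, h2, h3⟩
    have : u = 0 := Submodule.disjoint_def.1 hcompl.disjoint u h1 h2
    rw [this, norm_zero] at h3
    exact hR.ne h3
  · intro γ hγ hfix
    have hT : Submodule.IsTopCompl V₂ V₁ :=
      Submodule.IsCompl.isTopCompl_of_isClosed hcompl.symm hV₂closed hV₁closed
    let P := V₂.projectionOntoL V₁ hT
    obtain ⟨x, hx, h0⟩ := aux_zero_ball (fun x : V₂ => P (γ x))
      (P.continuous.comp (hγ.comp continuous_subtype_val)) R hR (by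
        intro x hx
        have : γ (x : V) = x := hfix x ⟨x.2, hx⟩
        simp only [this]
        exact Submodule.projectionOntoL_apply_left hT x)
    exact ⟨γ x, ⟨x, ⟨x.2, hx⟩, rfl⟩, (Submodule.projectionOntoL_apply_eq_zero_iff hT).1 h0⟩
end
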